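/- arXiv:2103.07650 — 2 statements merged into one kernel-verified Lean document; each statement's English description precedes it below -/
import Mathlib

section
/- Let n ≥ 2 and let σ satisfy 1/2 < 1 − σ < n/2. Define p₁ and p₂ by 1/p₁ = 1/2 + (1−σ)/n and 1/p₂ = 1/2 + (1/2−σ)/(n−1). Then there exists a constant C > 0 such that for all f, g ∈ 𝒮(ℝⁿ), every C^∞ function F on [0,∞) × ℝⁿ Schwartz in x, and every C^∞ function u on [0,∞) × ℝⁿ Schwartz in x solving ∂_t²u − Δu = F with u(0,·) = f and ∂_t u(0,·) = g, one has for all t ≥ 0: ‖|D|^σ u(t,·)‖_{L²} ≤ ‖|D|^σ f‖_{L²} + ‖|D|^{σ−1} g‖_{L²} + C ∫_0^t ‖χ_{1,τ} F(τ,·)‖_{L^{p₁}} dτ + C ∫_0^t ⟨τ⟩^{−n/2+1−σ} ‖χ_{2,τ} F(τ,·)‖_{1,p₂} dτ. -/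
open MeasureTheory Real ENNReal FourierTransform
open scoped ContDiff

noncomputable section

/-- Euclidean space ℝⁿ. -/
abbrev Spc (n : ℕ) := EuclideanSpace ℝ (Fin n)

/-- Space-time ℝ × ℝⁿ. -/
abbrev STn (n : ℕ) := ℝ × Spc n

variable {n : ℕ}

/-- Directional derivative in the space-time direction `v`. -/
def dirD (v : STn n) (f : STn n → ℝ) : STn n → ℝ := fun p => fderiv ℝ f p v

/-- Time derivative ∂_t. -/
def dtD : (STn n → ℝ) → STn n → ℝ := dirD (1, 0)

/-- Spatial derivative ∂_j. -/
def dxD (j : Fin n) : (STn n → ℝ) → STn n → ℝ := dirD (0, EuclideanSpace.single j 1)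

/-- Spatial Laplacian. -/
def lapD (f : STn n → ℝ) : STn n → ℝ := fun p => ∑ j, dxD j (dxD j f) p

/-- d'Alembertian □ = ∂_t² − Δ. -/
def boxD (f : STn n → ℝ) : STn n → ℝ := fun p => dtD (dtD f) p - lapD f p

/-- Lorentz boost L_j = t ∂_j + x_j ∂_t. -/
def LD (j : Fin n) (f : STn n → ℝ) : STn n → ℝ := fun p => p.1 * dxD j f p + p.2 j * dtD f p

/-- Rotation Ω_{jk} = x_j ∂_k − x_k ∂_j. -/
def RotD (j k : Fin n) (f : STn n → ℝ) : STn n → ℝ := fun p => p.2 j * dxD k f p - p.2 k * dxD j f p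

/-- Scaling S = t ∂_t + x·∇. -/
def SD (f : STn n → ℝ) : STn n → ℝ := fun p => p.1 * dtD f p + ∑ j, p.2 j * dxD j f p

/-- Index type for the Klainerman vector fields. -/
def GIdx (n : ℕ) := Option (Fin n) ⊕ Fin n ⊕ (Fin n × Fin n) ⊕ Unit

instance : Fintype (GIdx n) := by unfold GIdx; infer_instance
instance : DecidableEq (GIdx n) := by unfold GIdx; infer_instance

/-- The Klainerman vector field with index `i`. -/
def Gop : GIdx n → (STn n → ℝ) → STn n → ℝ
  | Sum.inl none => dtD
  | Sum.inl (some j) => dxD j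
  | Sum.inr (Sum.inl j) => LD j
  | Sum.inr (Sum.inr (Sum.inl jk)) => RotD jk.1 jk.2
  | Sum.inr (Sum.inr (Sum.inr _)) => SD

/-- Iterated composition Γ^α along a word of indices. -/
def GwL : List (GIdx n) → (STn n → ℝ) → STn n → ℝ
  | [], f => f
  | a :: l, f => Gop a (GwL l f)

/-- Sum of a quantity over all products of at most `N` Klainerman vector fields. -/
def SumW (N : ℕ) (Φ : (STn n → ℝ) → ℝ≥0∞) (f : STn n → ℝ) : ℝ≥0∞ :=
  ∑ m ∈ Finset.range (N + 1), ∑ w : Fin m → GIdx n, Φ (GwL (List.ofFn w) f)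

/-- Pointwise norm of the full space-time gradient ∂u = (∂_t u, ∇_x u). -/
def gradN (f : STn n → ℝ) (p : STn n) : ℝ := Real.sqrt ((dtD f p) ^ 2 + ∑ j, (dxD j f p) ^ 2)

/-- Fourier transform (in space) of a real valued function. -/
def fourierS (g : Spc n → ℝ) : Spc n → ℂ := 𝓕 (fun x => (g x : ℂ))

/-- ‖ |D|^s g ‖_{L²}, i.e. the L² norm of ξ ↦ |ξ|^s (ℱ g)(ξ). -/
def DsN (s : ℝ) (g : Spc n → ℝ) : ℝ≥0∞ :=
  eLpNorm (fun ξ : Spc n => ‖ξ‖ ^ s * ‖fourierS g ξ‖) 2 volume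

/-- The surface measure on the unit sphere of ℝⁿ. -/
def sphM (n : ℕ) : Measure (Metric.sphere (0 : Spc n) 1) := (volume : Measure (Spc n)).toSphere

/-- The L^q norm of g(r ω) over the unit sphere. -/
def sphN (n : ℕ) (q : ℝ) (g : Spc n → ℝ) (r : ℝ) : ℝ≥0∞ :=
  (∫⁻ o, (‖g (r • (o : Spc n))‖₊ : ℝ≥0∞) ^ q ∂(sphM n)) ^ (1 / q)

/-- The mixed norm ‖g‖_{p,q} = (∫_0^∞ ‖g(r·)‖_{L^q(S^{n-1})}^p r^{n-1} dr)^{1/p}. -/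
def mixN (n : ℕ) (p q : ℝ) (g : Spc n → ℝ) : ℝ≥0∞ :=
  (∫⁻ r in Set.Ioi (0 : ℝ), (sphN n q g r) ^ p * ENNReal.ofReal (r ^ (n - 1))) ^ (1 / p)

/-- A space-time function which is Schwartz in the space variable for each fixed time. -/
def SchwartzInX (v : STn n → ℝ) : Prop :=
  ∀ t : ℝ, ∃ φ : SchwartzMap (Spc n) ℝ, ∀ x, v (t, x) = φ x

/-- The space-time partial derivatives ∂_0 = ∂_t, ∂_j (j = 1,2,3) on ℝ × ℝ³. -/
def pd4 (α : Fin 4) : (STn 3 → ℝ) → STn 3 → ℝ := Fin.cases dtD (fun j => dxD j) α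

/-- The null condition for a set of coefficients {A^{αβ}}. -/
def NullCond (A : Fin 4 → Fin 4 → ℝ) : Prop :=
  ∀ X : Fin 4 → ℝ, (X 0) ^ 2 = (X 1) ^ 2 + (X 2) ^ 2 + (X 3) ^ 2 →
    ∑ α, ∑ β, A α β * X α * X β = 0

/-- The null form A^{αβ} (∂_α v)(∂_β w). -/
def QF (A : Fin 4 → Fin 4 → ℝ) (v w : STn 3 → ℝ) (p : STn 3) : ℝ :=
  ∑ α, ∑ β, A α β * pd4 α v p * pd4 β w p

/-- The good derivative T_j = ∂_j + (x_j/|x|) ∂_t. -/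
def TD (j : Fin 3) (f : STn 3 → ℝ) (p : STn 3) : ℝ := dxD j f p + (p.2 j / ‖p.2‖) * dtD f p

end

/-!
The proof is by duality. Let `ψ` be a compactly supported smooth function and let `W` be the free
wave with `W = 0`, `∂_t W = ψ` at time `t`, evolved backwards. By finite speed of propagation, which
follows from an energy estimate on cones, `W(τ)` has compact support, so Green's identity may be
integrated over `[0, t] × ℝⁿ` without any decay of `u` that is uniform in time:

  `⟨u(t), ψ⟩ = ⟨f, ∂_t W(0)⟩ - ⟨g, W(0)⟩ - ∫_0^t ⟨F(τ), W(τ)⟩ dτ`.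

On the Fourier side `∂_t W` and `W` are `ψ̂` times a cosine and `sin / (2 π |ξ|)`, so `∂_t W` is
bounded in `Ḣ^(-σ)` and `W` in `Ḣ^(1-σ)` by `‖ψ‖_{Ḣ^(-σ)}`. The terms with `f` and `g` are then
bounded by Cauchy–Schwarz with constant one. The forcing term is split at `|x| = (1 + τ) / 2`:
inside, the Sobolev embedding `Ḣ^(1-σ) ⊂ L^{p₁'}` is used, outside, the trace embedding of
`Ḣ^(1-σ)` into `L^{p₂'}` of each sphere, whose scaling gives the weight in `τ`.

Both embeddings are instances of one inequality for measures `μ` of codimension `κ`, in the sense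
that Gaussians of width `1 / R` have `μ`-mass `O(R^(κ - n))`; Lebesgue measure has `κ = 0` and the
surface measure of any sphere has `κ = 1`, uniformly in the radius. It is proved by layer-cake
integration: at each height the low frequencies are bounded pointwise, and the high ones by an `L²`
estimate for the Fourier extension operator of `μ`.

Finally the functions `|ξ|^(-σ) ψ̂` are dense in `L²`, so testing against all `ψ` recovers
`‖|D|^σ u(t)‖`.
-/

open Set Metric Module

/-! ### Gaussian Frostman measures -/

section PolarCoordinates

variable {E : Type*} [NormedAddCommGroup E] [NormedSpace ℝ E] [FiniteDimensional ℝ E]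
  [Nontrivial E] [MeasurableSpace E] [BorelSpace E]

theorem lintegral_eq_lintegral_toSphere (μ : Measure E) [μ.IsAddHaarMeasure] {f : E → ℝ≥0∞}
    (hf : Measurable f) :
    ∫⁻ x, f x ∂μ = ∫⁻ r in Ioi (0 : ℝ),
      (∫⁻ o, f (r • (o : E)) ∂μ.toSphere) * ENNReal.ofReal (r ^ (finrank ℝ E - 1)) := by
  have hg : Measurable fun z : sphere (0 : E) 1 × Ioi (0 : ℝ) => f ((z.2 : ℝ) • (z.1 : E)) := by
    fun_prop
  calc ∫⁻ x, f x ∂μ = ∫⁻ x : ({(0 : E)}ᶜ : Set E), f x ∂(μ.comap Subtype.val) := by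
        rw [lintegral_subtype_comap (measurableSet_singleton _).compl, restrict_compl_singleton]
    _ = ∫⁻ z, f ((z.2 : ℝ) • (z.1 : E))
          ∂(μ.toSphere.prod (Measure.volumeIoiPow (finrank ℝ E - 1))) := by
        rw [← μ.measurePreserving_homeomorphUnitSphereProd.lintegral_comp hg]
        refine lintegral_congr fun x => ?_
        have hx : ‖(x : E)‖ ≠ 0 := norm_ne_zero_iff.2 x.2
        congr 1
        simp [smul_smul, hx]
    _ = ∫⁻ r : Ioi (0 : ℝ), (∫⁻ o, f ((r : ℝ) • (o : E)) ∂μ.toSphere)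
          ∂(Measure.volumeIoiPow (finrank ℝ E - 1)) := lintegral_prod_symm' _ hg
    _ = _ := by
        rw [Measure.volumeIoiPow,
          lintegral_withDensity_eq_lintegral_mul _ (by fun_prop) hg.lintegral_prod_left',
          ← lintegral_subtype_comap measurableSet_Ioi]
        refine lintegral_congr fun r => ?_
        simp [mul_comm]

end PolarCoordinates

section GaussianFrostman

variable {E : Type*} [NormedAddCommGroup E] [InnerProductSpace ℝ E] [MeasurableSpace E]

/-- The Gaussian form of the Frostman condition of codimension `κ`: every Gaussian of width `1 / R`
has `μ`-mass at most `B * R ^ (κ - finrank ℝ E)`. It holds for Lebesgue measure with `κ = 0` and for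
spheres with `κ = 1`, which lets both be treated at once. -/
def GaussianFrostman (μ : Measure E) (κ B : ℝ) : Prop :=
  ∀ R : ℝ, 0 < R → ∀ x : E, ∫⁻ y, ENNReal.ofReal (rexp (-(π * R ^ 2) * ‖x - y‖ ^ 2)) ∂μ ≤
    ENNReal.ofReal (B * R ^ (κ - finrank ℝ E))

theorem GaussianFrostman.mono {μ ν : Measure E} {κ B : ℝ} (hν : GaussianFrostman ν κ B)
    (hμν : μ ≤ ν) : GaussianFrostman μ κ B :=
  fun R hR x => (lintegral_mono' hμν le_rfl).trans (hν R hR x)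

variable [FiniteDimensional ℝ E] [BorelSpace E]

theorem integrable_exp_neg_mul_sq_norm {b : ℝ} (hb : 0 < b) :
    Integrable fun v : E => rexp (-b * ‖v‖ ^ 2) := by
  have h := (GaussianFourier.integrable_cexp_neg_mul_sq_norm_add (V := E) (b := (b : ℂ))
    (by simpa using hb) 0 0).re
  refine h.congr (.of_forall fun v => ?_)
  simp [← Complex.ofReal_pow, ← Complex.ofReal_mul, ← Complex.ofReal_neg, Complex.exp_ofReal_re]

theorem lintegral_exp_neg_mul_sq_norm_sub {b : ℝ} (hb : 0 < b) (x : E) :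
    ∫⁻ y : E, ENNReal.ofReal (rexp (-b * ‖x - y‖ ^ 2)) =
      ENNReal.ofReal ((π / b) ^ ((finrank ℝ E : ℝ) / 2)) := by
  rw [lintegral_sub_left_eq_self (fun v : E => ENNReal.ofReal (rexp (-b * ‖v‖ ^ 2))) x,
    ← ofReal_integral_eq_lintegral_ofReal (integrable_exp_neg_mul_sq_norm hb)
      (.of_forall fun v => (exp_pos _).le),
    GaussianFourier.integral_rexp_neg_mul_sq_norm hb]

theorem pi_div_pi_mul_sq_rpow {R c : ℝ} (hR : 0 < R) (hc : 0 < c) (s : ℝ) :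
    (π / (π * R ^ 2 / c)) ^ (s / 2) = c ^ (s / 2) * R ^ (-s) := by
  have h : π / (π * R ^ 2 / c) = c * R ^ (-2 : ℝ) := by
    rw [rpow_neg hR.le, Real.rpow_two]; field_simp
  rw [h, mul_rpow hc.le (by positivity), ← rpow_mul hR.le]
  ring_nf

theorem gaussianFrostman_volume : GaussianFrostman (volume : Measure E) 0 1 := by
  intro R hR x
  have hpow := pi_div_pi_mul_sq_rpow hR one_pos (finrank ℝ E)
  rw [div_one, Real.one_rpow] at hpow
  rw [lintegral_exp_neg_mul_sq_norm_sub (by positivity), hpow, zero_sub]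

/-- The surface measure of the sphere of radius `ρ` centred at the origin, as a measure on `E`. -/
noncomputable def sphereMeasure (E : Type*) [NormedAddCommGroup E] [InnerProductSpace ℝ E]
    [FiniteDimensional ℝ E] [MeasurableSpace E] [BorelSpace E] (ρ : ℝ) : Measure E :=
  ENNReal.ofReal (ρ ^ (finrank ℝ E - 1)) •
    (volume : Measure E).toSphere.map fun o : sphere (0 : E) 1 => ρ • (o : E)

theorem lintegral_sphereMeasure (ρ : ℝ) {f : E → ℝ≥0∞} (hf : Measurable f) :
    ∫⁻ x, f x ∂(sphereMeasure E ρ) = ENNReal.ofReal (ρ ^ (finrank ℝ E - 1)) *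
      ∫⁻ o, f (ρ • (o : E)) ∂(volume : Measure E).toSphere := by
  rw [sphereMeasure, lintegral_smul_measure, lintegral_map hf (by fun_prop), smul_eq_mul]

instance isFiniteMeasure_sphereMeasure (ρ : ℝ) : IsFiniteMeasure (sphereMeasure E ρ) := by
  refine ⟨?_⟩
  rw [← lintegral_one, lintegral_sphereMeasure ρ measurable_const, lintegral_one]
  exact ENNReal.mul_lt_top ofReal_lt_top (measure_lt_top _ _)

end GaussianFrostman

theorem exp_neg_sq_norm_le_of_norm_sub_le {E : Type*} [NormedAddCommGroup E] {R : ℝ} (hR : 0 < R)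
    {x y z : E} (hyz : ‖y - z‖ ≤ 1 / R) :
    rexp (-(π * R ^ 2) * ‖x - y‖ ^ 2) ≤ rexp π * rexp (-(π * R ^ 2 / 2) * ‖x - z‖ ^ 2) := by
  rw [← Real.exp_add]
  refine Real.exp_le_exp.2 ?_
  have htri : ‖x - z‖ ≤ ‖x - y‖ + 1 / R :=
    (norm_sub_le_norm_sub_add_norm_sub x y z).trans (by gcongr)
  have hsq : ‖x - z‖ ^ 2 ≤ 2 * ‖x - y‖ ^ 2 + 2 * (1 / R) ^ 2 := by
    nlinarith [sq_nonneg (‖x - y‖ - 1 / R), norm_nonneg (x - z)]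
  have hmul : π * R ^ 2 / 2 * ‖x - z‖ ^ 2 ≤
      π * R ^ 2 / 2 * (2 * ‖x - y‖ ^ 2 + 2 * (1 / R) ^ 2) := by gcongr
  have hR : π * R ^ 2 / 2 * (2 * (1 / R) ^ 2) = π := by field_simp
  linarith

section Sphere

variable {E : Type*} [NormedAddCommGroup E] [InnerProductSpace ℝ E] [FiniteDimensional ℝ E]
  [Nontrivial E] [MeasurableSpace E] [BorelSpace E]

/- Thickening the unit sphere to the shell `1 ≤ r ≤ 1 + 1 / R` compares the Gaussian mass of the
surface measure with a Gaussian integral over the whole space. -/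
theorem ofReal_inv_mul_lintegral_toSphere_gaussian_le {R : ℝ} (hR : 0 < R) (x : E) :
    ENNReal.ofReal (1 / R) *
        ∫⁻ o, ENNReal.ofReal (rexp (-(π * R ^ 2) * ‖x - (o : E)‖ ^ 2))
          ∂(volume : Measure E).toSphere ≤
      ∫⁻ y : E, ENNReal.ofReal (rexp π * rexp (-(π * R ^ 2 / 2) * ‖x - y‖ ^ 2)) := by
  have hshell : ∀ r ∈ Ioc (1 : ℝ) (1 + 1 / R), ∀ o : sphere (0 : E) 1,
      ‖(o : E) - r • (o : E)‖ ≤ 1 / R := fun r hr o => by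
    rw [show (o : E) - r • (o : E) = (1 - r) • (o : E) by module, norm_smul, norm_eq_of_mem_sphere,
      mul_one, Real.norm_eq_abs, abs_sub_comm, abs_of_pos (by linarith [hr.1])]
    linarith [hr.2]
  set I := ∫⁻ o, ENNReal.ofReal (rexp (-(π * R ^ 2) * ‖x - (o : E)‖ ^ 2))
    ∂(volume : Measure E).toSphere
  calc ENNReal.ofReal (1 / R) * I = ∫⁻ _ in Ioc (1 : ℝ) (1 + 1 / R), I := by
        rw [setLIntegral_const, Real.volume_Ioc, mul_comm, add_sub_cancel_left]
    _ ≤ ∫⁻ r in Ioc (1 : ℝ) (1 + 1 / R), (∫⁻ o, ENNReal.ofReal (rexp π *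
          rexp (-(π * R ^ 2 / 2) * ‖x - r • (o : E)‖ ^ 2)) ∂(volume : Measure E).toSphere) *
          ENNReal.ofReal (r ^ (finrank ℝ E - 1)) := by
        refine setLIntegral_mono' measurableSet_Ioc fun r hr => ?_
        rw [← mul_one I]
        exact mul_le_mul' (lintegral_mono fun o => ENNReal.ofReal_le_ofReal
          (exp_neg_sq_norm_le_of_norm_sub_le hR (hshell r hr o)))
          (ENNReal.one_le_ofReal.2 (one_le_pow₀ hr.1.le))
    _ ≤ ∫⁻ r in Ioi (0 : ℝ), (∫⁻ o, ENNReal.ofReal (rexp π *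
          rexp (-(π * R ^ 2 / 2) * ‖x - r • (o : E)‖ ^ 2)) ∂(volume : Measure E).toSphere) *
          ENNReal.ofReal (r ^ (finrank ℝ E - 1)) :=
        lintegral_mono_set fun r hr => zero_lt_one.trans hr.1
    _ = _ := (lintegral_eq_lintegral_toSphere volume (f := fun y : E => ENNReal.ofReal
        (rexp π * rexp (-(π * R ^ 2 / 2) * ‖x - y‖ ^ 2))) (by fun_prop)).symm

theorem lintegral_toSphere_gaussian_le {R : ℝ} (hR : 0 < R) (x : E) :
    ∫⁻ o, ENNReal.ofReal (rexp (-(π * R ^ 2) * ‖x - (o : E)‖ ^ 2))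
        ∂(volume : Measure E).toSphere ≤
      ENNReal.ofReal (rexp π * 2 ^ ((finrank ℝ E : ℝ) / 2) * R ^ (1 - finrank ℝ E : ℝ)) := by
  have h := ofReal_inv_mul_lintegral_toSphere_gaussian_le hR x
  set I := ∫⁻ o, ENNReal.ofReal (rexp (-(π * R ^ 2) * ‖x - (o : E)‖ ^ 2))
    ∂(volume : Measure E).toSphere
  have hgauss : ∫⁻ y : E, ENNReal.ofReal (rexp π * rexp (-(π * R ^ 2 / 2) * ‖x - y‖ ^ 2)) =
      ENNReal.ofReal (rexp π * (2 ^ ((finrank ℝ E : ℝ) / 2) * R ^ (-(finrank ℝ E : ℝ)))) := by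
    simp_rw [ENNReal.ofReal_mul (exp_pos π).le]
    rw [lintegral_const_mul _ (by fun_prop), lintegral_exp_neg_mul_sq_norm_sub (by positivity),
      pi_div_pi_mul_sq_rpow hR two_pos]
  rw [hgauss] at h
  calc I = ENNReal.ofReal R * (ENNReal.ofReal (1 / R) * I) := by
        rw [← mul_assoc, ← ENNReal.ofReal_mul hR.le, mul_one_div_cancel hR.ne', ofReal_one, one_mul]
    _ ≤ ENNReal.ofReal R * ENNReal.ofReal
          (rexp π * (2 ^ ((finrank ℝ E : ℝ) / 2) * R ^ (-(finrank ℝ E : ℝ)))) := by gcongr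
    _ = _ := by
        rw [← ENNReal.ofReal_mul hR.le, sub_eq_add_neg, rpow_add hR, Real.rpow_one]
        congr 1
        ring

theorem gaussianFrostman_sphereMeasure {ρ : ℝ} (hρ : 0 < ρ) :
    GaussianFrostman (sphereMeasure E ρ) 1
      (rexp π * 2 ^ ((finrank ℝ E : ℝ) / 2)) := by
  intro R hR x
  have hscale : ∀ o : sphere (0 : E) 1, -(π * R ^ 2) * ‖x - ρ • (o : E)‖ ^ 2 =
      -(π * (R * ρ) ^ 2) * ‖ρ⁻¹ • x - (o : E)‖ ^ 2 := fun o => by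
    have : x - ρ • (o : E) = ρ • (ρ⁻¹ • x - (o : E)) := by
      rw [smul_sub, smul_inv_smul₀ hρ.ne']
    rw [this, norm_smul, Real.norm_of_nonneg hρ.le]; ring
  rw [lintegral_sphereMeasure _ (by fun_prop)]
  simp_rw [hscale]
  refine (mul_le_mul_right (lintegral_toSphere_gaussian_le (mul_pos hR hρ) (ρ⁻¹ • x)) _).trans_eq ?_
  have hdim : ρ ^ (finrank ℝ E - 1) = (ρ ^ (1 - finrank ℝ E : ℝ))⁻¹ := by
    rw [← rpow_neg hρ.le, neg_sub, ← Real.rpow_natCast, Nat.cast_sub finrank_pos, Nat.cast_one]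
  rw [← ENNReal.ofReal_mul (by positivity), hdim, mul_rpow hR.le hρ.le]
  congr 1
  field_simp

end Sphere

/-! ### Fourier extension -/

section FourierExtension

variable {E : Type*} [NormedAddCommGroup E] [InnerProductSpace ℝ E]

theorem continuous_neg_innerₗ : Continuous fun p : E × E => (-innerₗ E) p.1 p.2 :=
  continuous_inner.neg

variable [MeasurableSpace E]

/-- The Fourier extension `ξ ↦ ∫ h(x) exp (2 π i ⟨x, ξ⟩) dμ(x)` of a density `h` on the measure `μ`.
For Lebesgue measure it is the inverse Fourier transform of `h`, by `rfl`. -/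
noncomputable def fourierExtension (μ : Measure E) (h : E → ℂ) : E → ℂ :=
  VectorFourier.fourierIntegral 𝐞 μ (-innerₗ E) h

theorem norm_fourierExtension_le (μ : Measure E) (h : E → ℂ) (ξ : E) :
    ‖fourierExtension μ h ξ‖ ≤ ∫ x, ‖h x‖ ∂μ :=
  VectorFourier.norm_fourierIntegral_le_integral_norm _ _ _ _ _

variable [BorelSpace E]

theorem continuous_fourierExtension {μ : Measure E} {h : E → ℂ} (hh : Integrable h μ) :
    Continuous (fourierExtension μ h) :=
  VectorFourier.fourierIntegral_continuous continuous_fourierChar continuous_neg_innerₗ hh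

variable [FiniteDimensional ℝ E]

theorem continuous_fourierInv {G : E → ℂ} (hG : Integrable G) : Continuous (𝓕⁻ G) :=
  continuous_fourierExtension hG

theorem integral_fourierExtension_mul {μ : Measure E} [SigmaFinite μ] {h G : E → ℂ}
    (hh : Integrable h μ) (hG : Integrable G) :
    ∫ ξ, fourierExtension μ h ξ * G ξ = ∫ x, h x * 𝓕⁻ G x ∂μ := by
  have h := VectorFourier.integral_fourierIntegral_smul_eq_flip continuous_fourierChar
    continuous_neg_innerₗ hh hG
  rwa [show (-innerₗ E).flip = -innerₗ E by ext; simp [real_inner_comm]] at h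

theorem conj_fourierInv (G : E → ℂ) (x : E) :
    (starRingEnd ℂ) (𝓕⁻ G x) = 𝓕 (fun ξ => (starRingEnd ℂ) (G ξ)) x := by
  rw [Real.fourierInv_eq, Real.fourier_eq, ← integral_conj]
  refine integral_congr_ae (.of_forall fun ξ => ?_)
  simp only [Circle.smul_def, smul_eq_mul, map_mul, ← Circle.coe_inv_eq_conj,
    AddChar.map_neg_eq_inv]

theorem integrable_gaussian_ofReal {R : ℝ} (hR : 0 < R) :
    Integrable fun ξ : E => (rexp (-(π / R ^ 2) * ‖ξ‖ ^ 2) : ℂ) :=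
  (integrable_exp_neg_mul_sq_norm (by positivity)).ofReal

theorem norm_fourierInv_modulated_gaussian {R : ℝ} (hR : 0 < R) (x y : E) :
    ‖𝓕⁻ (fun ξ : E => 𝐞 (-inner ℝ ξ x) • (rexp (-(π / R ^ 2) * ‖ξ‖ ^ 2) : ℂ)) y‖ =
      R ^ finrank ℝ E * rexp (-(π * R ^ 2) * ‖x - y‖ ^ 2) := by
  have hb : 0 < ((π / R ^ 2 : ℝ) : ℂ).re := by rw [Complex.ofReal_re]; positivity
  have hfun : (fun ξ : E => 𝐞 (-inner ℝ ξ x) • (rexp (-(π / R ^ 2) * ‖ξ‖ ^ 2) : ℂ)) =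
      fun ξ => Complex.exp (-((π / R ^ 2 : ℝ) : ℂ) * (‖ξ‖ : ℂ) ^ 2 +
        2 * π * Complex.I * (inner ℝ (-x) ξ : ℂ)) := by
    ext ξ
    rw [Circle.smul_def, Real.fourierChar_apply, smul_eq_mul, Complex.ofReal_exp, ← Complex.exp_add,
      inner_neg_left, real_inner_comm x]
    push_cast
    ring_nf
  have hbase : (π : ℂ) / ((π / R ^ 2 : ℝ) : ℂ) = ((R ^ 2 : ℝ) : ℂ) := by
    push_cast
    field_simp
  have hexp : -(π : ℂ) ^ 2 * (‖-x - -y‖ : ℂ) ^ 2 / ((π / R ^ 2 : ℝ) : ℂ) =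
      ((-(π * R ^ 2) * ‖x - y‖ ^ 2 : ℝ) : ℂ) := by
    rw [neg_sub_neg, norm_sub_rev]
    push_cast
    field_simp
  rw [hfun, Real.fourierInv_eq_fourier_neg, fourier_gaussian_innerProductSpace' hb, hbase, hexp,
    norm_mul, ← Complex.ofReal_exp, Complex.norm_real, Real.norm_of_nonneg (exp_pos _).le,
    Complex.norm_cpow_eq_rpow_re_of_pos (by positivity)]
  congr 1
  rw [← Real.rpow_two, ← Real.rpow_mul hR.le]
  simp [mul_div_cancel₀]

theorem norm_integral_mul_fourierInv_modulated_gaussian_le {μ : Measure E} {κ B R : ℝ} (hB : 0 ≤ B)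
    (hμ : GaussianFrostman μ κ B) (hR : 0 < R) {h : E → ℂ} (hh : ∀ x, ‖h x‖ ≤ 1) (x : E) :
    ‖∫ y, h y * 𝓕⁻ (fun ξ : E => 𝐞 (-inner ℝ ξ x) •
      (rexp (-(π / R ^ 2) * ‖ξ‖ ^ 2) : ℂ)) y ∂μ‖ ≤ B * R ^ κ := by
  rw [← ENNReal.ofReal_le_ofReal_iff (by positivity), ofReal_norm]
  calc _ ≤ ∫⁻ y, ENNReal.ofReal (R ^ finrank ℝ E) *
          ENNReal.ofReal (rexp (-(π * R ^ 2) * ‖x - y‖ ^ 2)) ∂μ := by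
        refine (enorm_integral_le_lintegral_enorm _).trans (lintegral_mono fun y => ?_)
        rw [← ENNReal.ofReal_mul (by positivity), ← norm_fourierInv_modulated_gaussian hR,
          ofReal_norm, enorm_mul]
        exact mul_le_of_le_one_left' (by simpa [← ofReal_norm] using hh y)
    _ ≤ ENNReal.ofReal (R ^ finrank ℝ E) * ENNReal.ofReal (B * R ^ (κ - finrank ℝ E)) := by
        rw [lintegral_const_mul _ (by fun_prop)]
        gcongr
        exact hμ R hR x
    _ = _ := by
        rw [← ENNReal.ofReal_mul (by positivity), rpow_sub hR, Real.rpow_natCast]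
        congr 1
        field_simp

theorem norm_fourierInv_conj_fourierExtension_mul_gaussian_le {μ : Measure E} [SigmaFinite μ]
    {κ B R : ℝ} (hB : 0 ≤ B) (hμ : GaussianFrostman μ κ B) (hR : 0 < R) {h : E → ℂ}
    (hhi : Integrable h μ) (hh : ∀ x, ‖h x‖ ≤ 1) (x : E) :
    ‖𝓕⁻ (fun ξ => (starRingEnd ℂ) (fourierExtension μ h ξ) *
      (rexp (-(π / R ^ 2) * ‖ξ‖ ^ 2) : ℂ)) x‖ ≤ B * R ^ κ := by
  rw [← RCLike.norm_conj, conj_fourierInv, Real.fourier_eq]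
  refine le_of_eq_of_le (congrArg norm ?_)
    (norm_integral_mul_fourierInv_modulated_gaussian_le hB hμ hR hh x)
  have hmod : Integrable fun ξ : E => 𝐞 (-inner ℝ ξ x) • (rexp (-(π / R ^ 2) * ‖ξ‖ ^ 2) : ℂ) :=
    (Real.fourierIntegral_convergent_iff x).2 (integrable_gaussian_ofReal hR)
  rw [← integral_fourierExtension_mul hhi hmod]
  refine integral_congr_ae (.of_forall fun ξ => ?_)
  simp only [map_mul, Complex.conj_conj, Complex.conj_ofReal, mul_smul_comm]

/- Expanding the square by Fubini turns the frequency Gaussian into a spatial one, to which the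
Frostman condition applies. -/
theorem lintegral_sq_enorm_fourierExtension_mul_gaussian_le {μ : Measure E} [IsFiniteMeasure μ]
    {κ B R : ℝ} (hB : 0 ≤ B) (hμ : GaussianFrostman μ κ B) (hR : 0 < R) {h : E → ℂ}
    (hhi : Integrable h μ) (hh : ∀ x, ‖h x‖ ≤ 1) :
    ∫⁻ ξ, ‖fourierExtension μ h ξ‖ₑ ^ 2 * ENNReal.ofReal (rexp (-(π / R ^ 2) * ‖ξ‖ ^ 2)) ≤
      ENNReal.ofReal (B * R ^ κ) * μ univ := by
  set g : E → ℝ := fun ξ => rexp (-(π / R ^ 2) * ‖ξ‖ ^ 2)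
  set K : E → ℂ := fun ξ => (starRingEnd ℂ) (fourierExtension μ h ξ) * (g ξ : ℂ) with hK
  have hEc := continuous_fourierExtension hhi
  have hKi : Integrable K := (integrable_gaussian_ofReal hR).bdd_mul (c := ∫ x, ‖h x‖ ∂μ)
    (Complex.continuous_conj.comp hEc).aestronglyMeasurable
    (.of_forall fun ξ => by simpa using norm_fourierExtension_le μ h ξ)
  have hEK : ∀ ξ, fourierExtension μ h ξ * K ξ = ((‖fourierExtension μ h ξ‖ ^ 2 * g ξ : ℝ) : ℂ) :=
    fun ξ => by
      rw [hK, ← mul_assoc, Complex.mul_conj, Complex.normSq_eq_norm_sq, ← Complex.ofReal_mul]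
  have hnonneg : ∀ ξ, 0 ≤ ‖fourierExtension μ h ξ‖ ^ 2 * g ξ := fun ξ => by positivity
  have hEKi : Integrable fun ξ => ‖fourierExtension μ h ξ‖ ^ 2 * g ξ := by
    refine (hKi.bdd_mul (c := ∫ x, ‖h x‖ ∂μ) hEc.aestronglyMeasurable
      (.of_forall fun ξ => norm_fourierExtension_le μ h ξ)).re.congr (.of_forall fun ξ => ?_)
    simp only [hEK, RCLike.re_to_complex, Complex.ofReal_re]
  calc _ = ∫⁻ ξ, ENNReal.ofReal (‖fourierExtension μ h ξ‖ ^ 2 * g ξ) := by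
        refine lintegral_congr fun ξ => ?_
        rw [ENNReal.ofReal_mul (sq_nonneg _), ENNReal.ofReal_pow (norm_nonneg _), ofReal_norm]
    _ = ‖∫ ξ, fourierExtension μ h ξ * K ξ‖ₑ := by
        simp_rw [hEK]
        rw [← ofReal_integral_eq_lintegral_ofReal hEKi (.of_forall hnonneg),
          integral_complex_ofReal, ← ofReal_norm, Complex.norm_real,
          Real.norm_of_nonneg (integral_nonneg hnonneg)]
    _ ≤ ∫⁻ _, ENNReal.ofReal (B * R ^ κ) ∂μ := by
        rw [integral_fourierExtension_mul hhi hKi]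
        refine (enorm_integral_le_lintegral_enorm _).trans (lintegral_mono fun x => ?_)
        rw [← ofReal_norm, norm_mul]
        exact ENNReal.ofReal_le_ofReal ((mul_le_of_le_one_left (norm_nonneg _) (hh x)).trans
          (norm_fourierInv_conj_fourierExtension_mul_gaussian_le hB hμ hR hhi hh x))
    _ = _ := lintegral_const _

end FourierExtension

/-! ### The trace Sobolev inequality -/

theorem ofReal_rpow_sq {r : ℝ} (hr : 0 ≤ r) (s : ℝ) :
    ENNReal.ofReal (r ^ s) ^ 2 = .ofReal (r ^ (2 * s)) := by
  rw [← ofReal_pow (by positivity), ← Real.rpow_mul_natCast hr, Nat.cast_two,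
    mul_comm s]

theorem lintegral_Ioi_rpow {A γ : ℝ} (hA : 0 < A) (hγ : 0 < γ) :
    ∫⁻ R in Ioi A, .ofReal (R ^ (-γ - 1)) = .ofReal (A ^ (-γ) / γ) := by
  rw [← ofReal_integral_eq_lintegral_ofReal (integrableOn_Ioi_rpow_of_lt (by linarith) hA),
    integral_Ioi_rpow_of_lt (by linarith) hA, sub_add_cancel, neg_div_neg_eq]
  filter_upwards [self_mem_ae_restrict measurableSet_Ioi] with R hR
  exact Real.rpow_nonneg (hA.trans hR).le _

theorem lintegral_Ioc_rpow {A b : ℝ} (hA : 0 ≤ A) (hb : -1 < b) :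
    ∫⁻ r in Ioc 0 A, .ofReal (r ^ b) = .ofReal (A ^ (b + 1) / (b + 1)) := by
  rw [← ofReal_integral_eq_lintegral_ofReal (intervalIntegral.intervalIntegrable_rpow' hb).1,
    ← intervalIntegral.integral_of_le hA, integral_rpow (.inl hb), Real.zero_rpow (by linarith),
    sub_zero]
  filter_upwards [self_mem_ae_restrict measurableSet_Ioc] with r hr
  exact Real.rpow_nonneg hr.1.le _

theorem lintegral_mul_sq_le {α : Type*} [MeasurableSpace α] {μ : Measure α} {f g : α → ℝ≥0∞}
    (hf : AEMeasurable f μ) (hg : AEMeasurable g μ) :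
    (∫⁻ x, f x * g x ∂μ) ^ 2 ≤ (∫⁻ x, f x ^ 2 ∂μ) * ∫⁻ x, g x ^ 2 ∂μ := by
  have h := ENNReal.lintegral_mul_le_Lp_mul_Lq μ Real.HolderConjugate.two_two hf hg
  simp only [Pi.mul_apply, ENNReal.rpow_two] at h
  refine (pow_le_pow_left' h 2).trans_eq ?_
  rw [mul_pow, ← ENNReal.rpow_mul_natCast, ← ENNReal.rpow_mul_natCast]
  norm_num

theorem ofReal_rpow_neg_le_lintegral_gaussian {A β r : ℝ} (hA : 0 < A) (hβ : 0 < β)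
    (hr : A ≤ r) :
    ENNReal.ofReal (r ^ (-β)) ≤ .ofReal (β * rexp π) *
      ∫⁻ R in Ioi A, .ofReal (R ^ (-β - 1)) * .ofReal (rexp (-(π / R ^ 2) * r ^ 2)) := by
  have hr0 : 0 < r := hA.trans_le hr
  calc ENNReal.ofReal (r ^ (-β))
      = .ofReal (β * rexp π) * (.ofReal (r ^ (-β) / β) * .ofReal (rexp (-π))) := by
        rw [← ofReal_mul (by positivity), ← ofReal_mul (by positivity), Real.exp_neg]
        congr 1
        field_simp [(exp_pos π).ne']
    _ = .ofReal (β * rexp π) *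
          ∫⁻ R in Ioi r, .ofReal (R ^ (-β - 1)) * .ofReal (rexp (-π)) := by
        rw [lintegral_mul_const _ (by fun_prop), lintegral_Ioi_rpow hr0 hβ]
    _ ≤ .ofReal (β * rexp π) *
          ∫⁻ R in Ioi r, .ofReal (R ^ (-β - 1)) * .ofReal (rexp (-(π / R ^ 2) * r ^ 2)) := by
        gcongr ENNReal.ofReal _ * ?_
        refine setLIntegral_mono' measurableSet_Ioi fun R (hR : r < R) => ?_
        gcongr _ * ENNReal.ofReal (rexp ?_)
        have : r ^ 2 / R ^ 2 ≤ 1 := (div_le_one (by positivity [hr0.trans hR])).2 (by gcongr)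
        rw [neg_mul, div_mul_eq_mul_div, mul_div_assoc]
        nlinarith [pi_pos]
    _ ≤ _ := by gcongr

section TraceSobolev

variable {E : Type*} [NormedAddCommGroup E] [InnerProductSpace ℝ E] [FiniteDimensional ℝ E]
  [MeasurableSpace E] [BorelSpace E]

theorem lintegral_compl_ball_sq_enorm_fourierExtension_mul_rpow_le {μ : Measure E}
    [IsFiniteMeasure μ] {κ B A β : ℝ} (hB : 0 ≤ B) (hμ : GaussianFrostman μ κ B) (hA : 0 < A)
    (hβ : 0 < β) (hκ : κ < β) {h : E → ℂ} (hhi : Integrable h μ) (hh : ∀ x, ‖h x‖ ≤ 1) :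
    ∫⁻ ξ in (ball 0 A)ᶜ, ‖fourierExtension μ h ξ‖ₑ ^ 2 * .ofReal (‖ξ‖ ^ (-β)) ≤
      .ofReal (β * rexp π * B / (β - κ) * A ^ (κ - β)) * μ univ := by
  have hcont := continuous_fourierExtension hhi
  set Φ : E → ℝ → ℝ≥0∞ := fun ξ R => .ofReal (R ^ (-β - 1)) *
    (‖fourierExtension μ h ξ‖ₑ ^ 2 * .ofReal (rexp (-(π / R ^ 2) * ‖ξ‖ ^ 2)))
  have hΦ : Measurable (Function.uncurry Φ) := by
    have := hcont.measurable
    unfold Function.uncurry Φ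
    fun_prop
  calc _ ≤ ∫⁻ ξ in (ball 0 A)ᶜ, .ofReal (β * rexp π) * ∫⁻ R in Ioi A, Φ ξ R := by
        refine setLIntegral_mono' measurableSet_ball.compl fun ξ hξ => ?_
        grw [ofReal_rpow_neg_le_lintegral_gaussian hA hβ (r := ‖ξ‖) (by simpa using hξ)]
        rw [mul_left_comm, ← lintegral_const_mul _ (by fun_prop)]
        simp only [Φ, mul_left_comm, le_refl]
    _ ≤ ∫⁻ ξ, .ofReal (β * rexp π) * ∫⁻ R in Ioi A, Φ ξ R := setLIntegral_le_lintegral _ _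
    _ = .ofReal (β * rexp π) * ∫⁻ R in Ioi A, ∫⁻ ξ, Φ ξ R := by
        rw [lintegral_const_mul _ hΦ.lintegral_prod_right, lintegral_lintegral_swap hΦ.aemeasurable]
    _ ≤ .ofReal (β * rexp π) *
          ∫⁻ R in Ioi A, .ofReal (R ^ (-(β - κ) - 1)) * (.ofReal B * μ univ) := by
        gcongr ENNReal.ofReal _ * ?_
        refine setLIntegral_mono' measurableSet_Ioi fun R (hR : A < R) => ?_
        have hR0 : 0 < R := hA.trans hR
        rw [lintegral_const_mul _ (by have := hcont.measurable; fun_prop)]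
        grw [lintegral_sq_enorm_fourierExtension_mul_gaussian_le hB hμ hR0 hhi hh]
        rw [show -(β - κ) - 1 = -β - 1 + κ by ring, Real.rpow_add hR0, ofReal_mul hB,
          ofReal_mul (by positivity)]
        exact (by ring : _ = _).le
    _ = _ := by
        rw [lintegral_mul_const _ (by fun_prop), lintegral_Ioi_rpow hA (sub_pos.2 hκ), neg_sub,
          ← mul_assoc, ← mul_assoc, ← ofReal_mul (by positivity), ← ofReal_mul']
        · congr 2
          ring
        · exact hB

theorem lintegral_ball_rpow [Nontrivial E] {A b : ℝ} (hA : 0 ≤ A) (hb : -(finrank ℝ E : ℝ) < b) :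
    ∫⁻ ξ : E in ball 0 A, .ofReal (‖ξ‖ ^ b) = .ofReal (A ^ (finrank ℝ E + b) / (finrank ℝ E + b)) *
      (volume : Measure E).toSphere univ := by
  have hradial : ∀ r ∈ Ioi (0 : ℝ), (∫⁻ o : sphere (0 : E) 1,
      (ball 0 A).indicator (fun ξ => .ofReal (‖ξ‖ ^ b)) (r • (o : E))
        ∂(volume : Measure E).toSphere) * .ofReal (r ^ (finrank ℝ E - 1)) =
      (Iio A).indicator (fun r => .ofReal (r ^ (finrank ℝ E + b - 1))) r *
        (volume : Measure E).toSphere univ := by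
    intro r (hr : 0 < r)
    have hnorm (o : sphere (0 : E) 1) : ‖r • (o : E)‖ = r := by simp [norm_smul, abs_of_pos hr]
    by_cases hrA : r < A
    · simp only [indicator, mem_ball_zero_iff, hnorm, hrA, if_true, mem_Iio, lintegral_const]
      rw [mul_right_comm, ← ofReal_mul (by positivity), ← Real.rpow_natCast,
        ← Real.rpow_add hr, Nat.cast_sub finrank_pos, Nat.cast_one]
      ring_nf
    · simp [indicator, hnorm, hrA]
  rw [← lintegral_indicator measurableSet_ball, lintegral_eq_lintegral_toSphere volume
      (Measurable.indicator (by fun_prop) measurableSet_ball),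
    setLIntegral_congr_fun measurableSet_Ioi hradial,
    lintegral_mul_const _ (Measurable.indicator (by fun_prop) measurableSet_Iio),
    setLIntegral_indicator measurableSet_Iio, inter_comm, Ioi_inter_Iio,
    setLIntegral_congr Ioo_ae_eq_Ioc, lintegral_Ioc_rpow hA (by linarith), sub_add_cancel]

/-- The homogeneous Sobolev norm `‖|ξ|^s G‖_{L²}` of order `s` of the function with Fourier
transform `G`. -/
noncomputable def sobolevNorm (s : ℝ) (G : E → ℂ) : ℝ≥0∞ :=
  eLpNorm (fun ξ => ‖ξ‖ ^ s * ‖G ξ‖) 2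

theorem sobolevNorm_sq (s : ℝ) (G : E → ℂ) :
    sobolevNorm s G ^ 2 = ∫⁻ ξ, (‖G ξ‖ₑ * .ofReal (‖ξ‖ ^ s)) ^ 2 := by
  rw [sobolevNorm, ← ENNReal.rpow_two,
    eLpNorm_eq_lintegral_rpow_enorm_toReal two_ne_zero ofNat_ne_top, ENNReal.toReal_ofNat,
    ← ENNReal.rpow_mul, one_div_mul_cancel two_ne_zero, ENNReal.rpow_one]
  refine lintegral_congr fun ξ => ?_
  rw [ENNReal.rpow_two, enorm_mul, enorm_norm, Real.enorm_of_nonneg (by positivity), mul_comm]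

theorem lintegral_ball_enorm_le_sobolevNorm [Nontrivial E] {s : ℝ} (hs : s < finrank ℝ E / 2) :
    ∃ c : ℝ, 0 < c ∧ ∀ G : E → ℂ, AEStronglyMeasurable G → ∀ A : ℝ, 0 ≤ A →
      ∫⁻ ξ in ball 0 A, ‖G ξ‖ₑ ≤ .ofReal (c * A ^ (finrank ℝ E / 2 - s)) * sobolevNorm s G := by
  obtain ⟨m, hm, hm_eq⟩ : ∃ m : ℝ, 0 < m ∧ (volume : Measure E).toSphere univ = .ofReal m :=
    ⟨_, ENNReal.toReal_pos (Measure.measure_univ_ne_zero.2 (Measure.toSphere_ne_zero _))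
      (measure_ne_top _ _), (ofReal_toReal (measure_ne_top _ _)).symm⟩
  have hs' : 0 < finrank ℝ E - 2 * s := by linarith
  refine ⟨√(m / (finrank ℝ E - 2 * s)), by positivity, fun G hG A hA => ?_⟩
  have hsplit : ∫⁻ ξ in ball 0 A, ‖G ξ‖ₑ =
      ∫⁻ ξ in ball 0 A, (‖G ξ‖ₑ * .ofReal (‖ξ‖ ^ s)) * .ofReal (‖ξ‖ ^ (-s)) := by
    refine lintegral_congr_ae ?_
    filter_upwards [ae_restrict_of_ae (Measure.ae_ne volume 0)] with ξ hξ
    have := norm_pos_iff.2 hξ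
    rw [mul_assoc, ← ofReal_mul (by positivity), ← Real.rpow_add this]
    simp
  rw [← ENNReal.pow_le_pow_left_iff two_ne_zero, hsplit]
  have hGm : AEMeasurable (fun ξ => ‖G ξ‖ₑ * .ofReal (‖ξ‖ ^ s)) (volume.restrict (ball 0 A)) :=
    (hG.enorm.mul (by fun_prop)).restrict
  calc _ ≤ (∫⁻ ξ in ball 0 A, (‖G ξ‖ₑ * .ofReal (‖ξ‖ ^ s)) ^ 2) *
        ∫⁻ ξ : E in ball 0 A, .ofReal (‖ξ‖ ^ (-s)) ^ 2 := lintegral_mul_sq_le hGm (by fun_prop)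
    _ ≤ sobolevNorm s G ^ 2 *
          .ofReal (A ^ (finrank ℝ E + 2 * -s) / (finrank ℝ E + 2 * -s) * m) := by
        simp only [ofReal_rpow_sq (norm_nonneg _)]
        rw [lintegral_ball_rpow hA (by linarith), sobolevNorm_sq, hm_eq, ← ofReal_mul' hm.le]
        gcongr
        exact Measure.restrict_le_self
    _ = _ := by
        rw [mul_pow, ← ofReal_pow (by positivity), mul_comm, mul_pow, Real.sq_sqrt (by positivity),
          ← Real.rpow_mul_natCast hA]
        congr 2
        ring_nf

theorem exists_integral_mul_eq_integral_norm {α : Type*} [TopologicalSpace α] [MeasurableSpace α]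
    [OpensMeasurableSpace α] {V : α → ℂ} (hV : Continuous V) :
    ∃ h : α → ℂ, Measurable h ∧ (∀ x, ‖h x‖ ≤ 1) ∧ ∀ x, h x * V x = ‖V x‖ := by
  refine ⟨fun x => (starRingEnd ℂ) (V x) / ‖V x‖, by fun_prop, fun x => ?_, fun x => ?_⟩
  · simpa using div_self_le_one ‖V x‖
  · rcases eq_or_ne (V x) 0 with h | h
    · simp [h]
    · rw [div_mul_eq_mul_div, mul_comm, Complex.mul_conj', sq, mul_div_assoc,
        div_self (by simpa using h), mul_one]

theorem lintegral_compl_ball_mul_le {f g : E → ℝ≥0∞} (hf : AEMeasurable f) (hg : AEMeasurable g)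
    {A : ℝ} (hA : 0 < A) (β : ℝ) :
    ∫⁻ ξ in (ball 0 A)ᶜ, f ξ * g ξ ≤ ((∫⁻ ξ in (ball 0 A)ᶜ, f ξ ^ 2 * .ofReal (‖ξ‖ ^ (-β))) *
      ∫⁻ ξ in (ball 0 A)ᶜ, g ξ ^ 2 * .ofReal (‖ξ‖ ^ β)) ^ (1 / 2 : ℝ) := by
  have hsq (r : ℝ) (hr : 0 ≤ r) (γ : ℝ) (c : ℝ≥0∞) :
      c ^ 2 * .ofReal (r ^ γ) = (c * .ofReal (r ^ (γ / 2))) ^ 2 := by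
    rw [mul_pow, ofReal_rpow_sq hr, mul_div_cancel₀ _ two_ne_zero]
  simp_rw [fun ξ : E => hsq ‖ξ‖ (norm_nonneg ξ)]
  rw [one_div, ENNReal.le_rpow_inv_iff two_pos, ENNReal.rpow_two]
  refine le_of_eq_of_le ?_ (lintegral_mul_sq_le (hf.restrict.mul (by fun_prop))
    (hg.restrict.mul (by fun_prop)))
  congr 1
  refine setLIntegral_congr_fun measurableSet_ball.compl fun ξ hξ => ?_
  have hξ0 : 0 < ‖ξ‖ := hA.trans_le (by simpa using hξ)
  have hcancel : ENNReal.ofReal (‖ξ‖ ^ (-β / 2)) * .ofReal (‖ξ‖ ^ (β / 2)) = 1 := by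
    rw [← ofReal_mul (by positivity), ← Real.rpow_add hξ0]
    ring_nf
    simp
  simp only [mul_mul_mul_comm, hcancel, mul_one]

theorem lintegral_enorm_fourierInv_le {μ : Measure E} [IsFiniteMeasure μ] {κ B A β : ℝ}
    (hB : 0 ≤ B) (hμ : GaussianFrostman μ κ B) (hA : 0 < A) (hβ : 0 < β) (hκ : κ < β) {G : E → ℂ}
    (hG : Integrable G) :
    ∫⁻ x, ‖𝓕⁻ G x‖ₑ ∂μ ≤ μ univ * (∫⁻ ξ in ball 0 A, ‖G ξ‖ₑ) +
      (.ofReal (β * rexp π * B / (β - κ) * A ^ (κ - β)) * μ univ *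
        ∫⁻ ξ in (ball 0 A)ᶜ, ‖G ξ‖ₑ ^ 2 * .ofReal (‖ξ‖ ^ β)) ^ (1 / 2 : ℝ) := by
  have hV := continuous_fourierInv hG
  obtain ⟨h, hhm, hh, hhV⟩ := exists_integral_mul_eq_integral_norm hV
  have hhi : Integrable h μ := .of_bound hhm.aestronglyMeasurable 1 (.of_forall hh)
  have hEm := (continuous_fourierExtension hhi).measurable
  have hVi : Integrable (𝓕⁻ G) μ := .of_bound hV.aestronglyMeasurable (∫ ξ, ‖G ξ‖)
    (.of_forall fun x => norm_fourierExtension_le _ _ _)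
  have hEle (ξ : E) : ‖fourierExtension μ h ξ‖ₑ ≤ μ univ := by
    rw [← ofReal_norm, ← ofReal_measureReal]
    refine ofReal_le_ofReal ((norm_fourierExtension_le _ _ _).trans ?_)
    simpa using integral_mono hhi.norm (integrable_const 1) hh
  calc ∫⁻ x, ‖𝓕⁻ G x‖ₑ ∂μ = ‖∫ x, h x * 𝓕⁻ G x ∂μ‖ₑ := by
        simp_rw [hhV]
        rw [integral_complex_ofReal, ← ofReal_norm, Complex.norm_real,
          Real.norm_of_nonneg (by positivity), ofReal_integral_norm_eq_lintegral_enorm hVi]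
    _ ≤ ∫⁻ ξ, ‖fourierExtension μ h ξ‖ₑ * ‖G ξ‖ₑ := by
        simp_rw [← integral_fourierExtension_mul hhi hG, ← enorm_mul]
        exact enorm_integral_le_lintegral_enorm _
    _ = (∫⁻ ξ in ball 0 A, ‖fourierExtension μ h ξ‖ₑ * ‖G ξ‖ₑ) +
          ∫⁻ ξ in (ball 0 A)ᶜ, ‖fourierExtension μ h ξ‖ₑ * ‖G ξ‖ₑ :=
        (lintegral_add_compl _ measurableSet_ball).symm
    _ ≤ _ := by
        gcongr
        · rw [← lintegral_const_mul' _ _ (measure_ne_top _ _)]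
          exact lintegral_mono fun ξ => mul_le_mul_left (hEle ξ) _
        · grw [lintegral_compl_ball_mul_le hEm.enorm.aemeasurable hG.1.enorm hA β,
            lintegral_compl_ball_sq_enorm_fourierExtension_mul_rpow_le hB hμ hA hβ hκ hhi hh]

theorem meas_lt_norm_fourierInv_le_of_isFiniteMeasure {μ : Measure E} [IsFiniteMeasure μ]
    {κ B A β lam : ℝ} (hB : 0 ≤ B) (hμ : GaussianFrostman μ κ B) (hA : 0 < A) (hβ : 0 < β)
    (hκ : κ < β) {G : E → ℂ} (hG : Integrable G) (hlam : 0 ≤ lam)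
    (hlow : ∫⁻ ξ in ball 0 A, ‖G ξ‖ₑ ≤ .ofReal (lam / 2)) :
    .ofReal (lam / 2) ^ 2 * μ {x | lam < ‖𝓕⁻ G x‖} ≤
      .ofReal (β * rexp π * B / (β - κ) * A ^ (κ - β)) *
        ∫⁻ ξ in (ball 0 A)ᶜ, ‖G ξ‖ₑ ^ 2 * .ofReal (‖ξ‖ ^ β) := by
  set S := {x | lam < ‖𝓕⁻ G x‖}
  set C := ENNReal.ofReal (β * rexp π * B / (β - κ) * A ^ (κ - β))
  set X := ∫⁻ ξ in (ball 0 A)ᶜ, ‖G ξ‖ₑ ^ 2 * .ofReal (‖ξ‖ ^ β)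
  have hS : MeasurableSet S :=
    measurableSet_lt measurable_const (continuous_fourierInv hG).norm.measurable
  have hL1 : .ofReal (lam / 2) * μ S + .ofReal (lam / 2) * μ S ≤
      .ofReal (lam / 2) * μ S + (C * μ S * X) ^ (1 / 2 : ℝ) := calc
    _ = ∫⁻ _ in S, .ofReal lam ∂μ := by
      rw [setLIntegral_const, ← add_mul, ← ofReal_add (by positivity) (by positivity), add_halves]
    _ ≤ ∫⁻ x in S, ‖𝓕⁻ G x‖ₑ ∂μ := setLIntegral_mono' hS fun x (hx : lam < _) => by
      rw [← ofReal_norm]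
      exact ofReal_le_ofReal hx.le
    _ ≤ _ := by
      have h := lintegral_enorm_fourierInv_le hB (hμ.mono (μ := μ.restrict S)
        Measure.restrict_le_self) hA hβ hκ hG
      rw [Measure.restrict_apply_univ] at h
      grw [h, hlow, mul_comm (μ S)]
  have hsq : .ofReal (lam / 2) ^ 2 * μ S * μ S ≤ C * X * μ S := by
    have := ENNReal.le_of_add_le_add_left (mul_ne_top ofReal_ne_top (measure_ne_top _ _)) hL1
    rw [one_div, ENNReal.le_rpow_inv_iff two_pos, ENNReal.rpow_two] at this
    calc _ = (.ofReal (lam / 2) * μ S) ^ 2 := by ring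
      _ ≤ _ := this
      _ = _ := by ring
  rcases eq_or_ne (μ S) 0 with h0 | h0
  · simp [h0]
  · exact (ENNReal.mul_le_mul_iff_left h0 (measure_ne_top _ _)).1 hsq

theorem meas_lt_norm_fourierInv_le {μ : Measure E} [SigmaFinite μ] {κ B A β lam : ℝ}
    (hB : 0 ≤ B) (hμ : GaussianFrostman μ κ B) (hA : 0 < A) (hβ : 0 < β) (hκ : κ < β) {G : E → ℂ}
    (hG : Integrable G) (hlam : 0 ≤ lam) (hlow : ∫⁻ ξ in ball 0 A, ‖G ξ‖ₑ ≤ .ofReal (lam / 2)) :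
    .ofReal (lam / 2) ^ 2 * μ {x | lam < ‖𝓕⁻ G x‖} ≤
      .ofReal (β * rexp π * B / (β - κ) * A ^ (κ - β)) *
        ∫⁻ ξ in (ball 0 A)ᶜ, ‖G ξ‖ₑ ^ 2 * .ofReal (‖ξ‖ ^ β) := by
  rw [← Measure.iSup_restrict_spanningSets, ENNReal.mul_iSup]
  refine iSup_le fun k => ?_
  have : Fact (μ (spanningSets μ k) < ⊤) := ⟨measure_spanningSets_lt_top μ k⟩
  exact meas_lt_norm_fourierInv_le_of_isFiniteMeasure hB (hμ.mono Measure.restrict_le_self) hA hβ hκ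
    hG hlam hlow

theorem meas_lt_norm_fourierInv_mul_rpow_le {μ : Measure E} [SigmaFinite μ] {κ B a θ K t : ℝ}
    (hB : 0 ≤ B) (hμ : GaussianFrostman μ κ B) (hκ : 0 ≤ κ) (ha : 0 < a) (hθ : 0 < θ) {G : E → ℂ}
    (hG : Integrable G) (hK : 0 < K) (hlow : ∀ A : ℝ, 0 ≤ A →
      ∫⁻ ξ in ball 0 A, ‖G ξ‖ₑ ≤ .ofReal (K * A ^ a / 2)) (ht : 0 < t) :
    μ {x | t < ‖𝓕⁻ G x‖} * .ofReal (t ^ (2 + 2 * θ - 1)) ≤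
      .ofReal (4 * ((κ + θ * a) * rexp π * B / (θ * a)) * K ^ θ) *
        (volume.withDensity (fun ξ => ‖G ξ‖ₑ ^ 2 * .ofReal (‖ξ‖ ^ (κ + θ * a)))
          {ξ | t ≤ K * ‖ξ‖ ^ a} * .ofReal (t ^ (θ - 1))) := by
  set A := (t / K) ^ a⁻¹
  have hA : 0 < A := by positivity
  have hAa : A ^ a = t / K := Real.rpow_inv_rpow (by positivity) ha.ne'
  have hset : {ξ : E | t ≤ K * ‖ξ‖ ^ a} = (ball 0 A)ᶜ := by
    ext ξ
    rw [mem_ofPred, mem_compl_iff, mem_ball_zero_iff, not_lt,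
      ← Real.rpow_le_rpow_iff hA.le (norm_nonneg ξ) ha, hAa, div_le_iff₀' hK]
  have hweak := meas_lt_norm_fourierInv_le hB hμ hA (β := κ + θ * a) (by positivity)
    (by linarith [mul_pos hθ ha]) hG ht.le ((hlow A hA.le).trans_eq (by rw [hAa]; field_simp))
  rw [hset, withDensity_apply _ measurableSet_ball.compl]
  set X := ∫⁻ ξ in (ball 0 A)ᶜ, ‖G ξ‖ₑ ^ 2 * .ofReal (‖ξ‖ ^ (κ + θ * a))
  set c := (κ + θ * a) * rexp π * B / (κ + θ * a - κ)
  have hc : c = (κ + θ * a) * rexp π * B / (θ * a) := by simp only [c, add_sub_cancel_left]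
  have hc0 : 0 ≤ c := by rw [hc]; positivity
  have hApow : A ^ (κ - (κ + θ * a)) = K ^ θ * t ^ (-θ) := by
    rw [sub_add_cancel_left, mul_comm θ, ← mul_neg, Real.rpow_mul hA.le, hAa,
      Real.div_rpow ht.le hK.le, Real.rpow_neg hK.le, div_inv_eq_mul, mul_comm]
  have ht1 : t ^ (2 + 2 * θ - 1) = 4 * t ^ (2 * θ - 1) * (t / 2) ^ 2 := by
    rw [show 2 + 2 * θ - 1 = 2 * θ - 1 + (2 : ℕ) by push_cast; ring, Real.rpow_add ht,
      Real.rpow_natCast]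
    ring
  have ht2 : t ^ (2 * θ - 1) * t ^ (-θ) = t ^ (θ - 1) := by
    rw [← Real.rpow_add ht]
    ring_nf
  calc μ {x | t < ‖𝓕⁻ G x‖} * .ofReal (t ^ (2 + 2 * θ - 1))
      = .ofReal (4 * t ^ (2 * θ - 1)) * (.ofReal (t / 2) ^ 2 * μ {x | t < ‖𝓕⁻ G x‖}) := by
        rw [ht1, ofReal_mul (by positivity), ofReal_pow (by positivity)]
        ring
    _ ≤ .ofReal (4 * t ^ (2 * θ - 1)) * (.ofReal (c * A ^ (κ - (κ + θ * a))) * X) := by gcongr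
    _ = .ofReal (4 * c * K ^ θ) * (X * .ofReal (t ^ (θ - 1))) := by
        rw [mul_comm X, ← mul_assoc, ← mul_assoc (ENNReal.ofReal (4 * c * K ^ θ)),
          ← ofReal_mul (by positivity), ← ofReal_mul (by positivity), hApow, ← ht2]
        congr 2
        ring
    _ = _ := by rw [hc]

theorem lintegral_rpow_norm_fourierInv_le {μ : Measure E} [SigmaFinite μ] {κ B a θ K : ℝ}
    (hB : 0 ≤ B) (hμ : GaussianFrostman μ κ B) (hκ : 0 ≤ κ) (ha : 0 < a) (hθ : 0 < θ) {G : E → ℂ}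
    (hG : Integrable G) (hK : 0 < K) (hlow : ∀ A : ℝ, 0 ≤ A →
      ∫⁻ ξ in ball 0 A, ‖G ξ‖ₑ ≤ .ofReal (K * A ^ a / 2)) :
    ∫⁻ x, .ofReal (‖𝓕⁻ G x‖ ^ (2 + 2 * θ)) ∂μ ≤
      .ofReal ((2 + 2 * θ) * (4 * ((κ + θ * a) * rexp π * B / (θ * a)) / θ) * (K ^ θ) ^ 2) *
        ∫⁻ ξ, (‖G ξ‖ₑ * .ofReal (‖ξ‖ ^ (κ / 2 + θ * a))) ^ 2 := by
  set c := 4 * ((κ + θ * a) * rexp π * B / (θ * a))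
  set ν := (volume : Measure E).withDensity fun ξ => ‖G ξ‖ₑ ^ 2 * .ofReal (‖ξ‖ ^ (κ + θ * a))
  have hdens : AEMeasurable fun ξ => ‖G ξ‖ₑ ^ 2 * .ofReal (‖ξ‖ ^ (κ + θ * a)) :=
    (hG.1.enorm.pow_const 2).mul (by fun_prop)
  have hν : .ofReal θ * ∫⁻ t in Ioi 0, ν {ξ | t ≤ K * ‖ξ‖ ^ a} * .ofReal (t ^ (θ - 1)) =
      .ofReal (K ^ θ) * ∫⁻ ξ, (‖G ξ‖ₑ * .ofReal (‖ξ‖ ^ (κ / 2 + θ * a))) ^ 2 := by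
    rw [← lintegral_rpow_eq_lintegral_meas_le_mul ν (.of_forall fun ξ => by positivity)
      (by fun_prop) hθ, lintegral_withDensity_eq_lintegral_mul₀ hdens (by fun_prop),
      ← lintegral_const_mul' _ _ ofReal_ne_top]
    refine lintegral_congr fun ξ => ?_
    have hξ : (K * ‖ξ‖ ^ a) ^ θ * ‖ξ‖ ^ (κ + θ * a) = K ^ θ * ‖ξ‖ ^ (2 * (κ / 2 + θ * a)) := by
      rw [Real.mul_rpow hK.le (by positivity), ← Real.rpow_mul (norm_nonneg ξ), mul_assoc,
        ← Real.rpow_add_of_nonneg (norm_nonneg ξ) (by positivity) (by positivity)]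
      ring_nf
    rw [mul_pow, ofReal_rpow_sq (norm_nonneg ξ), mul_left_comm, ← ofReal_mul (by positivity), ← hξ,
      ofReal_mul (by positivity), Pi.mul_apply]
    ring
  calc _ = .ofReal (2 + 2 * θ) *
        ∫⁻ t in Ioi 0, μ {x | t < ‖𝓕⁻ G x‖} * .ofReal (t ^ (2 + 2 * θ - 1)) :=
        lintegral_rpow_eq_lintegral_meas_lt_mul μ (.of_forall fun x => norm_nonneg _)
          (continuous_fourierInv hG).norm.aemeasurable (by positivity)
    _ ≤ .ofReal (2 + 2 * θ) * ∫⁻ t in Ioi 0, .ofReal (c * K ^ θ) *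
          (ν {ξ | t ≤ K * ‖ξ‖ ^ a} * .ofReal (t ^ (θ - 1))) := by
        gcongr _ * ?_
        exact setLIntegral_mono' measurableSet_Ioi fun t ht =>
          meas_lt_norm_fourierInv_mul_rpow_le hB hμ hκ ha hθ hG hK hlow ht
    _ = .ofReal ((2 + 2 * θ) * (c / θ) * K ^ θ) * (.ofReal θ *
          ∫⁻ t in Ioi 0, ν {ξ | t ≤ K * ‖ξ‖ ^ a} * .ofReal (t ^ (θ - 1))) := by
        rw [lintegral_const_mul' _ _ ofReal_ne_top, ← mul_assoc, ← mul_assoc,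
          ← ofReal_mul (by positivity), ← ofReal_mul (by positivity)]
        congr 2
        field_simp
    _ = _ := by
        rw [hν, ← mul_assoc, ← ofReal_mul (by positivity)]
        ring_nf

theorem exists_lintegral_rpow_enorm_fourierInv_le [Nontrivial E] {κ B a θ : ℝ} (hB : 0 < B)
    (hκ : 0 ≤ κ) (ha : 0 < a) (hθ : 0 < θ) (hdim : finrank ℝ E / 2 - (κ / 2 + θ * a) = a) :
    ∃ C : ℝ, 0 < C ∧ ∀ (μ : Measure E) [SigmaFinite μ], GaussianFrostman μ κ B →
      ∀ G : E → ℂ, Integrable G → ∫⁻ x, ‖𝓕⁻ G x‖ₑ ^ (2 + 2 * θ) ∂μ ≤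
        .ofReal C * sobolevNorm (κ / 2 + θ * a) G ^ (2 + 2 * θ) := by
  obtain ⟨c, hc, hlow⟩ := lintegral_ball_enorm_le_sobolevNorm (by linarith :
    κ / 2 + θ * a < finrank ℝ E / 2)
  rw [hdim] at hlow
  set D := (2 + 2 * θ) * (4 * ((κ + θ * a) * rexp π * B / (θ * a)) / θ)
  have hD : 0 < D * ((2 * c) ^ θ) ^ 2 := by positivity
  refine ⟨D * ((2 * c) ^ θ) ^ 2, hD, fun μ _ hμ G hG => ?_⟩
  rcases eq_or_ne (sobolevNorm (κ / 2 + θ * a) G) ⊤ with htop | htop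
  · simp [htop, ENNReal.top_rpow_of_pos (by positivity : 0 < 2 + 2 * θ), hD]
  lift sobolevNorm (κ / 2 + θ * a) G to NNReal using htop with N hN
  have hstrong (K : ℝ) (hK : 0 < K) (hNK : 2 * c * N ≤ K) :
      ∫⁻ x, ‖𝓕⁻ G x‖ₑ ^ (2 + 2 * θ) ∂μ ≤ .ofReal (D * (K ^ θ) ^ 2) * N ^ 2 := by
    rw [hN, sobolevNorm_sq]
    refine (le_of_eq (lintegral_congr fun x => ?_)).trans
      (lintegral_rpow_norm_fourierInv_le hB.le hμ hκ ha hθ hG hK fun A hA => ?_)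
    · rw [← ofReal_norm, ofReal_rpow_of_nonneg (norm_nonneg _) (by positivity)]
    · refine (hlow G hG.1 A hA).trans ?_
      rw [← hN, ← ofReal_coe_nnreal, ← ofReal_mul (by positivity)]
      have : 0 ≤ A ^ a := by positivity
      exact ofReal_le_ofReal (by nlinarith)
  rcases eq_or_ne N 0 with rfl | hN0
  · have h1 := hstrong 1 one_pos (by simp)
    rw [ENNReal.coe_zero, zero_pow two_ne_zero, mul_zero] at h1
    exact h1.trans zero_le
  · have hNpos : (0 : ℝ) < N := by positivity
    refine (hstrong (2 * c * N) (by positivity) le_rfl).trans_eq ?_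
    rw [← ofReal_coe_nnreal, ofReal_rpow_of_pos hNpos, ← ofReal_pow hNpos.le,
      ← ofReal_mul (by positivity), ← ofReal_mul (by positivity), Real.rpow_add hNpos,
      Real.mul_rpow (by positivity) hNpos.le, Real.rpow_two, mul_comm 2 θ, Real.rpow_mul hNpos.le,
      Real.rpow_two]
    ring_nf

theorem exists_eLpNorm_fourierInv_le_sobolevNorm [Nontrivial E] {κ B s : ℝ} (hB : 0 < B)
    (hκ : 0 ≤ κ) (hs : κ / 2 < s) (hs' : s < finrank ℝ E / 2) :
    ∃ C : ℝ, 0 < C ∧ ∀ (μ : Measure E) [SigmaFinite μ], GaussianFrostman μ κ B →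
      ∀ G : E → ℂ, Integrable G →
        eLpNorm (𝓕⁻ G) (.ofReal (2 * (finrank ℝ E - κ) / (finrank ℝ E - 2 * s))) μ ≤
          .ofReal C * sobolevNorm s G := by
  obtain ⟨a, ha, has⟩ : ∃ a : ℝ, 0 < a ∧ finrank ℝ E / 2 - s = a := ⟨_, sub_pos.2 hs', rfl⟩
  obtain ⟨θ, hθ, rfl⟩ : ∃ θ : ℝ, 0 < θ ∧ κ / 2 + θ * a = s :=
    ⟨(s - κ / 2) / a, div_pos (by linarith) ha, by field_simp; ring⟩
  have hq : 2 * (finrank ℝ E - κ) / (finrank ℝ E - 2 * (κ / 2 + θ * a)) = 2 + 2 * θ := by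
    rw [div_eq_iff (by linarith)]
    linear_combination -4 * θ * has
  obtain ⟨C, hC, hbound⟩ := exists_lintegral_rpow_enorm_fourierInv_le hB hκ ha hθ has
  refine ⟨C ^ (2 + 2 * θ)⁻¹, by positivity, fun μ _ hμ G hG => ?_⟩
  have hCpow : ENNReal.ofReal (C ^ (2 + 2 * θ)⁻¹) ^ (2 + 2 * θ) = .ofReal C := by
    rw [← ofReal_rpow_of_pos hC, ENNReal.rpow_inv_rpow (by positivity)]
  rw [hq, eLpNorm_eq_lintegral_rpow_enorm_toReal (by simpa using by positivity) ofReal_ne_top,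
    toReal_ofReal (by positivity), one_div, ENNReal.rpow_inv_le_iff (by positivity),
    ENNReal.mul_rpow_of_nonneg _ _ (by positivity), hCpow]
  exact hbound μ hμ G hG

end TraceSobolev

section DualEstimates

theorem lintegral_enorm_mul_enorm_le_eLpNorm_mul_eLpNorm {α F G : Type*} [MeasurableSpace α]
    {μ : Measure α} [NormedAddCommGroup F] [NormedAddCommGroup G] {p q : ℝ}
    (hpq : p.HolderConjugate q) {f : α → F} {g : α → G} (hf : AEStronglyMeasurable f μ)
    (hg : AEStronglyMeasurable g μ) :
    ∫⁻ x, ‖f x‖ₑ * ‖g x‖ₑ ∂μ ≤ eLpNorm f (.ofReal p) μ * eLpNorm g (.ofReal q) μ := by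
  rw [eLpNorm_eq_lintegral_rpow_enorm_toReal (by simpa using hpq.pos) ofReal_ne_top,
    eLpNorm_eq_lintegral_rpow_enorm_toReal (by simpa using hpq.symm.pos) ofReal_ne_top,
    toReal_ofReal hpq.nonneg, toReal_ofReal hpq.symm.nonneg]
  exact ENNReal.lintegral_mul_le_Lp_mul_Lq μ hpq hf.enorm hg.enorm

theorem holderConjugate_of_one_div_eq_add_div {d κ s p : ℝ} (hs : κ / 2 < s) (hs' : s < d / 2)
    (hp : 1 / p = 1 / 2 + (s - κ / 2) / (d - κ)) :
    p.HolderConjugate (2 * (d - κ) / (d - 2 * s)) := by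
  have hdκ : 0 < d - κ := by linarith
  have hfrac : 0 < (s - κ / 2) / (d - κ) := div_pos (by linarith) hdκ
  have hfrac' : (s - κ / 2) / (d - κ) < 1 / 2 := by rw [div_lt_iff₀ hdκ]; linarith
  have hp0 : 0 < p := one_div_pos.1 (by linarith)
  refine Real.holderConjugate_iff.2 ⟨(one_div_lt_one_div hp0 one_pos).1 (by linarith), ?_⟩
  rw [← one_div p, hp, inv_div]
  field_simp
  ring

variable {E : Type*} [NormedAddCommGroup E] [InnerProductSpace ℝ E] [FiniteDimensional ℝ E]
  [MeasurableSpace E] [BorelSpace E]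

theorem exists_lintegral_enorm_mul_fourierInv_le [Nontrivial E] {κ B s p : ℝ} (hB : 0 < B)
    (hκ : 0 ≤ κ) (hs : κ / 2 < s) (hs' : s < finrank ℝ E / 2)
    (hp : 1 / p = 1 / 2 + (s - κ / 2) / (finrank ℝ E - κ)) :
    ∃ C : ℝ, 0 < C ∧ ∀ (μ : Measure E) [SigmaFinite μ], GaussianFrostman μ κ B →
      ∀ f : E → ℝ, AEStronglyMeasurable f μ → ∀ G : E → ℂ, Integrable G →
        ∫⁻ x, ‖f x‖ₑ * ‖𝓕⁻ G x‖ₑ ∂μ ≤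
          .ofReal C * sobolevNorm s G * eLpNorm f (.ofReal p) μ := by
  obtain ⟨C, hC, htrace⟩ := exists_eLpNorm_fourierInv_le_sobolevNorm hB hκ hs hs'
  refine ⟨C, hC, fun μ _ hμ f hf G hG => ?_⟩
  refine (lintegral_enorm_mul_enorm_le_eLpNorm_mul_eLpNorm
    (holderConjugate_of_one_div_eq_add_div hs hs' hp) hf
    (continuous_fourierInv hG).aestronglyMeasurable).trans ?_
  rw [mul_comm]
  exact mul_le_mul_left (htrace μ hμ G hG) _

theorem eLpNorm_sphereMeasure {n : ℕ} {p r : ℝ} (hp : 0 < p) (hr : 0 ≤ r) {f : Spc n → ℝ}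
    (hf : Measurable f) :
    eLpNorm f (.ofReal p) (sphereMeasure (Spc n) r) =
      .ofReal ((r ^ (n - 1)) ^ (1 / p)) * sphN n p f r := by
  rw [eLpNorm_eq_lintegral_rpow_enorm_toReal (by simpa using hp) ofReal_ne_top,
    toReal_ofReal hp.le, lintegral_sphereMeasure r (by fun_prop), finrank_euclideanSpace_fin,
    ENNReal.mul_rpow_of_nonneg _ _ (by positivity),
    ENNReal.ofReal_rpow_of_nonneg (by positivity) (by positivity)]
  rfl

theorem measurable_sphN {n : ℕ} {q : ℝ} {f : Spc n → ℝ} (hf : Measurable f) :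
    Measurable fun r => sphN n q f r := by
  have : SFinite (sphM n) := by unfold sphM; infer_instance
  have hpolar : Measurable fun z : ℝ × sphere (0 : Spc n) 1 =>
      (‖f (z.1 • (z.2 : Spc n))‖₊ : ℝ≥0∞) ^ q := by fun_prop
  exact hpolar.lintegral_prod_right'.pow_const _

theorem exists_lintegral_toSphere_mul_fourierInv_le {n : ℕ} (hn : 2 ≤ n) {s p : ℝ}
    (hs : 1 / 2 < s) (hs' : s < n / 2) (hp : 1 / p = 1 / 2 + (s - 1 / 2) / (n - 1)) :
    ∃ C : ℝ, 0 < C ∧ ∀ f : Spc n → ℝ, Measurable f → ∀ G : Spc n → ℂ, Integrable G →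
      ∀ r : ℝ, 0 < r →
        (∫⁻ o, ‖f (r • (o : Spc n))‖ₑ * ‖𝓕⁻ G (r • (o : Spc n))‖ₑ ∂(sphM n)) *
          .ofReal (r ^ (n - 1)) ≤
        .ofReal C * sobolevNorm s G * (.ofReal (r ^ (-(n / 2 - s))) *
          (sphN n p f r * .ofReal (r ^ (n - 1)))) := by
  have : Nontrivial (Spc n) := nontrivial_of_finrank_pos (R := ℝ) (by simpa using by omega)
  have hdim : finrank ℝ (Spc n) = n := finrank_euclideanSpace_fin
  obtain ⟨C, hC, hdual⟩ := exists_lintegral_enorm_mul_fourierInv_le (E := Spc n) (κ := 1)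
    (by positivity : 0 < rexp π * 2 ^ ((finrank ℝ (Spc n) : ℝ) / 2)) zero_le_one hs
    (by rwa [hdim]) (by rwa [hdim])
  refine ⟨C, hC, fun f hf G hG r hr => ?_⟩
  have hp0 : 0 < p := (holderConjugate_of_one_div_eq_add_div hs hs' hp).pos
  have hscale : (r ^ (n - 1)) ^ (1 / p) = r ^ (-(n / 2 - s)) * r ^ (n - 1) := by
    have hn1 : (n : ℝ) - 1 ≠ 0 := by
      have : (2 : ℝ) ≤ n := by exact_mod_cast hn
      linarith
    rw [← Real.rpow_natCast, ← Real.rpow_mul hr.le, ← Real.rpow_add hr,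
      Nat.cast_sub (by omega), hp]
    congr 1
    push_cast
    field_simp
    ring
  have hmeas := (continuous_fourierInv hG).measurable
  have h := hdual _ (gaussianFrostman_sphereMeasure hr) f hf.aestronglyMeasurable G hG
  rw [lintegral_sphereMeasure r (by fun_prop), eLpNorm_sphereMeasure hp0 hr.le hf, hdim, hscale,
    ofReal_mul (by positivity), mul_comm] at h
  exact h.trans_eq (by ring)

theorem rpow_neg_le_two_rpow_mul_sqrt_rpow_neg {a r τ : ℝ} (ha : 0 ≤ a) (hτ : 0 ≤ τ)
    (hr : (1 + τ) / 2 ≤ r) : r ^ (-a) ≤ 2 ^ a * √(1 + τ ^ 2) ^ (-a) := by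
  have hsqrt : √(1 + τ ^ 2) ≤ 1 + τ := Real.sqrt_le_left (by positivity) |>.2 (by nlinarith)
  calc r ^ (-a) ≤ (√(1 + τ ^ 2) / 2) ^ (-a) :=
        rpow_le_rpow_of_nonpos (by positivity) (by linarith) (by linarith)
    _ = 2 ^ a * √(1 + τ ^ 2) ^ (-a) := by
        rw [div_rpow (by positivity) zero_le_two, rpow_neg zero_le_two, div_inv_eq_mul, mul_comm]

theorem exists_lintegral_exterior_mul_fourierInv_le {n : ℕ} (hn : 2 ≤ n) {s p : ℝ}
    (hs : 1 / 2 < s) (hs' : s < n / 2) (hp : 1 / p = 1 / 2 + (s - 1 / 2) / (n - 1)) :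
    ∃ C : ℝ, 0 < C ∧ ∀ f : Spc n → ℝ, Measurable f → ∀ G : Spc n → ℂ, Integrable G →
      ∀ τ : ℝ, 0 ≤ τ →
        ∫⁻ x, ‖indicator {x : Spc n | (1 + τ) / 2 ≤ ‖x‖} f x‖ₑ * ‖𝓕⁻ G x‖ₑ ≤
          .ofReal C * sobolevNorm s G * (.ofReal (√(1 + τ ^ 2) ^ (-(n / 2 - s))) *
            mixN n 1 p (indicator {x : Spc n | (1 + τ) / 2 ≤ ‖x‖} f)) := by
  have : Nontrivial (Spc n) := nontrivial_of_finrank_pos (R := ℝ) (by simpa using by omega)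
  obtain ⟨C, hC, hsphere⟩ := exists_lintegral_toSphere_mul_fourierInv_le hn hs hs' hp
  refine ⟨C * 2 ^ (n / 2 - s), by positivity, fun f hf G hG τ hτ => ?_⟩
  set S := {x : Spc n | (1 + τ) / 2 ≤ ‖x‖}
  have hS : Measurable (S.indicator f) :=
    hf.indicator (measurableSet_le measurable_const measurable_norm)
  have hmeas := (continuous_fourierInv hG).measurable
  have hradial : ∀ r ∈ Ioi (0 : ℝ),
      (∫⁻ o, ‖S.indicator f (r • (o : Spc n))‖ₑ * ‖𝓕⁻ G (r • (o : Spc n))‖ₑ ∂(sphM n)) *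
        .ofReal (r ^ (n - 1)) ≤
      .ofReal (C * 2 ^ (n / 2 - s)) * sobolevNorm s G * .ofReal (√(1 + τ ^ 2) ^ (-(n / 2 - s))) *
        (sphN n p (S.indicator f) r * .ofReal (r ^ (n - 1))) := by
    intro r (hr : 0 < r)
    rcases le_or_gt ((1 + τ) / 2) r with hrτ | hrτ
    · refine (hsphere _ hS G hG r hr).trans ?_
      have hweight := ofReal_le_ofReal (rpow_neg_le_two_rpow_mul_sqrt_rpow_neg
        (by linarith : 0 ≤ (n : ℝ) / 2 - s) hτ hrτ)
      refine (mul_le_mul_right (mul_le_mul_left hweight _) _).trans_eq ?_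
      rw [ofReal_mul (by positivity), ofReal_mul hC.le]
      ring
    · have hzero (o : sphere (0 : Spc n) 1) : S.indicator f (r • (o : Spc n)) = 0 :=
        indicator_of_notMem (by simpa [S, norm_smul, abs_of_pos hr] using hrτ) f
      simp [hzero]
  rw [lintegral_eq_lintegral_toSphere volume (by fun_prop), finrank_euclideanSpace_fin,
    ← mul_assoc]
  refine (setLIntegral_mono' measurableSet_Ioi hradial).trans_eq ?_
  have hmeas_sphere : Measurable fun r => sphN n p (S.indicator f) r * .ofReal (r ^ (n - 1)) :=
    (measurable_sphN hS).mul (by fun_prop)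
  rw [lintegral_const_mul _ hmeas_sphere]
  simp [mixN]

end DualEstimates

/-! ### Superpositions of plane waves -/

section PlaneWaves

set_option maxSynthPendingDepth 3

variable {E : Type*} [NormedAddCommGroup E]

/-- The amplitude `H` has integrable moments of all orders for `ν`, so that the superposition
`planeWaves ν H` below is smooth. -/
structure HasMoments [MeasurableSpace E] (ν : Measure (ℝ × E)) (H : ℝ × E → ℂ) : Prop where
  aestronglyMeasurable : AEStronglyMeasurable H ν
  integrable_pow (k : ℕ) : Integrable (fun w => ‖w‖ ^ k * ‖H w‖) ν

theorem HasMoments.integrable [MeasurableSpace E] {ν : Measure (ℝ × E)} {H : ℝ × E → ℂ}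
    (hH : HasMoments ν H) : Integrable H ν :=
  (integrable_norm_iff hH.aestronglyMeasurable).1 (by simpa using hH.integrable_pow 0)

variable [InnerProductSpace ℝ E]

/-- The Euclidean pairing `(τ, ξ), (t, x) ↦ τ t + ⟨ξ, x⟩` of space-time frequencies and space-time
points. Space-time carries the sup norm, so this is not an inner product in Mathlib's sense. -/
noncomputable def spaceTimePairing (E : Type*) [NormedAddCommGroup E]
    [InnerProductSpace ℝ E] :
    (ℝ × E) →L[ℝ] (ℝ × E) →L[ℝ] ℝ :=
  (ContinuousLinearMap.mul ℝ ℝ).bilinearComp (.fst ℝ ℝ E) (.fst ℝ ℝ E) +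
    (isBoundedBilinearMap_inner (𝕜 := ℝ)).toContinuousLinearMap.bilinearComp
      (.snd ℝ ℝ E) (.snd ℝ ℝ E)

theorem spaceTimePairing_apply (w p : ℝ × E) :
    spaceTimePairing E w p = w.1 * p.1 + inner ℝ w.2 p.2 :=
  rfl

theorem continuous_neg_spaceTimePairing :
    Continuous fun q : (ℝ × E) × (ℝ × E) => (-spaceTimePairing E).toLinearMap₁₂ q.1 q.2 :=
  (-spaceTimePairing E).continuous₂

variable [MeasurableSpace E]

/-- The superposition `p ↦ ∫ H(w) exp (2 π i ⟨w, p⟩) dν(w)` of plane waves with space-time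
frequencies `w` distributed according to `ν`. -/
noncomputable def planeWaves (ν : Measure (ℝ × E)) (H : ℝ × E → ℂ) : ℝ × E → ℂ :=
  VectorFourier.fourierIntegral 𝐞 ν (-spaceTimePairing E).toLinearMap₁₂ H

theorem planeWaves_apply (ν : Measure (ℝ × E)) (H : ℝ × E → ℂ) (p : ℝ × E) :
    planeWaves ν H p = ∫ w, 𝐞 (spaceTimePairing E w p) • H w ∂ν := by
  simp [planeWaves, VectorFourier.fourierIntegral]

theorem planeWaves_congr {ν : Measure (ℝ × E)} {H H' : ℝ × E → ℂ} (h : H =ᵐ[ν] H') :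
    planeWaves ν H = planeWaves ν H' := by
  ext p
  simp only [planeWaves_apply]
  exact integral_congr_ae (h.mono fun w hw => by simp only [hw])

variable {ν : Measure (ℝ × E)} {H : ℝ × E → ℂ}

variable [BorelSpace E] [SecondCountableTopology E]

theorem HasMoments.pairing_mul (hH : HasMoments ν H) (v : ℝ × E) :
    HasMoments ν fun w => 2 * π * Complex.I * spaceTimePairing E w v * H w := by
  have hmeas : AEStronglyMeasurable
      (fun w => 2 * π * Complex.I * spaceTimePairing E w v * H w) ν :=
    Continuous.aestronglyMeasurable (by fun_prop) |>.mul hH.aestronglyMeasurable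
  refine ⟨hmeas, fun k => ((hH.integrable_pow (k + 1)).const_mul
    (2 * π * (‖spaceTimePairing E‖ * ‖v‖))).mono' ?_ (.of_forall fun w => ?_)⟩
  · exact Continuous.aestronglyMeasurable (by fun_prop) |>.mul hmeas.norm
  · rw [norm_mul, norm_pow, norm_norm, norm_norm, norm_mul]
    have hv := (spaceTimePairing E).le_opNorm₂ w v
    have : ‖(2 * π * Complex.I * spaceTimePairing E w v : ℂ)‖ =
        2 * π * ‖spaceTimePairing E w v‖ := by
      simp [abs_of_pos pi_pos]
    rw [this]
    calc ‖w‖ ^ k * (2 * π * ‖spaceTimePairing E w v‖ * ‖H w‖)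
        ≤ ‖w‖ ^ k * (2 * π * (‖spaceTimePairing E‖ * ‖w‖ * ‖v‖) * ‖H w‖) := by gcongr
      _ = _ := by ring

theorem contDiff_planeWaves (hH : HasMoments ν H) : ContDiff ℝ ∞ (planeWaves ν H) :=
  VectorFourier.contDiff_fourierIntegral _ fun k _ => hH.integrable_pow k

theorem fderiv_planeWaves (hH : HasMoments ν H) (p v : ℝ × E) :
    fderiv ℝ (planeWaves ν H) p v =
      planeWaves ν (fun w => 2 * π * Complex.I * spaceTimePairing E w v * H w) p := by
  have hH1 : Integrable (fun w => ‖w‖ * ‖H w‖) ν := by simpa using hH.integrable_pow 1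
  have hsmul : Integrable (VectorFourier.fourierSMulRight (-spaceTimePairing E) H) ν := by
    refine (hH1.const_mul (2 * π * ‖-spaceTimePairing E‖)).mono'
      hH.aestronglyMeasurable.fourierSMulRight (.of_forall fun w => ?_)
    exact (VectorFourier.norm_fourierSMulRight_le _ _ _).trans_eq (by ring)
  rw [planeWaves, VectorFourier.fderiv_fourierIntegral _ hH.integrable hH1,
    VectorFourier.fourierIntegral, ContinuousLinearMap.integral_apply
      ((VectorFourier.fourierIntegral_convergent_iff continuous_fourierChar
        continuous_neg_spaceTimePairing p).2 hsmul), planeWaves_apply]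
  refine integral_congr_ae (.of_forall fun w => ?_)
  simp [VectorFourier.fourierSMulRight_apply, Circle.smul_def]
  ring

end PlaneWaves

/-! ### Free waves -/

theorem dirD_clm_planeWaves {n : ℕ} {ν : Measure (STn n)} {H : STn n → ℂ} (hH : HasMoments ν H)
    (L : ℂ →L[ℝ] ℝ) (v : STn n) :
    dirD v (fun p => L (planeWaves ν H p)) = fun p =>
      L (planeWaves ν (fun w => 2 * π * Complex.I * spaceTimePairing _ w v * H w) p) := by
  ext p
  have hd := (contDiff_planeWaves hH).differentiable (by simp) p
  rw [dirD, ← fderiv_planeWaves hH]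
  exact DFunLike.congr_fun (L.hasFDerivAt.comp p hd.hasFDerivAt).fderiv v

theorem boxD_clm_planeWaves {n : ℕ} {ν : Measure (STn n)} {H : STn n → ℂ} (hH : HasMoments ν H)
    (hν : ∀ᵐ w ∂ν, w.1 ^ 2 = ‖w.2‖ ^ 2) (L : ℂ →L[ℝ] ℝ) (p : STn n) :
    boxD (fun p => L (planeWaves ν H p)) p = 0 := by
  have hint {K : STn n → ℂ} (hK : HasMoments ν K) :
      Integrable (fun w => 𝐞 (spaceTimePairing _ w p) • K w) ν := by
    simpa using (VectorFourier.fourierIntegral_convergent_iff continuous_fourierChar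
      continuous_neg_spaceTimePairing p).2 hK.integrable
  simp only [boxD, lapD, dtD, dxD, dirD_clm_planeWaves hH,
    dirD_clm_planeWaves (hH.pairing_mul _), ← map_sum]
  simp only [planeWaves_apply]
  rw [sub_eq_zero, ← integral_finsetSum _ fun j _ => hint ((hH.pairing_mul _).pairing_mul _)]
  congr 1
  refine integral_congr_ae (hν.mono fun w hw => ?_)
  have hnorm : ∑ j, ((w.2 j : ℝ) : ℂ) ^ 2 = (w.1 : ℂ) ^ 2 := by
    rw [EuclideanSpace.real_norm_sq_eq] at hw
    exact_mod_cast hw.symm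
  simp only [spaceTimePairing_apply, EuclideanSpace.inner_single_right, inner_zero_right,
    ← Finset.smul_sum, mul_zero, mul_one, zero_add, add_zero, conj_trivial, one_mul]
  congr 1
  calc _ = (2 * π * Complex.I) ^ 2 * H w * (w.1 : ℂ) ^ 2 := by ring
    _ = _ := by
      rw [← hnorm, Finset.mul_sum]
      exact Finset.sum_congr rfl fun j _ => by ring

theorem fourierChar_add_fourierChar_neg (a : ℝ) :
    (𝐞 a : ℂ) + 𝐞 (-a) = 2 * Complex.cos (2 * π * a) := by
  simp only [Real.fourierChar_apply, Complex.two_cos]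
  push_cast
  ring_nf

theorem fourierChar_sub_fourierChar_neg (a : ℝ) :
    (𝐞 a : ℂ) - 𝐞 (-a) = 2 * Complex.I * Complex.sin (2 * π * a) := by
  rw [mul_right_comm, Complex.two_sin, mul_assoc, Complex.I_mul_I, mul_neg_one, neg_sub]
  simp only [Real.fourierChar_apply]
  push_cast
  ring_nf

section WavePropagator

variable {E : Type*} [NormedAddCommGroup E]

/-- The Fourier multiplier `sin (s √(-Δ)) / √(-Δ)`, in the normalization of `𝓕` in which `√(-Δ)`
has the symbol `2 π ‖ξ‖`. -/
noncomputable def wavePropagator (s : ℝ) (ξ : E) : ℝ :=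
  sin (2 * π * s * ‖ξ‖) / (2 * π * ‖ξ‖)

theorem norm_wavePropagator_smul_le (s : ℝ) (P : E → ℂ) (ξ : E) :
    ‖wavePropagator s ξ • P ξ‖ ≤ ‖ξ‖⁻¹ * ‖P ξ‖ := by
  rw [norm_smul, wavePropagator, norm_div, Real.norm_eq_abs, div_eq_mul_inv, norm_mul, norm_norm,
    norm_of_nonneg two_pi_pos.le, mul_inv, ← mul_assoc]
  gcongr
  refine mul_le_of_le_one_left (by positivity) (mul_le_one₀ (abs_sin_le_one _) (by positivity) ?_)
  exact inv_le_one_of_one_le₀ (by linarith [pi_gt_three])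

theorem norm_cos_smul_le (a : ℝ) (z : ℂ) : ‖cos a • z‖ ≤ ‖z‖ := by
  rw [norm_smul]
  exact mul_le_of_le_one_left (norm_nonneg _) (abs_cos_le_one a)

theorem measurable_wavePropagator [MeasurableSpace E] [BorelSpace E] (s : ℝ) :
    Measurable (wavePropagator s : E → ℝ) := by
  unfold wavePropagator
  fun_prop

end WavePropagator

section FreeWave

variable {E : Type*} [NormedAddCommGroup E] [InnerProductSpace ℝ E] [FiniteDimensional ℝ E]
  [MeasurableSpace E] [BorelSpace E]

theorem integrable_rpow_norm_mul_schwartz [Nontrivial E] (P : SchwartzMap E ℂ) {b : ℝ}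
    (hb : -(finrank ℝ E : ℝ) < b) : Integrable fun ξ => ‖ξ‖ ^ b * ‖P ξ‖ := by
  have hmeas : Measurable fun ξ => ‖ξ‖ ^ b * ‖P ξ‖ := by
    have := P.continuous.measurable
    fun_prop
  rw [← integrableOn_univ, ← union_compl_self (ball (0 : E) 1)]
  refine .union ?_ ?_
  · obtain ⟨C, -, hC⟩ := P.decay 0 0
    have hball : IntegrableOn (fun ξ : E => ‖ξ‖ ^ b) (ball 0 1) := by
      refine ⟨Measurable.aestronglyMeasurable (by fun_prop), ?_⟩
      have hpos (ξ : E) : ‖‖ξ‖ ^ b‖ₑ = .ofReal (‖ξ‖ ^ b) := Real.enorm_of_nonneg (by positivity)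
      simp only [HasFiniteIntegral, hpos, lintegral_ball_rpow zero_le_one hb]
      exact mul_lt_top ofReal_lt_top (measure_lt_top _ _)
    refine (hball.mul_const C).mono' hmeas.aestronglyMeasurable (.of_forall fun ξ => ?_)
    rw [norm_of_nonneg (by positivity)]
    gcongr
    simpa using hC ξ
  · obtain ⟨k, hk⟩ := exists_nat_ge b
    refine (P.integrable_pow_mul volume k).integrableOn.mono' hmeas.aestronglyMeasurable ?_
    filter_upwards [self_mem_ae_restrict measurableSet_ball.compl] with ξ hξ
    rw [norm_of_nonneg (by positivity), ← Real.rpow_natCast]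
    gcongr
    simpa using hξ

/-- The measure on the light cone `τ ^ 2 = ‖ξ‖ ^ 2` whose projection to `ξ` is twice Lebesgue
measure. -/
noncomputable def lightConeMeasure (E : Type*) [NormedAddCommGroup E] [InnerProductSpace ℝ E]
    [FiniteDimensional ℝ E] [MeasurableSpace E] [BorelSpace E] : Measure (ℝ × E) :=
  volume.map (fun ξ => (‖ξ‖, ξ)) + volume.map (fun ξ => (-‖ξ‖, ξ))

theorem ae_lightConeMeasure_iff {p : ℝ × E → Prop} (hp : MeasurableSet {w | p w}) :
    (∀ᵐ w ∂lightConeMeasure E, p w) ↔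
      (∀ᵐ ξ : E, p (‖ξ‖, ξ)) ∧ ∀ᵐ ξ : E, p (-‖ξ‖, ξ) := by
  rw [lightConeMeasure, ae_add_measure_iff, ae_map_iff (by fun_prop) hp,
    ae_map_iff (by fun_prop) hp]

theorem integrable_lightConeMeasure_iff {F : Type*} [NormedAddCommGroup F] {H : ℝ × E → F}
    (hH : StronglyMeasurable H) :
    Integrable H (lightConeMeasure E) ↔
      Integrable (fun ξ => H (‖ξ‖, ξ)) ∧ Integrable fun ξ => H (-‖ξ‖, ξ) := by
  rw [lightConeMeasure, integrable_add_measure,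
    integrable_map_measure hH.aestronglyMeasurable (by fun_prop),
    integrable_map_measure hH.aestronglyMeasurable (by fun_prop)]
  rfl

theorem planeWaves_lightConeMeasure {H : ℝ × E → ℂ} (hH : StronglyMeasurable H)
    (hint : Integrable H (lightConeMeasure E)) (s : ℝ) (x : E) :
    planeWaves (lightConeMeasure E) H (s, x) =
      𝓕⁻ (fun ξ => 𝐞 (s * ‖ξ‖) • H (‖ξ‖, ξ) + 𝐞 (-(s * ‖ξ‖)) • H (-‖ξ‖, ξ)) x := by
  have hmeas : StronglyMeasurable fun w : ℝ × E =>
      𝐞 (spaceTimePairing E w (s, x)) • H w :=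
    (continuous_fourierChar.comp (by fun_prop)).stronglyMeasurable.smul hH
  have hint' : Integrable (fun w => 𝐞 (spaceTimePairing E w (s, x)) • H w)
      (lightConeMeasure E) := by
    simpa using (VectorFourier.fourierIntegral_convergent_iff continuous_fourierChar
      continuous_neg_spaceTimePairing (s, x)).2 hint
  obtain ⟨hp, hm⟩ := (integrable_lightConeMeasure_iff hmeas).1 hint'
  rw [planeWaves_apply, lightConeMeasure, integral_add_measure hint'.left_of_add_measure
    hint'.right_of_add_measure, integral_map (by fun_prop) hmeas.aestronglyMeasurable,
    integral_map (by fun_prop) hmeas.aestronglyMeasurable, ← integral_add hp hm,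
    fourierInv_eq]
  refine integral_congr_ae (.of_forall fun ξ => ?_)
  simp only [spaceTimePairing_apply, smul_add, smul_smul, ← AddChar.map_add_eq_mul]
  ring_nf

/-- The solution of the free wave equation with initial data `(0, 𝓕⁻ P)`. The factor `w.1` in the
denominator vanishes only on a null set. -/
noncomputable def freeWave (P : E → ℂ) : ℝ × E → ℂ :=
  planeWaves (lightConeMeasure E) fun w => P w.2 / (4 * π * Complex.I * w.1)

theorem hasMoments_freeWave (hE : 2 ≤ finrank ℝ E) (P : SchwartzMap E ℂ) :
    HasMoments (lightConeMeasure E) fun w => P w.2 / (4 * π * Complex.I * w.1) := by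
  have := nontrivial_of_finrank_pos (R := ℝ) (show 0 < finrank ℝ E by lia)
  have := P.continuous.measurable
  refine ⟨Measurable.aestronglyMeasurable (by fun_prop), fun k => ?_⟩
  have hE' : (2 : ℝ) ≤ finrank ℝ E := by exact_mod_cast hE
  have hint : Integrable fun ξ => ‖ξ‖ ^ k * ((4 * π)⁻¹ * (‖ξ‖⁻¹ * ‖P ξ‖)) := by
    refine ((integrable_rpow_norm_mul_schwartz P (b := k - 1) (by
      linarith [k.cast_nonneg (α := ℝ)])).const_mul (4 * π)⁻¹).congr ?_
    filter_upwards [Measure.ae_ne volume 0] with ξ hξ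
    rw [Real.rpow_sub (norm_pos_iff.2 hξ), Real.rpow_one, Real.rpow_natCast]
    ring
  rw [integrable_lightConeMeasure_iff (Measurable.stronglyMeasurable (by fun_prop))]
  refine ⟨hint.congr (.of_forall fun ξ => ?_), hint.congr (.of_forall fun ξ => ?_)⟩ <;>
  · simp only [Prod.norm_mk, norm_neg, norm_norm, max_self, norm_div, norm_mul, Complex.norm_real,
      Complex.norm_I, Complex.norm_ofNat, norm_of_nonneg pi_pos.le]
    ring

theorem contDiff_freeWave (hE : 2 ≤ finrank ℝ E) (P : SchwartzMap E ℂ) :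
    ContDiff ℝ ∞ (freeWave P) :=
  contDiff_planeWaves (hasMoments_freeWave hE P)

theorem freeWave_apply (hE : 2 ≤ finrank ℝ E) (P : SchwartzMap E ℂ) (s : ℝ) (x : E) :
    freeWave P (s, x) = 𝓕⁻ (fun ξ => wavePropagator s ξ • P ξ) x := by
  have := P.continuous.measurable
  rw [freeWave, planeWaves_lightConeMeasure (Measurable.stronglyMeasurable (by fun_prop))
    (hasMoments_freeWave hE P).integrable]
  refine congrArg (fun G : E → ℂ => 𝓕⁻ G x) (funext fun ξ => ?_)
  simp only [wavePropagator, Circle.smul_def, smul_eq_mul, Complex.real_smul]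
  calc (𝐞 (s * ‖ξ‖) : ℂ) * (P ξ / (4 * π * Complex.I * ‖ξ‖)) +
        𝐞 (-(s * ‖ξ‖)) * (P ξ / (4 * π * Complex.I * (-‖ξ‖ : ℝ)))
      = ((𝐞 (s * ‖ξ‖) : ℂ) - 𝐞 (-(s * ‖ξ‖))) * (P ξ / (4 * π * Complex.I * ‖ξ‖)) := by
        push_cast
        ring
    _ = (2 * Complex.I) / (2 * Complex.I) *
          (Complex.sin (2 * π * s * ‖ξ‖) / (2 * π * ‖ξ‖) * P ξ) := by
        rw [fourierChar_sub_fourierChar_neg]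
        push_cast
        ring_nf
    _ = _ := by
        rw [div_self (by simp), one_mul]
        push_cast
        rfl

theorem boxD_clm_freeWave {n : ℕ} (hn : 2 ≤ n) (P : SchwartzMap (Spc n) ℂ) (L : ℂ →L[ℝ] ℝ)
    (p : STn n) : boxD (fun p => L (freeWave P p)) p = 0 := by
  refine boxD_clm_planeWaves (hasMoments_freeWave (by simpa) P) ?_ L p
  rw [ae_lightConeMeasure_iff (measurableSet_eq_fun (by fun_prop) (by fun_prop))]
  simp

theorem dtD_clm_freeWave {n : ℕ} (hn : 2 ≤ n) (P : SchwartzMap (Spc n) ℂ) (L : ℂ →L[ℝ] ℝ)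
    (s : ℝ) (x : Spc n) :
    dtD (fun p => L (freeWave P p)) (s, x) =
      L (𝓕⁻ (fun ξ => cos (2 * π * s * ‖ξ‖) • P ξ) x) := by
  have hH := hasMoments_freeWave (by simpa using hn) P
  have : Nontrivial (Spc n) := nontrivial_of_finrank_pos (R := ℝ) (by simp; lia)
  have := P.continuous.measurable
  have hamp : (fun w => 2 * π * Complex.I * spaceTimePairing (Spc n) w (1, 0) *
      (P w.2 / (4 * π * Complex.I * w.1))) =ᵐ[lightConeMeasure (Spc n)] fun w => P w.2 / 2 := by
    rw [Filter.EventuallyEq, ae_lightConeMeasure_iff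
      (measurableSet_eq_fun (by fun_prop) (by fun_prop))]
    have hne : ∀ᵐ ξ : Spc n, (‖ξ‖ : ℂ) ≠ 0 :=
      (Measure.ae_ne volume 0).mono fun ξ hξ => by simpa using hξ
    refine ⟨hne.mono fun ξ hξ => ?_, hne.mono fun ξ hξ => ?_⟩ <;>
    · simp only [spaceTimePairing_apply, mul_one, inner_zero_right, add_zero, Complex.ofReal_neg]
      field_simp
      ring
  unfold freeWave
  rw [dtD, dirD_clm_planeWaves hH, planeWaves_congr hamp]
  beta_reduce
  rw [planeWaves_lightConeMeasure
    (Measurable.stronglyMeasurable (by fun_prop)) ((hH.pairing_mul (1, 0)).integrable.congr hamp)]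
  refine congrArg (fun G : Spc n → ℂ => L (𝓕⁻ G x)) (funext fun ξ => ?_)
  simp only [Circle.smul_def, smul_eq_mul, Complex.real_smul, ← add_mul,
    fourierChar_add_fourierChar_neg]
  push_cast
  ring_nf

theorem integrable_wavePropagator_smul (hE : 2 ≤ finrank ℝ E) (P : SchwartzMap E ℂ) (s : ℝ) :
    Integrable fun ξ => wavePropagator s ξ • P ξ := by
  have := nontrivial_of_finrank_pos (R := ℝ) (show 0 < finrank ℝ E by lia)
  have hE' : (2 : ℝ) ≤ finrank ℝ E := by exact_mod_cast hE
  refine (integrable_rpow_norm_mul_schwartz P (b := -1) (by linarith)).mono'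
    ((measurable_wavePropagator s).smul P.continuous.measurable).aestronglyMeasurable
    (.of_forall fun ξ => ?_)
  simpa only [Real.rpow_neg_one] using norm_wavePropagator_smul_le s P ξ

theorem integrable_cos_smul (P : SchwartzMap E ℂ) (s : ℝ) :
    Integrable fun ξ => cos (2 * π * s * ‖ξ‖) • P ξ :=
  P.integrable.mono (Continuous.aestronglyMeasurable (by fun_prop))
    (.of_forall fun _ => norm_cos_smul_le _ _)

theorem sobolevNorm_wavePropagator_smul_le (a s : ℝ) (P : E → ℂ) :
    sobolevNorm (a + 1) (fun ξ => wavePropagator s ξ • P ξ) ≤ sobolevNorm a P := by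
  refine eLpNorm_mono fun ξ => ?_
  rw [norm_mul, norm_mul, norm_norm, norm_norm, norm_of_nonneg (by positivity),
    norm_of_nonneg (by positivity)]
  rcases eq_or_ne ξ 0 with rfl | hξ
  · simpa [wavePropagator] using (by positivity)
  · have := norm_pos_iff.2 hξ
    calc ‖ξ‖ ^ (a + 1) * ‖wavePropagator s ξ • P ξ‖
        ≤ ‖ξ‖ ^ (a + 1) * (‖ξ‖⁻¹ * ‖P ξ‖) := by
          gcongr
          exact norm_wavePropagator_smul_le s P ξ
      _ = ‖ξ‖ ^ a * ‖P ξ‖ := by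
          rw [Real.rpow_add_one this.ne']
          field_simp

theorem sobolevNorm_cos_smul_le (a : ℝ) (h : E → ℝ) (P : E → ℂ) :
    sobolevNorm a (fun ξ => cos (h ξ) • P ξ) ≤ sobolevNorm a P := by
  refine eLpNorm_mono fun ξ => ?_
  rw [norm_mul, norm_mul, norm_norm, norm_norm]
  gcongr
  exact norm_cos_smul_le _ _

theorem freeWave_zero (hE : 2 ≤ finrank ℝ E) (P : SchwartzMap E ℂ) (x : E) :
    freeWave P (0, x) = 0 := by
  simp [freeWave_apply hE, wavePropagator, fourierInv_eq]

theorem freeWave_neg (hE : 2 ≤ finrank ℝ E) (P : SchwartzMap E ℂ) (s : ℝ) (x : E) :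
    freeWave P (-s, x) = -freeWave P (s, x) := by
  simp [freeWave_apply hE, wavePropagator, fourierInv_eq, integral_neg, neg_div]

end FreeWave

/-! ### Calculus in space-time -/

section DirectionalDerivatives

variable {n : ℕ} {f g : STn n → ℝ} {p : STn n}

theorem contDiff_dirD {k m : WithTop ℕ∞} (hf : ContDiff ℝ k f) (hm : m + 1 ≤ k) (v : STn n) :
    ContDiff ℝ m (dirD v f) :=
  (hf.fderiv_right hm).clm_apply contDiff_const

theorem dirD_dirD_comm (hf : ContDiff ℝ 2 f) (v w p : STn n) :
    dirD v (dirD w f) p = dirD w (dirD v f) p := by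
  have hd : DifferentiableAt ℝ (fderiv ℝ f) p :=
    (hf.fderiv_right (m := 1) (by norm_num)).differentiable (by simp) p
  have hsecond (a b : STn n) : dirD a (dirD b f) p = fderiv ℝ (fderiv ℝ f) p a b := by
    unfold dirD
    rw [fderiv_clm_apply hd (differentiableAt_const b)]
    simp
  rw [hsecond, hsecond]
  exact hf.contDiffAt.isSymmSndFDerivAt (by simp) v w

theorem dirD_mul (hf : DifferentiableAt ℝ f p) (hg : DifferentiableAt ℝ g p) (v : STn n) :
    dirD v (fun q => f q * g q) p = dirD v f p * g p + f p * dirD v g p := by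
  rw [dirD, fderiv_fun_mul hf hg]
  simp only [dirD, add_apply, smul_apply, smul_eq_mul]
  ring

theorem dirD_add (hf : DifferentiableAt ℝ f p) (hg : DifferentiableAt ℝ g p) (v : STn n) :
    dirD v (fun q => f q + g q) p = dirD v f p + dirD v g p := by
  rw [dirD, fderiv_fun_add hf hg]
  rfl

theorem dirD_sub (hf : DifferentiableAt ℝ f p) (hg : DifferentiableAt ℝ g p) (v : STn n) :
    dirD v (fun q => f q - g q) p = dirD v f p - dirD v g p := by
  rw [dirD, fderiv_fun_sub hf hg]
  rfl

theorem dirD_const_mul (hf : DifferentiableAt ℝ f p) (c : ℝ) (v : STn n) :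
    dirD v (fun q => c * f q) p = c * dirD v f p := by
  rw [dirD, fderiv_const_mul hf]
  rfl

theorem dirD_sum {ι : Type*} [Fintype ι] {h : ι → STn n → ℝ}
    (hh : ∀ i, DifferentiableAt ℝ (h i) p) (v : STn n) :
    dirD v (fun q => ∑ i, h i q) p = ∑ i, dirD v (h i) p := by
  rw [dirD, fderiv_fun_sum fun i _ => hh i]
  simp [dirD]

theorem dirD_comp_sub (f : STn n → ℝ) (v a : STn n) :
    dirD v (fun q => f (q - a)) = fun p => dirD v f (p - a) := by
  ext p
  rw [dirD, fderiv_comp_sub]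
  rfl

theorem hasDerivAt_dtD {s : ℝ} {x : Spc n} (hf : DifferentiableAt ℝ f (s, x)) :
    HasDerivAt (fun r => f (r, x)) (dtD f (s, x)) s :=
  hf.hasFDerivAt.comp_hasDerivAt s ((hasDerivAt_id s).prodMk (hasDerivAt_const s x))

theorem hasLineDerivAt_dxD {s : ℝ} {x : Spc n} (hf : DifferentiableAt ℝ f (s, x)) (j : Fin n) :
    HasLineDerivAt ℝ (fun y => f (s, y)) (dxD j f (s, x)) x (EuclideanSpace.single j 1) :=
  (hf.hasFDerivAt.comp x
    ((hasFDerivAt_const s x).prodMk (hasFDerivAt_id x))).hasLineDerivAt _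

theorem dxD_eq_zero_of_eventuallyEq_zero {s : ℝ} {x : Spc n} (hf : DifferentiableAt ℝ f (s, x))
    (h0 : (fun y => f (s, y)) =ᶠ[nhds x] 0) (j : Fin n) : dxD j f (s, x) = 0 := by
  have hzero : HasLineDerivAt ℝ (fun y => f (s, y)) 0 x (EuclideanSpace.single j 1) :=
    (((hasFDerivAt_const (0 : ℝ) x).congr_of_eventuallyEq h0).hasLineDerivAt _)
  exact (hasLineDerivAt_dxD hf j).unique hzero

end DirectionalDerivatives

/-- The supports of the time slices of `f` are bounded, locally uniformly in time. -/
def HasBoundedSlices {n : ℕ} (f : STn n → ℝ) : Prop :=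
  ∀ s₀ : ℝ, ∃ R : ℝ, ∀ s ∈ ball s₀ 1, ∀ x, R < ‖x‖ → f (s, x) = 0

namespace HasBoundedSlices

variable {n : ℕ} {f g : STn n → ℝ}

theorem dirD (hf : HasBoundedSlices f) (v : STn n) : HasBoundedSlices (dirD v f) := by
  intro s₀
  obtain ⟨R, hR⟩ := hf s₀
  refine ⟨R, fun s hs x hx => ?_⟩
  have hopen : IsOpen (ball s₀ 1 ×ˢ {x : Spc n | R < ‖x‖}) :=
    isOpen_ball.prod (isOpen_lt continuous_const continuous_norm)
  have hzero : f =ᶠ[nhds (s, x)] fun _ => 0 := by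
    filter_upwards [hopen.mem_nhds (show (s, x) ∈ _ from ⟨hs, hx⟩)] with p hp
      using hR p.1 hp.1 p.2 hp.2
  simp [_root_.dirD, hzero.fderiv_eq]

theorem mul_left (hg : HasBoundedSlices g) (f : STn n → ℝ) :
    HasBoundedSlices fun p => f p * g p := by
  intro s₀
  obtain ⟨R, hR⟩ := hg s₀
  exact ⟨R, fun s hs x hx => by simp [hR s hs x hx]⟩

theorem sub (hf : HasBoundedSlices f) (hg : HasBoundedSlices g) :
    HasBoundedSlices fun p => f p - g p := by
  intro s₀
  obtain ⟨R, hR⟩ := hf s₀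
  obtain ⟨R', hR'⟩ := hg s₀
  refine ⟨max R R', fun s hs x hx => ?_⟩
  simp [hR s hs x ((le_max_left _ _).trans_lt hx), hR' s hs x ((le_max_right _ _).trans_lt hx)]

theorem comp_sub (hf : HasBoundedSlices f) (t : ℝ) :
    HasBoundedSlices fun p => f (p - (t, 0)) := by
  intro s₀
  obtain ⟨R, hR⟩ := hf (s₀ - t)
  refine ⟨R, fun s hs x hx => ?_⟩
  simpa using hR (s - t) (by simpa [Real.dist_eq] using hs) x hx

theorem hasCompactSupport (hf : HasBoundedSlices f) (s : ℝ) :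
    HasCompactSupport fun x => f (s, x) := by
  obtain ⟨R, hR⟩ := hf s
  exact .intro (isCompact_closedBall 0 R) fun x hx =>
    hR s (mem_ball_self one_pos) x (by simpa using hx)

theorem integrable (hf : HasBoundedSlices f) (hc : Continuous f) (s : ℝ) :
    Integrable fun x => f (s, x) :=
  (hc.comp (.prodMk_right s)).integrable_of_hasCompactSupport (hf.hasCompactSupport s)

theorem hasDerivAt_integral (hs : HasBoundedSlices f) (hf : ContDiff ℝ 1 f) (s : ℝ) :
    HasDerivAt (fun s => ∫ x, f (s, x)) (∫ x, dtD f (s, x)) s := by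
  have hcont : Continuous (dtD f) := (contDiff_dirD (m := 0) hf (by simp) _).continuous
  obtain ⟨R, hR⟩ := hs.dirD (1, 0) s
  obtain ⟨C, hC⟩ := ((isCompact_closedBall s 1).prod
    (isCompact_closedBall (0 : Spc n) R)).exists_bound_of_continuousOn hcont.continuousOn
  refine (hasDerivAt_integral_of_dominated_loc_of_deriv_le (F := fun s x => f (s, x))
    (F' := fun s x => dtD f (s, x)) (bound := (closedBall (0 : Spc n) R).indicator fun _ => C)
    (ball_mem_nhds s one_pos)
    (.of_forall fun s' => (hf.continuous.comp (.prodMk_right s')).aestronglyMeasurable)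
    (hs.integrable hf.continuous s) (hcont.comp (.prodMk_right s)).aestronglyMeasurable
    (.of_forall fun x s' hs' => ?_)
    ((integrable_indicator_iff measurableSet_closedBall).2
      (integrableOn_const measure_closedBall_lt_top.ne))
    (.of_forall fun x s' _ => hasDerivAt_dtD (hf.differentiable (by simp) _))).2
  by_cases hx : x ∈ closedBall 0 R
  · rw [indicator_of_mem hx]
    exact hC (s', x) ⟨ball_subset_closedBall hs', hx⟩
  · rw [indicator_of_notMem hx, dtD, hR s' hs' x (by simpa using hx), norm_zero]

theorem integral_dxD (hs : HasBoundedSlices f) (hf : ContDiff ℝ 1 f) (j : Fin n) (s : ℝ) :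
    ∫ x, dxD j f (s, x) = 0 := by
  have hcont : Continuous (dxD j f) := (contDiff_dirD (m := 0) hf (by simp) _).continuous
  have hint : Integrable fun x => dxD j f (s, x) := (hs.dirD _).integrable hcont s
  simpa using integral_bilinear_hasLineDerivAt_right_eq_neg_left_of_integrable (μ := volume)
    (f := fun _ : Spc n => (1 : ℝ)) (f' := fun _ => 0) (B := ContinuousLinearMap.mul ℝ ℝ)
    (by simp) (by simpa using hint)
    (by simpa using hs.integrable hf.continuous s)
    (fun x _ => by simpa using (hasFDerivAt_const (1 : ℝ) x).hasLineDerivAt _)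
    (fun x _ => hasLineDerivAt_dxD (hf.differentiable (by simp) (s, x)) j)

theorem hasDerivAt_integral_divergence {F : Fin n → STn n → ℝ} (hs : HasBoundedSlices f)
    (hf : ContDiff ℝ 1 f) (hFs : ∀ j, HasBoundedSlices (F j)) (hF : ∀ j, ContDiff ℝ 1 (F j))
    (s : ℝ) :
    HasDerivAt (fun s => ∫ x, f (s, x)) (∫ x, (dtD f (s, x) - ∑ j, dxD j (F j) (s, x))) s := by
  have hint {g : STn n → ℝ} (hgs : HasBoundedSlices g) (hg : ContDiff ℝ 1 g) (v : STn n) :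
      Integrable fun x => _root_.dirD v g (s, x) :=
    (hgs.dirD v).integrable (contDiff_dirD (m := 0) hg (by simp) v).continuous s
  have htime : Integrable fun x => dtD f (s, x) := hint hs hf _
  have hdiv (j : Fin n) : Integrable fun x => dxD j (F j) (s, x) := hint (hFs j) (hF j) _
  rw [integral_sub htime (integrable_finsetSum _ fun j _ => hdiv j),
    integral_finsetSum _ fun j _ => hdiv j]
  simpa only [(hFs _).integral_dxD (hF _), Finset.sum_const_zero, sub_zero]
    using hs.hasDerivAt_integral hf s

end HasBoundedSlices

/-! ### Finite speed of propagation -/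

section Energy

variable {n : ℕ}

/-- Twice the energy density of `w`. -/
noncomputable def energyDensity (w : STn n → ℝ) (p : STn n) : ℝ :=
  dtD w p * dtD w p + ∑ j, dxD j w p * dxD j w p

/-- The flux belonging to `energyDensity w`: for solutions of the wave equation its spatial
divergence is the time derivative of the density. -/
noncomputable def energyFlux (w : STn n → ℝ) (j : Fin n) (p : STn n) : ℝ :=
  2 * (dtD w p * dxD j w p)

theorem energyDensity_nonneg (w : STn n → ℝ) (p : STn n) : 0 ≤ energyDensity w p :=
  add_nonneg (mul_self_nonneg _) (Finset.sum_nonneg fun _ _ => mul_self_nonneg _)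

theorem contDiff_energyDensity {k m : WithTop ℕ∞} {w : STn n → ℝ} (hw : ContDiff ℝ k w)
    (hm : m + 1 ≤ k) : ContDiff ℝ m (energyDensity w) :=
  ((contDiff_dirD hw hm _).mul (contDiff_dirD hw hm _)).add
    (.sum fun _ _ => (contDiff_dirD hw hm _).mul (contDiff_dirD hw hm _))

theorem contDiff_energyFlux {k m : WithTop ℕ∞} {w : STn n → ℝ} (hw : ContDiff ℝ k w)
    (hm : m + 1 ≤ k) (j : Fin n) : ContDiff ℝ m (energyFlux w j) :=
  contDiff_const.mul ((contDiff_dirD hw hm _).mul (contDiff_dirD hw hm _))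

theorem dtD_energyDensity_sub_divergence {w : STn n → ℝ} (hw : ContDiff ℝ 2 w) (p : STn n) :
    dtD (energyDensity w) p - ∑ j, dxD j (energyFlux w j) p = 2 * (dtD w p * boxD w p) := by
  have hd (v : STn n) : DifferentiableAt ℝ (dirD v w) p :=
    (contDiff_dirD (m := 1) hw (by norm_num) v).differentiable (by simp) p
  have htime : dtD (energyDensity w) p =
      2 * (dtD w p * dtD (dtD w) p) + ∑ j, 2 * (dxD j w p * dtD (dxD j w) p) := by
    unfold energyDensity dtD dxD
    rw [dirD_add ((hd _).fun_mul (hd _)) (.fun_sum fun j _ => (hd _).fun_mul (hd _)),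
      dirD_sum fun j => (hd _).fun_mul (hd _), dirD_mul (hd _) (hd _)]
    simp only [dirD_mul (hd _) (hd _)]
    exact congrArg₂ _ (by ring) (Finset.sum_congr rfl fun j _ => by ring)
  have hspace (j : Fin n) : dxD j (energyFlux w j) p =
      2 * (dxD j w p * dtD (dxD j w) p) + 2 * (dtD w p * dxD j (dxD j w) p) := by
    unfold energyFlux dtD dxD
    rw [dirD_const_mul ((hd _).fun_mul (hd _)), dirD_mul (hd _) (hd _),
      dirD_dirD_comm hw _ (1, 0)]
    ring
  simp only [htime, hspace, Finset.sum_add_distrib, boxD, lapD, ← Finset.mul_sum]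
  ring

/-- A smooth function supported in the solid double light cone with vertex `(ρ, x₀)`. -/
noncomputable def lightConeCutoff (ρ : ℝ) (x₀ : Spc n) (p : STn n) : ℝ :=
  expNegInvGlue ((ρ - p.1) ^ 2 - ‖p.2 - x₀‖ ^ 2)

theorem contDiff_lightConeCutoff (ρ : ℝ) (x₀ : Spc n) {k : ℕ∞} :
    ContDiff ℝ k (lightConeCutoff ρ x₀) :=
  expNegInvGlue.contDiff.comp (((contDiff_const.sub contDiff_fst).pow 2).sub
    ((contDiff_snd.sub contDiff_const).norm_sq ℝ))

theorem lightConeCutoff_nonneg (ρ : ℝ) (x₀ : Spc n) (p : STn n) : 0 ≤ lightConeCutoff ρ x₀ p :=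
  expNegInvGlue.nonneg _

theorem lightConeCutoff_eq_zero {ρ : ℝ} {x₀ : Spc n} {p : STn n} (h : |ρ - p.1| ≤ ‖p.2 - x₀‖) :
    lightConeCutoff ρ x₀ p = 0 :=
  expNegInvGlue.zero_of_nonpos (sub_nonpos.2 (sq_le_sq.2 (by rwa [abs_norm])))

theorem lightConeCutoff_self_pos {ρ s : ℝ} (hs : s < ρ) (x₀ : Spc n) :
    0 < lightConeCutoff ρ x₀ (s, x₀) :=
  expNegInvGlue.pos_of_pos (by simpa using pow_pos (sub_pos.2 hs) 2)

theorem hasBoundedSlices_lightConeCutoff (ρ : ℝ) (x₀ : Spc n) :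
    HasBoundedSlices (lightConeCutoff ρ x₀) := by
  refine fun s₀ => ⟨‖x₀‖ + |ρ - s₀| + 1, fun s hs x hx => lightConeCutoff_eq_zero ?_⟩
  rw [mem_ball', Real.dist_eq] at hs
  linarith [abs_sub_le ρ s₀ s, norm_sub_norm_le x x₀]

theorem dirD_lightConeCutoff (ρ : ℝ) (x₀ : Spc n) (v p : STn n) :
    dirD v (lightConeCutoff ρ x₀) p =
      deriv expNegInvGlue ((ρ - p.1) ^ 2 - ‖p.2 - x₀‖ ^ 2) *
        (-2 * (ρ - p.1) * v.1 - 2 * inner ℝ (p.2 - x₀) v.2) := by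
  have hglue := ((expNegInvGlue.contDiff (n := 1)).differentiable (by simp)
    ((ρ - p.1) ^ 2 - ‖p.2 - x₀‖ ^ 2)).hasDerivAt
  have htime := ((hasFDerivAt_const ρ p).fun_sub (hasFDerivAt_fst (𝕜 := ℝ))).pow 2
  have hspace := ((hasFDerivAt_snd (𝕜 := ℝ) (p := p)).fun_sub (hasFDerivAt_const x₀ p)).norm_sq
  have hcutoff : HasFDerivAt (lightConeCutoff ρ x₀) _ p :=
    hglue.comp_hasFDerivAt p (htime.fun_sub hspace)
  rw [dirD, hcutoff.fderiv]
  simp [inner_sub_left]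

theorem deriv_expNegInvGlue_of_nonpos {y : ℝ} (hy : y ≤ 0) : deriv expNegInvGlue y = 0 := by
  refine IsLocalMin.deriv_eq_zero (.of_forall fun z => ?_)
  simpa [expNegInvGlue.zero_of_nonpos hy] using expNegInvGlue.nonneg z

theorem two_mul_mul_sum_mul_le {ι : Type*} [Fintype ι] (a : ℝ) {r : ℝ} (hr : 0 ≤ r)
    (b v : ι → ℝ) (hv : ∑ i, v i ^ 2 ≤ r ^ 2) :
    2 * a * ∑ i, b i * v i ≤ r * (a ^ 2 + ∑ i, b i ^ 2) := by
  have hb : 0 ≤ ∑ i, b i ^ 2 := Finset.sum_nonneg fun i _ => sq_nonneg _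
  have hcs : |∑ i, b i * v i| ≤ √(∑ i, b i ^ 2) * r := by
    refine abs_le_of_sq_le_sq ?_ (by positivity)
    rw [mul_pow, sq_sqrt hb]
    exact (Finset.sum_mul_sq_le_sq_mul_sq _ _ _).trans (mul_le_mul_of_nonneg_left hv hb)
  calc 2 * a * ∑ i, b i * v i ≤ 2 * |a| * |∑ i, b i * v i| := by
        rw [mul_assoc, mul_assoc, ← abs_mul]
        gcongr
        exact le_abs_self _
    _ ≤ 2 * |a| * (√(∑ i, b i ^ 2) * r) := by gcongr
    _ = r * (2 * |a| * √(∑ i, b i ^ 2)) := by ring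
    _ ≤ r * (|a| ^ 2 + √(∑ i, b i ^ 2) ^ 2) := by
        gcongr
        exact two_mul_le_add_sq _ _
    _ = _ := by rw [sq_abs, sq_sqrt hb]

/- The flux never exceeds the density, and inside the backward cone the cutoff decreases in time at
least as fast as it varies in space. -/
theorem energyDensity_mul_dtD_lightConeCutoff_le (w : STn n → ℝ) {ρ : ℝ} (x₀ : Spc n)
    {p : STn n} (hp : p.1 ≤ ρ) :
    energyDensity w p * dtD (lightConeCutoff ρ x₀) p ≤
      ∑ j, energyFlux w j p * dxD j (lightConeCutoff ρ x₀) p := by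
  set y := (ρ - p.1) ^ 2 - ‖p.2 - x₀‖ ^ 2 with hy
  have htime : dtD (lightConeCutoff ρ x₀) p = deriv expNegInvGlue y * (-2 * (ρ - p.1)) := by
    simp [dtD, dirD_lightConeCutoff, hy]
  have hspace (j : Fin n) :
      dxD j (lightConeCutoff ρ x₀) p = deriv expNegInvGlue y * (-2 * (p.2 - x₀) j) := by
    simp [dxD, dirD_lightConeCutoff, hy, EuclideanSpace.inner_single_right]
  have hsum : ∑ j, energyFlux w j p * dxD j (lightConeCutoff ρ x₀) p =
      deriv expNegInvGlue y * (-2 * (2 * dtD w p * ∑ j, dxD j w p * (p.2 - x₀) j)) := by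
    simp only [Finset.mul_sum, hspace, energyFlux]
    exact Finset.sum_congr rfl fun j _ => by ring
  rw [htime, hsum]
  rcases le_or_gt y 0 with hy0 | hy0
  · simp [deriv_expNegInvGlue_of_nonpos hy0]
  · have hnorm : ∑ j, (p.2 - x₀) j ^ 2 ≤ (ρ - p.1) ^ 2 := by
      rw [← EuclideanSpace.real_norm_sq_eq]
      linarith
    have hcone := two_mul_mul_sum_mul_le (dtD w p) (sub_nonneg.2 hp) (fun j => dxD j w p) _ hnorm
    have hglue : 0 ≤ deriv expNegInvGlue y := expNegInvGlue.monotone.deriv_nonneg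
    simp only [sq] at hcone
    rw [energyDensity, mul_left_comm]
    exact mul_le_mul_of_nonneg_left (by linarith) hglue

theorem dtD_energyDensity_mul_lightConeCutoff_le {w : STn n → ℝ} (hw : ContDiff ℝ 2 w)
    (hbox : ∀ p, boxD w p = 0) {ρ : ℝ} (x₀ : Spc n) {p : STn n} (hp : p.1 ≤ ρ) :
    dtD (fun p => energyDensity w p * lightConeCutoff ρ x₀ p) p ≤
      ∑ j, dxD j (fun p => energyFlux w j p * lightConeCutoff ρ x₀ p) p := by
  have hχ : DifferentiableAt ℝ (lightConeCutoff ρ x₀) p :=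
    (contDiff_lightConeCutoff ρ x₀ (k := 1)).differentiable (by simp) p
  have hdens : DifferentiableAt ℝ (energyDensity w) p :=
    (contDiff_energyDensity (m := 1) hw (by norm_num)).differentiable (by simp) p
  have hflux (j : Fin n) : DifferentiableAt ℝ (energyFlux w j) p :=
    (contDiff_energyFlux (m := 1) hw (by norm_num) j).differentiable (by simp) p
  have hbalance := dtD_energyDensity_sub_divergence hw p
  have hcone := energyDensity_mul_dtD_lightConeCutoff_le w x₀ hp
  rw [hbox, mul_zero, mul_zero, sub_eq_zero] at hbalance
  unfold dtD dxD at hbalance hcone ⊢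
  simp only [dirD_mul hdens hχ, dirD_mul (hflux _) hχ, Finset.sum_add_distrib,
    ← Finset.sum_mul, hbalance]
  linarith

theorem antitoneOn_integral_energyDensity_mul_lightConeCutoff {w : STn n → ℝ}
    (hw : ContDiff ℝ 2 w) (hbox : ∀ p, boxD w p = 0) (ρ : ℝ) (x₀ : Spc n) :
    AntitoneOn (fun s => ∫ x, energyDensity w (s, x) * lightConeCutoff ρ x₀ (s, x)) (Iic ρ) := by
  have hχ := contDiff_lightConeCutoff ρ x₀ (k := 1)
  have hsupp := hasBoundedSlices_lightConeCutoff ρ x₀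
  have hder := HasBoundedSlices.hasDerivAt_integral_divergence
    (hsupp.mul_left (energyDensity w))
    ((contDiff_energyDensity hw (by norm_num)).mul hχ)
    (fun j => hsupp.mul_left (energyFlux w j))
    (fun j => (contDiff_energyFlux hw (by norm_num) j).mul hχ)
  refine antitoneOn_of_deriv_nonpos (convex_Iic ρ)
    (fun s _ => (hder s).continuousAt.continuousWithinAt)
    (fun s _ => (hder s).differentiableAt.differentiableWithinAt) fun s hs => ?_
  rw [(hder s).deriv]
  exact integral_nonpos fun x => sub_nonpos.2
    (dtD_energyDensity_mul_lightConeCutoff_le hw hbox x₀ (p := (s, x)) (interior_subset hs :))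

theorem dtD_eq_zero_of_domainOfDependence {w : STn n → ℝ} (hw : ContDiff ℝ 2 w)
    (hbox : ∀ p, boxD w p = 0) {ρ : ℝ} {x₀ : Spc n} (h0 : ∀ x ∈ ball x₀ ρ, w (0, x) = 0)
    (h1 : ∀ x ∈ ball x₀ ρ, dtD w (0, x) = 0) {s : ℝ} (hs : 0 ≤ s) (hsρ : s < ρ) :
    dtD w (s, x₀) = 0 := by
  have hdata (x : Spc n) : energyDensity w (0, x) * lightConeCutoff ρ x₀ (0, x) = 0 := by
    by_cases hx : x ∈ ball x₀ ρ
    · have hj (j : Fin n) : dxD j w (0, x) = 0 :=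
        dxD_eq_zero_of_eventuallyEq_zero (hw.differentiable (by simp) _)
          (Filter.eventually_of_mem (isOpen_ball.mem_nhds hx) h0) j
      simp [energyDensity, h1 x hx, hj]
    · rw [lightConeCutoff_eq_zero, mul_zero]
      simpa [abs_of_pos (hs.trans_lt hsρ), dist_eq_norm] using hx
  have henergy := antitoneOn_integral_energyDensity_mul_lightConeCutoff hw hbox ρ x₀
    (hs.trans hsρ.le) hsρ.le hs
  simp only [hdata, integral_zero] at henergy
  by_contra hne
  refine henergy.not_gt (Continuous.integral_pos_of_hasCompactSupport_nonneg_nonzero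
    (x := x₀) ?_ ?_ (fun x => mul_nonneg (energyDensity_nonneg _ _) (lightConeCutoff_nonneg ..))
    (mul_pos ?_ (lightConeCutoff_self_pos hsρ x₀)).ne')
  · exact ((contDiff_energyDensity (m := 0) hw (by simp)).mul
      (contDiff_lightConeCutoff ρ x₀)).continuous.comp (.prodMk_right s)
  · exact ((hasBoundedSlices_lightConeCutoff ρ x₀).mul_left _).hasCompactSupport s
  · exact add_pos_of_pos_of_nonneg (mul_self_pos.2 hne)
      (Finset.sum_nonneg fun _ _ => mul_self_nonneg _)

theorem eq_zero_of_domainOfDependence {w : STn n → ℝ} (hw : ContDiff ℝ 2 w)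
    (hbox : ∀ p, boxD w p = 0) {ρ : ℝ} {x₀ : Spc n} (h0 : ∀ x ∈ ball x₀ ρ, w (0, x) = 0)
    (h1 : ∀ x ∈ ball x₀ ρ, dtD w (0, x) = 0) {s : ℝ} (hs : 0 ≤ s) (hsρ : s < ρ) :
    w (s, x₀) = 0 := by
  rw [← h0 x₀ (mem_ball_self (hs.trans_lt hsρ))]
  refine constant_of_has_deriv_right_zero (f := fun r => w (r, x₀))
    (hw.continuous.comp (.prodMk_left x₀)).continuousOn (fun r hr => ?_) s
    (right_mem_Icc.2 hs)
  rw [← dtD_eq_zero_of_domainOfDependence hw hbox h0 h1 hr.1 (hr.2.trans hsρ)]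
  exact (hasDerivAt_dtD (hw.differentiable (by simp) _)).hasDerivWithinAt

end Energy

section FreeWaveSupport

variable {n : ℕ} (hn : 2 ≤ n) (L : ℂ →L[ℝ] ℝ) (P : SchwartzMap (Spc n) ℂ)

include hn

theorem contDiff_clm_freeWave : ContDiff ℝ ∞ fun p => L (freeWave P p) :=
  L.contDiff.comp (contDiff_freeWave (by simpa) P)

theorem clm_freeWave_eq_zero {R : ℝ} (hR : ∀ x, R < ‖x‖ → 𝓕⁻ P x = 0) {s : ℝ} {x : Spc n}
    (hx : R + |s| < ‖x‖) : L (freeWave P (s, x)) = 0 := by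
  wlog hs : 0 ≤ s generalizing s
  · have hneg := this (s := -s) (by rwa [abs_neg]) (by linarith)
    rwa [freeWave_neg (by simpa), map_neg, neg_eq_zero] at hneg
  rw [abs_of_nonneg hs] at hx
  refine eq_zero_of_domainOfDependence (contDiff_infty.1 (contDiff_clm_freeWave hn L P) 2)
    (boxD_clm_freeWave hn P L) (ρ := ‖x‖ - R) (fun y _ => by simp [freeWave_zero, hn])
    (fun y hy => ?_) hs (by linarith)
  have hy' : R < ‖y‖ := by
    rw [mem_ball', dist_eq_norm] at hy
    linarith [norm_sub_norm_le x y]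
  simp [dtD_clm_freeWave hn, hR y hy', ← SchwartzMap.fourierInv_coe]

theorem hasBoundedSlices_clm_freeWave (hP : HasCompactSupport fun x => 𝓕⁻ P x) :
    HasBoundedSlices fun p => L (freeWave P p) := by
  obtain ⟨R, hR⟩ := hP.isCompact.isBounded.subset_closedBall 0
  refine fun s₀ => ⟨R + (|s₀| + 1), fun s hs x hx => clm_freeWave_eq_zero hn L P (R := R) ?_ ?_⟩
  · exact fun y hy => image_eq_zero_of_notMem_tsupport fun hmem => by
      simpa using hy.trans_le (mem_closedBall_zero_iff.1 (hR hmem))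
  · rw [mem_ball, Real.dist_eq] at hs
    linarith [abs_sub_abs_le_abs_sub s s₀]

end FreeWaveSupport

/-! ### Green's identity -/

section Green

variable {n : ℕ}

/-- The Wronskian of `u` and `v` in the direction `a`. -/
noncomputable def wronskian (a : STn n) (u v : STn n → ℝ) (p : STn n) : ℝ :=
  dirD a u p * v p - u p * dirD a v p

theorem contDiff_wronskian {k m : WithTop ℕ∞} {u v : STn n → ℝ} (hu : ContDiff ℝ k u)
    (hv : ContDiff ℝ k v) (hm : m + 1 ≤ k) (a : STn n) : ContDiff ℝ m (wronskian a u v) :=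
  have hmk : m ≤ k := le_self_add.trans hm
  ((contDiff_dirD hu hm a).mul (hv.of_le hmk)).sub ((hu.of_le hmk).mul (contDiff_dirD hv hm a))

theorem HasBoundedSlices.wronskian {v : STn n → ℝ} (hv : HasBoundedSlices v) (a : STn n)
    (u : STn n → ℝ) : HasBoundedSlices (wronskian a u v) :=
  (hv.mul_left _).sub ((hv.dirD a).mul_left u)

theorem dirD_wronskian {u v : STn n → ℝ} (hu : ContDiff ℝ 2 u) (hv : ContDiff ℝ 2 v)
    (a p : STn n) :
    dirD a (wronskian a u v) p = dirD a (dirD a u) p * v p - u p * dirD a (dirD a v) p := by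
  have hd {f : STn n → ℝ} (hf : ContDiff ℝ 2 f) : DifferentiableAt ℝ f p :=
    hf.differentiable (by simp) p
  have hd' {f : STn n → ℝ} (hf : ContDiff ℝ 2 f) : DifferentiableAt ℝ (dirD a f) p :=
    (contDiff_dirD (m := 1) hf (by norm_num) a).differentiable (by simp) p
  unfold wronskian
  rw [dirD_sub ((hd' hu).fun_mul (hd hv)) ((hd hu).fun_mul (hd' hv)), dirD_mul (hd' hu) (hd hv),
    dirD_mul (hd hu) (hd' hv)]
  ring

theorem dtD_wronskian_sub_divergence {u v : STn n → ℝ} (hu : ContDiff ℝ 2 u)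
    (hv : ContDiff ℝ 2 v) (p : STn n) :
    dtD (wronskian (1, 0) u v) p -
        ∑ j, dxD j (wronskian (0, EuclideanSpace.single j 1) u v) p =
      boxD u p * v p - u p * boxD v p := by
  simp only [boxD, lapD, dtD, dxD, dirD_wronskian hu hv, Finset.sum_sub_distrib,
    ← Finset.sum_mul, ← Finset.mul_sum]
  ring

theorem hasDerivAt_integral_wronskian {u v : STn n → ℝ} (hu : ContDiff ℝ 2 u)
    (hv : ContDiff ℝ 2 v) (hsupp : HasBoundedSlices v) (hbox : ∀ p, boxD v p = 0) (s : ℝ) :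
    HasDerivAt (fun s => ∫ x, wronskian (1, 0) u v (s, x)) (∫ x, boxD u (s, x) * v (s, x)) s := by
  have hW (a : STn n) : ContDiff ℝ 1 (wronskian a u v) :=
    contDiff_wronskian hu hv (by norm_num) a
  convert (hsupp.wronskian (1, 0) u).hasDerivAt_integral_divergence (hW _)
    (fun j => hsupp.wronskian (0, EuclideanSpace.single j 1) u) (fun j => hW _) s using 3 with x
  simp [dtD_wronskian_sub_divergence hu hv, hbox]

theorem contDiff_boxD {u : STn n → ℝ} (hu : ContDiff ℝ 3 u) : ContDiff ℝ 1 (boxD u) := by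
  have hsecond (a : STn n) : ContDiff ℝ 1 (dirD a (dirD a u)) :=
    contDiff_dirD (contDiff_dirD (m := 2) hu (by norm_num) a) (by norm_num) a
  exact (hsecond _).sub (.sum fun j _ => hsecond _)

theorem integral_integral_boxD_mul {u v : STn n → ℝ} (hu : ContDiff ℝ 3 u) (hv : ContDiff ℝ 2 v)
    (hsupp : HasBoundedSlices v) (hbox : ∀ p, boxD v p = 0) (s t : ℝ) :
    ∫ τ in s..t, ∫ x, boxD u (τ, x) * v (τ, x) =
      (∫ x, wronskian (1, 0) u v (t, x)) - ∫ x, wronskian (1, 0) u v (s, x) := by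
  have hcont : Continuous fun τ => ∫ x, boxD u (τ, x) * v (τ, x) :=
    continuous_iff_continuousAt.2 fun τ => ((hsupp.mul_left (boxD u)).hasDerivAt_integral
      ((contDiff_boxD hu).mul (hv.of_le (by norm_num))) τ).continuousAt
  exact intervalIntegral.integral_eq_sub_of_hasDerivAt
    (fun τ _ => hasDerivAt_integral_wronskian (hu.of_le (by norm_num)) hv hsupp hbox τ)
    (hcont.intervalIntegrable _ _)

theorem integral_wronskian {u v : STn n → ℝ} (hu : ContDiff ℝ 1 u) (hv : ContDiff ℝ 1 v)
    (hsupp : HasBoundedSlices v) (s : ℝ) :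
    ∫ x, wronskian (1, 0) u v (s, x) =
      (∫ x, dtD u (s, x) * v (s, x)) - ∫ x, u (s, x) * dtD v (s, x) :=
  integral_sub
    ((hsupp.mul_left _).integrable ((contDiff_dirD (m := 0) hu (by simp) _).continuous.mul
      hv.continuous) s)
    (((hsupp.dirD _).mul_left u).integrable (hu.continuous.mul
      (contDiff_dirD (m := 0) hv (by simp) _).continuous) s)

theorem boxD_comp_sub (f : STn n → ℝ) (a p : STn n) :
    boxD (fun q => f (q - a)) p = boxD f (p - a) := by
  simp only [boxD, lapD, dtD, dxD, dirD_comp_sub]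

/-- Green's identity for `u` and the free wave with data `(0, 𝓕⁻ P)` at time `t`. -/
theorem integral_mul_clm_fourierInv (hn : 2 ≤ n) (L : ℂ →L[ℝ] ℝ) (P : SchwartzMap (Spc n) ℂ)
    (hP : HasCompactSupport fun x => 𝓕⁻ P x) {u : STn n → ℝ} (hu : ContDiff ℝ 3 u) (t : ℝ) :
    ∫ x, u (t, x) * L (𝓕⁻ P x) =
      (∫ x, u (0, x) * L (𝓕⁻ (fun ξ => cos (2 * π * -t * ‖ξ‖) • P ξ) x)) -
      (∫ x, dtD u (0, x) * L (freeWave P (-t, x))) -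
      ∫ τ in (0 : ℝ)..t, ∫ x, boxD u (τ, x) * L (freeWave P (τ - t, x)) := by
  set v : STn n → ℝ := fun p => L (freeWave P (p - (t, 0))) with hv
  have hv2 : ContDiff ℝ 2 v :=
    (contDiff_infty.1 (contDiff_clm_freeWave hn L P) 2).comp (contDiff_id.sub contDiff_const)
  have hsupp : HasBoundedSlices v := (hasBoundedSlices_clm_freeWave hn L P hP).comp_sub _
  have hbox (p : STn n) : boxD v p = 0 := by
    exact (boxD_comp_sub _ _ p).trans (boxD_clm_freeWave hn P L _)
  have hdt (s : ℝ) (x : Spc n) : dtD v (s, x) =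
      L (𝓕⁻ (fun ξ => cos (2 * π * (s - t) * ‖ξ‖) • P ξ) x) := by
    have hshift : dtD v (s, x) = dtD (fun p => L (freeWave P p)) (s - t, x) := by
      simpa [dtD, hv] using
        congr_fun (dirD_comp_sub (fun p => L (freeWave P p)) (1, 0) (t, 0)) (s, x)
    rw [hshift, dtD_clm_freeWave hn]
  have hgreen := integral_integral_boxD_mul hu hv2 hsupp hbox 0 t
  have hu1 : ContDiff ℝ 1 u := hu.of_le (by norm_num)
  have hv1 : ContDiff ℝ 1 v := hv2.of_le (by norm_num)
  rw [integral_wronskian hu1 hv1 hsupp, integral_wronskian hu1 hv1 hsupp] at hgreen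
  simp only [hdt] at hgreen
  simp only [hv, Prod.mk_sub_mk, sub_zero, sub_self, zero_sub, mul_zero, zero_mul, cos_zero,
    one_smul, freeWave_zero (E := Spc n) (by simpa), map_zero, integral_zero] at hgreen
  rw [hgreen, SchwartzMap.fourierInv_coe]
  ring

end Green

section Duality

variable {E : Type*} [NormedAddCommGroup E] [InnerProductSpace ℝ E] [FiniteDimensional ℝ E]
  [MeasurableSpace E] [BorelSpace E] {f : E → ℝ} {G : E → ℂ}

theorem norm_fourierInv_le (G : E → ℂ) (x : E) : ‖𝓕⁻ G x‖ ≤ ∫ ξ, ‖G ξ‖ := by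
  rw [fourierInv_eq]
  exact (norm_integral_le_integral_norm _).trans_eq (by simp)

theorem integrable_smul_fourierInv (hf : Integrable f) (hG : Integrable G) :
    Integrable fun x => f x • 𝓕⁻ G x :=
  hf.smul_bdd (∫ ξ, ‖G ξ‖) (continuous_fourierInv hG).aestronglyMeasurable
    (.of_forall (norm_fourierInv_le G))

theorem integral_mul_clm_fourierInv_eq_clm_integral (L : ℂ →L[ℝ] ℝ) (hf : Integrable f)
    (hG : Integrable G) : ∫ x, f x * L (𝓕⁻ G x) = L (∫ x, f x • 𝓕⁻ G x) := by
  rw [← L.integral_comp_comm (integrable_smul_fourierInv hf hG)]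
  simp only [map_smul, smul_eq_mul]

end Duality

theorem enorm_integral_smul_fourierInv_le {n : ℕ} (hn : 2 ≤ n) (P : SchwartzMap (Spc n) ℂ)
    (hP : HasCompactSupport fun x => 𝓕⁻ P x) {u : STn n → ℝ} (hu : ContDiff ℝ 3 u)
    {t : ℝ} (ht : 0 ≤ t) (hint : Integrable fun x => u (t, x))
    (hint_zero : Integrable fun x => u (0, x)) (hint_deriv : Integrable fun x => dtD u (0, x)) :
    ‖∫ x, u (t, x) • 𝓕⁻ P x‖ₑ ≤
      ‖∫ x, u (0, x) • 𝓕⁻ (fun ξ => cos (2 * π * -t * ‖ξ‖) • P ξ) x‖ₑ +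
      ‖∫ x, dtD u (0, x) • 𝓕⁻ (fun ξ => wavePropagator (-t) ξ • P ξ) x‖ₑ +
      ∫⁻ τ in Ioc 0 t, ∫⁻ x, ‖boxD u (τ, x)‖ₑ *
        ‖𝓕⁻ (fun ξ => wavePropagator (τ - t) ξ • P ξ) x‖ₑ := by
  obtain ⟨L, hL, hLz⟩ := exists_dual_vector'' ℝ (∫ x, u (t, x) • 𝓕⁻ P x)
  have hle (z : ℂ) : ‖L z‖ₑ ≤ ‖z‖ₑ :=
    enorm_le_iff_norm_le.2 (L.le_of_opNorm_le_of_le hL le_rfl |>.trans_eq (one_mul _))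
  have hgreen := integral_mul_clm_fourierInv hn L P hP hu t
  simp only [freeWave_apply (E := Spc n) (by simpa), SchwartzMap.fourierInv_coe,
    RCLike.ofReal_real_eq_id, id] at hgreen hLz ⊢
  rw [integral_mul_clm_fourierInv_eq_clm_integral L hint P.integrable, hLz,
    integral_mul_clm_fourierInv_eq_clm_integral L hint_zero (integrable_cos_smul P _),
    integral_mul_clm_fourierInv_eq_clm_integral L hint_deriv
      (integrable_wavePropagator_smul (by simpa) P _)] at hgreen
  rw [← enorm_norm (∫ x, u (t, x) • 𝓕⁻ (P : Spc n → ℂ) x), hgreen]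
  refine enorm_sub_le.trans (add_le_add (enorm_sub_le.trans (add_le_add (hle _) (hle _))) ?_)
  rw [intervalIntegral.integral_of_le ht]
  refine (enorm_integral_le_lintegral_enorm _).trans (lintegral_mono fun τ => ?_)
  refine (enorm_integral_le_lintegral_enorm _).trans (lintegral_mono fun x => ?_)
  rw [enorm_mul]
  gcongr
  exact hle _

/-! ### Duality for homogeneous Sobolev norms -/

section SobolevDuality

variable {E : Type*} [NormedAddCommGroup E] [InnerProductSpace ℝ E] [FiniteDimensional ℝ E]
  [MeasurableSpace E] [BorelSpace E]

theorem sobolevNorm_fourierInv (s : ℝ) (f : E → ℂ) :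
    sobolevNorm s (𝓕⁻ f) = sobolevNorm s (𝓕 f) := by
  have h := (measurableEmbedding_neg (α := E)).eLpNorm_map_measure (μ := volume) (p := 2)
    (g := fun ξ => ‖ξ‖ ^ s * ‖𝓕 f ξ‖)
  rw [(Measure.measurePreserving_neg _).map_eq] at h
  simpa [sobolevNorm, Function.comp_def, Real.fourierInv_eq_fourier_neg] using h.symm

theorem lintegral_enorm_mul_le_sobolevNorm_mul [Nontrivial E] (s : ℝ) {F G : E → ℂ}
    (hF : AEMeasurable F) (hG : AEMeasurable G) :
    ∫⁻ ξ, ‖F ξ‖ₑ * ‖G ξ‖ₑ ≤ sobolevNorm (-s) F * sobolevNorm s G := by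
  have hweight : ∫⁻ ξ, ‖F ξ‖ₑ * ‖G ξ‖ₑ =
      ∫⁻ ξ, (‖F ξ‖ₑ * .ofReal (‖ξ‖ ^ (-s))) * (‖G ξ‖ₑ * .ofReal (‖ξ‖ ^ s)) := by
    refine lintegral_congr_ae ?_
    filter_upwards [Measure.ae_ne volume (0 : E)] with ξ hξ
    have hcancel : ENNReal.ofReal (‖ξ‖ ^ (-s)) * .ofReal (‖ξ‖ ^ s) = 1 := by
      rw [← ofReal_mul (by positivity), ← Real.rpow_add (norm_pos_iff.2 hξ)]
      simp
    rw [mul_mul_mul_comm, hcancel, mul_one]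
  rw [hweight, ← ENNReal.pow_le_pow_left_iff two_ne_zero, mul_pow, sobolevNorm_sq, sobolevNorm_sq]
  exact lintegral_mul_sq_le (by fun_prop) (by fun_prop)

theorem enorm_integral_mul_fourierInv_le [Nontrivial E] (s : ℝ) {f G : E → ℂ}
    (hf : Integrable f) (hG : Integrable G) :
    ‖∫ x, f x * 𝓕⁻ G x‖ₑ ≤ sobolevNorm (-s) G * sobolevNorm s (𝓕 f) := by
  rw [← integral_fourierExtension_mul hf hG, ← sobolevNorm_fourierInv]
  refine (enorm_integral_le_lintegral_enorm _).trans ?_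
  simp only [enorm_mul, mul_comm ‖fourierExtension volume f _‖ₑ]
  exact lintegral_enorm_mul_le_sobolevNorm_mul s hG.aemeasurable
    (continuous_fourierInv hf).aemeasurable

theorem ae_eq_zero_of_fourierInv_eq_zero {G : E → ℂ} (hG : Integrable G)
    (h : ∀ x, 𝓕⁻ G x = 0) : G =ᵐ[volume] 0 := by
  refine ae_eq_zero_of_integral_contDiff_smul_eq_zero hG.locallyIntegrable fun g hg hgc => ?_
  have hgc' : HasCompactSupport fun x => (g x : ℂ) := hgc.comp_left (g := Complex.ofReal) rfl
  set θ : SchwartzMap E ℂ := hgc'.toSchwartzMap (Complex.ofRealCLM.contDiff.comp hg)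
  have hparseval := integral_fourierExtension_mul (μ := volume) (h := ⇑(𝓕 θ : SchwartzMap E ℂ))
    (𝓕 θ).integrable hG
  simp only [h, mul_zero, integral_zero] at hparseval
  rw [← hparseval]
  refine integral_congr_ae (.of_forall fun ξ => ?_)
  have hinv : fourierExtension volume ⇑(𝓕 θ : SchwartzMap E ℂ) ξ = θ ξ :=
    (congr_fun (SchwartzMap.fourierInv_coe (𝓕 θ)) ξ).symm.trans
      (DFunLike.congr_fun (FourierTransform.fourierInv_fourier_eq θ) ξ)
  simp only [hinv]
  rfl

variable (E) in
/-- The Fourier transforms of compactly supported test functions. They replace Schwartz functions in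
duality arguments because the free waves they generate have finite speed of propagation. -/
def fourierTestFunctions : Submodule ℂ (SchwartzMap E ℂ) where
  carrier := {P | HasCompactSupport fun x => 𝓕⁻ P x}
  add_mem' hP hQ := by
    simpa [FourierTransform.fourierInv_add] using! HasCompactSupport.add hP hQ
  zero_mem' := by
    simpa [FourierTransform.fourierInv_zero] using! HasCompactSupport.zero
  smul_mem' c P hP := by
    simpa [FourierTransform.fourierInv_smul] using! HasCompactSupport.smul_left (f := fun _ => c) hP

theorem fourier_mem_fourierTestFunctions {θ : SchwartzMap E ℂ} (hθ : HasCompactSupport θ) :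
    𝓕 θ ∈ fourierTestFunctions E := by
  simpa [fourierTestFunctions] using! hθ

theorem exists_fourierTestFunctions_fourierChar_smul {P : SchwartzMap E ℂ}
    (hP : P ∈ fourierTestFunctions E) (x : E) :
    ∃ Q ∈ fourierTestFunctions E, ∀ ξ, Q ξ = 𝐞 (inner ℝ ξ x) • P ξ := by
  set θ : SchwartzMap E ℂ := 𝓕⁻ P
  refine ⟨𝓕 (θ.compSubConstCLM ℂ (-x)), fourier_mem_fourierTestFunctions ?_, fun ξ => ?_⟩
  · exact hP.comp_homeomorph (Homeomorph.subRight (-x))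
  · have htrans := congr_fun (VectorFourier.fourierIntegral_comp_add_right 𝐞 volume (innerₗ E)
      θ x) ξ
    have hP' : VectorFourier.fourierIntegral 𝐞 volume (innerₗ E) θ ξ = P ξ := by
      exact (congr_fun (SchwartzMap.fourier_coe θ) ξ).symm.trans
        (DFunLike.congr_fun (FourierTransform.fourier_fourierInv_eq P) ξ)
    rw [SchwartzMap.fourier_coe, ← hP', real_inner_comm]
    change VectorFourier.fourierIntegral 𝐞 volume (innerₗ E) (fun y => θ (y - -x)) ξ = _
    simpa [Function.comp_def] using! htrans

theorem comp_sub_mem_fourierTestFunctions {P : SchwartzMap E ℂ}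
    (hP : P ∈ fourierTestFunctions E) (ζ : E) :
    P.compSubConstCLM ℂ ζ ∈ fourierTestFunctions E := by
  have hmod (x : E) : 𝓕⁻ (P.compSubConstCLM ℂ ζ) x = 𝐞 (inner ℝ ζ x) • 𝓕⁻ P x := by
    rw [SchwartzMap.fourierInv_coe, SchwartzMap.fourierInv_coe]
    have htrans := congr_fun (VectorFourier.fourierIntegral_comp_add_right 𝐞 volume (-innerₗ E)
      P (-ζ)) x
    simpa [Function.comp_def, ← sub_eq_add_neg] using! htrans
  refine HasCompactSupport.mono hP fun x hx hzero => hx ?_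
  exact (hmod x).trans (by rw [show 𝓕⁻ P x = 0 from hzero, smul_zero])

variable (E) in
theorem exists_fourierTestFunctions_apply_zero_ne_zero :
    ∃ P ∈ fourierTestFunctions E, P 0 ≠ 0 := by
  let bump : ContDiffBump (0 : E) := default
  have hsupp : HasCompactSupport fun x => (bump x : ℂ) :=
    bump.hasCompactSupport.comp_left (g := Complex.ofReal) rfl
  refine ⟨𝓕 (hsupp.toSchwartzMap (Complex.ofRealCLM.contDiff.comp bump.contDiff)),
    fourier_mem_fourierTestFunctions hsupp, ?_⟩
  have hval : 𝓕 (fun x => (bump x : ℂ)) 0 = (∫ x, bump x : ℝ) := by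
    simp [Real.fourier_eq, integral_complex_ofReal]
  rw [SchwartzMap.fourier_coe]
  exact hval.trans_ne (Complex.ofReal_ne_zero.2 (bump.integral_pos (μ := volume)).ne')

/- Modulating `P` shows that the inverse Fourier transform of `m * P` vanishes, hence `m * P = 0`.
The translates of one `P` with `P 0 ≠ 0` leave no frequency uncovered. -/
theorem ae_eq_zero_of_forall_integral_mul_eq_zero {m : E → ℂ}
    (hm : ∀ P : SchwartzMap E ℂ, Integrable fun ξ => m ξ * P ξ)
    (h : ∀ P ∈ fourierTestFunctions E, ∫ ξ, m ξ * P ξ = 0) : m =ᵐ[volume] 0 := by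
  have hmul {P : SchwartzMap E ℂ} (hP : P ∈ fourierTestFunctions E) :
      (fun ξ => m ξ * P ξ) =ᵐ[volume] 0 := by
    refine ae_eq_zero_of_fourierInv_eq_zero (hm P) fun x => ?_
    obtain ⟨Q, hQ, hQP⟩ := exists_fourierTestFunctions_fourierChar_smul hP x
    rw [Real.fourierInv_eq, ← h Q hQ]
    simp only [hQP, mul_smul_comm]
  obtain ⟨P, hP, hP0⟩ := exists_fourierTestFunctions_apply_zero_ne_zero E
  have hdense : ∀ᵐ ξ, ∀ j, m ξ * P (ξ - TopologicalSpace.denseSeq E j) = 0 :=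
    ae_all_iff.2 fun j => hmul (comp_sub_mem_fourierTestFunctions hP _)
  filter_upwards [hdense] with ξ hξ
  have hopen : IsOpen {ζ | P (ξ - ζ) ≠ 0} :=
    isOpen_ne_fun (P.continuous.comp (continuous_sub_left ξ)) continuous_const
  obtain ⟨j, hj⟩ := (TopologicalSpace.denseRange_denseSeq E).exists_mem_open hopen
    ⟨ξ, by simpa using hP0⟩
  exact (mul_eq_zero.1 (hξ j)).resolve_right hj

theorem eLpNorm_rpow_norm_smul (a : ℝ) (G : E → ℂ) :
    eLpNorm (fun ξ => ‖ξ‖ ^ a • G ξ) 2 volume = sobolevNorm a G :=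
  eLpNorm_congr_norm_ae (.of_forall fun ξ => by rw [norm_smul, norm_mul, norm_norm])

variable [Nontrivial E]

theorem memLp_rpow_norm_smul_schwartz (P : SchwartzMap E ℂ) {a : ℝ}
    (ha : -(finrank ℝ E : ℝ) < 2 * a) : MemLp (fun ξ => ‖ξ‖ ^ a • P ξ) 2 := by
  have hmeas : Measurable fun ξ => ‖ξ‖ ^ a • P ξ := by
    have := P.continuous.measurable
    fun_prop
  rw [memLp_two_iff_integrable_sq_norm hmeas.aestronglyMeasurable]
  obtain ⟨C, -, hC⟩ := P.decay 0 0
  refine ((integrable_rpow_norm_mul_schwartz P ha).mul_const C).mono'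
    (hmeas.norm.pow_const 2).aestronglyMeasurable (.of_forall fun ξ => ?_)
  rw [norm_pow, norm_norm, norm_smul, Real.norm_of_nonneg (by positivity), mul_pow,
    ← Real.rpow_mul_natCast (norm_nonneg _), Nat.cast_two, mul_comm a, sq ‖P ξ‖, ← mul_assoc]
  gcongr
  simpa using hC ξ

theorem sobolevNorm_schwartz_ne_top (P : SchwartzMap E ℂ) {a : ℝ}
    (ha : -(finrank ℝ E : ℝ) < 2 * a) : sobolevNorm a P ≠ ⊤ :=
  eLpNorm_rpow_norm_smul a P ▸ (memLp_rpow_norm_smul_schwartz P ha).eLpNorm_ne_top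

/-- The map `P ↦ ‖ξ‖ ^ a P(ξ)` from test functions to `L²`; it is isometric for the Sobolev norm of
order `a`. -/
noncomputable def rpowNormSMulL2 {a : ℝ} (ha : -(finrank ℝ E : ℝ) < 2 * a) :
    fourierTestFunctions E →ₗ[ℂ] Lp ℂ 2 (volume : Measure E) where
  toFun P := (memLp_rpow_norm_smul_schwartz (P : SchwartzMap E ℂ) ha).toLp
  map_add' P Q := by
    rw [← MemLp.toLp_add]
    exact MemLp.toLp_congr _ _ (.of_forall fun ξ => smul_add _ _ _)
  map_smul' c P := by
    rw [← MemLp.toLp_const_smul]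
    exact MemLp.toLp_congr _ _ (.of_forall fun ξ => smul_comm (‖ξ‖ ^ a) c _)

theorem enorm_rpowNormSMulL2 {a : ℝ} (ha : -(finrank ℝ E : ℝ) < 2 * a)
    (P : fourierTestFunctions E) :
    ‖rpowNormSMulL2 ha P‖ₑ = sobolevNorm a (P : SchwartzMap E ℂ) :=
  (Lp.enorm_toLp (memLp_rpow_norm_smul_schwartz P.1 ha)).trans (eLpNorm_rpow_norm_smul a _)

theorem integrable_rpow_norm_smul_conj_mul_schwartz {a : ℝ} (ha : -(finrank ℝ E : ℝ) < 2 * a)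
    (k : Lp ℂ 2 (volume : Measure E)) (P : SchwartzMap E ℂ) :
    Integrable fun ξ => (‖ξ‖ ^ a • (starRingEnd ℂ) (k ξ)) * P ξ := by
  refine ((Lp.memLp k).star.integrable_mul (memLp_rpow_norm_smul_schwartz P ha)).congr
    (.of_forall fun ξ => ?_)
  simp [mul_left_comm, mul_assoc]

theorem inner_rpowNormSMulL2 {a : ℝ} (ha : -(finrank ℝ E : ℝ) < 2 * a)
    (k : Lp ℂ 2 (volume : Measure E)) (P : fourierTestFunctions E) :
    inner ℂ k (rpowNormSMulL2 ha P) =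
      ∫ ξ, (‖ξ‖ ^ a • (starRingEnd ℂ) (k ξ)) * (P : SchwartzMap E ℂ) ξ := by
  rw [L2.inner_def]
  refine integral_congr_ae ?_
  filter_upwards [(memLp_rpow_norm_smul_schwartz (P : SchwartzMap E ℂ) ha).coeFn_toLp] with ξ hξ
  rw [rpowNormSMulL2, LinearMap.coe_mk, AddHom.coe_mk, hξ, RCLike.inner_apply]
  simp [mul_comm, mul_left_comm, mul_assoc]

theorem denseRange_rpowNormSMulL2 {a : ℝ} (ha : -(finrank ℝ E : ℝ) < 2 * a) :
    DenseRange (rpowNormSMulL2 (E := E) ha) := by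
  rw [DenseRange, ← LinearMap.coe_range, Submodule.dense_iff_topologicalClosure_eq_top,
    Submodule.topologicalClosure_eq_top_iff, Submodule.eq_bot_iff]
  intro k hk
  have hzero := ae_eq_zero_of_forall_integral_mul_eq_zero
    (integrable_rpow_norm_smul_conj_mul_schwartz ha k) fun P hP =>
      (inner_rpowNormSMulL2 ha k ⟨P, hP⟩).symm.trans
        ((Submodule.mem_orthogonal' _ _).1 hk _ (LinearMap.mem_range_self _ _))
  refine Lp.ext ?_
  filter_upwards [hzero, Measure.ae_ne volume 0, Lp.coeFn_zero ℂ 2 (volume : Measure E)]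
    with ξ hξ hξ0 h0
  simpa [h0, (Real.rpow_pos_of_pos (norm_pos_iff.2 hξ0) a).ne'] using hξ

theorem exists_L2_ae_eq_of_forall_norm_integral_mul_le {a : ℝ} (ha : -(finrank ℝ E : ℝ) < 2 * a)
    {m : E → ℂ} (hm : ∀ P : SchwartzMap E ℂ, Integrable fun ξ => m ξ * P ξ) {K : ℝ} (hK : 0 ≤ K)
    (H : ∀ P : fourierTestFunctions E,
      ‖∫ ξ, m ξ * (P : SchwartzMap E ℂ) ξ‖ ≤ K * ‖rpowNormSMulL2 ha P‖) :
    ∃ k : Lp ℂ 2 (volume : Measure E), ‖k‖ ≤ K ∧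
      m =ᵐ[volume] fun ξ => ‖ξ‖ ^ a • (starRingEnd ℂ) (k ξ) := by
  let ℓ : fourierTestFunctions E →ₗ[ℂ] ℂ :=
    { toFun := fun P => ∫ ξ, m ξ * (P : SchwartzMap E ℂ) ξ
      map_add' := fun P Q => by
        simp only [Submodule.coe_add, add_apply, mul_add]
        exact integral_add (hm _) (hm _)
      map_smul' := fun c P => by
        simp only [Submodule.coe_smul, smul_apply, mul_smul_comm, RingHom.id_apply]
        exact integral_smul c _ }
  have hdense := denseRange_rpowNormSMulL2 (E := E) ha
  let k := (InnerProductSpace.toDual ℂ _).symm (ℓ.extendOfNorm (rpowNormSMulL2 ha))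
  refine ⟨k, (LinearIsometryEquiv.norm_map _ _).trans_le
    (LinearMap.opNorm_extendOfNorm_le hdense hK H), ?_⟩
  have hconj := integrable_rpow_norm_smul_conj_mul_schwartz ha k
  refine sub_ae_eq_zero _ _ |>.1 (ae_eq_zero_of_forall_integral_mul_eq_zero (fun P => ?_)
    fun P hP => ?_)
  · simpa only [Pi.sub_apply, sub_mul] using! (hm P).sub (hconj P)
  · simp only [Pi.sub_apply, sub_mul]
    rw [integral_sub (hm P) (hconj P), ← inner_rpowNormSMulL2 ha k ⟨P, hP⟩,
      InnerProductSpace.toDual_symm_apply, LinearMap.extendOfNorm_eq hdense ⟨K, H⟩]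
    exact sub_self _

theorem sobolevNorm_fourier_le_of_forall_fourierTestFunctions {s : ℝ} (hs : s < finrank ℝ E / 2)
    {f : E → ℂ} (hf : Integrable f) {K : ℝ≥0∞} (H : ∀ P ∈ fourierTestFunctions E,
      ‖∫ x, f x * 𝓕⁻ P x‖ₑ ≤ sobolevNorm (-s) P * K) :
    sobolevNorm s (𝓕 f) ≤ K := by
  rcases eq_or_ne K ⊤ with rfl | hK
  · exact le_top
  have ha : -(finrank ℝ E : ℝ) < 2 * -s := by linarith
  have hm (P : SchwartzMap E ℂ) : Integrable fun ξ => 𝓕⁻ f ξ * P ξ :=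
    P.integrable.bdd_mul (continuous_fourierInv hf).aestronglyMeasurable
      (.of_forall (norm_fourierExtension_le _ _))
  obtain ⟨k, hk, hfk⟩ := exists_L2_ae_eq_of_forall_norm_integral_mul_le ha hm
    (K := K.toReal) toReal_nonneg fun P => by
      rw [← toReal_enorm, ← toReal_enorm, ← toReal_mul, enorm_rpowNormSMulL2]
      refine toReal_mono (mul_ne_top hK (sobolevNorm_schwartz_ne_top _ ha)) ?_
      refine (congrArg enorm (integral_fourierExtension_mul hf P.1.integrable)).trans_le ?_
      rw [mul_comm, ← SchwartzMap.fourierInv_coe]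
      exact H P P.2
  calc sobolevNorm s (𝓕 f) = eLpNorm k 2 volume := by
        rw [← sobolevNorm_fourierInv]
        refine eLpNorm_congr_norm_ae ?_
        filter_upwards [hfk, Measure.ae_ne volume 0] with ξ hξ hξ0
        rw [hξ, norm_mul, norm_norm, norm_smul, RCLike.norm_conj, ← mul_assoc, ← norm_mul,
          ← Real.rpow_add (norm_pos_iff.2 hξ0), add_neg_cancel, Real.rpow_zero, norm_one, one_mul]
    _ ≤ K := by
        rw [← Lp.enorm_def, ← ofReal_norm]
        exact ofReal_le_of_le_toReal hk

end SobolevDuality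

/-! ### The Li–Zhou inequality -/

theorem measurable_eLpNorm_prodMk_left {α β : Type*} [MeasurableSpace α] [MeasurableSpace β]
    {μ : Measure β} [SFinite μ] {f : α × β → ℝ} (hf : Measurable f) {p : ℝ≥0∞} (hp : p ≠ ⊤) :
    Measurable fun a => eLpNorm (fun b => f (a, b)) p μ := by
  rcases eq_or_ne p 0 with rfl | hp0
  · simp
  · simp only [eLpNorm_eq_lintegral_rpow_enorm_toReal hp0 hp]
    exact (hf.enorm.pow_const p.toReal).lintegral_prod_right'.pow_const _

theorem measurable_eLpNorm_indicator_norm_lt {E : Type*} [NormedAddCommGroup E] [MeasurableSpace E]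
    [OpensMeasurableSpace E] {μ : Measure E} [SFinite μ] {F : ℝ × E → ℝ} (hF : Measurable F)
    {p : ℝ≥0∞} (hp : p ≠ ⊤) :
    Measurable fun τ => eLpNorm (indicator {x | ‖x‖ < (1 + τ) / 2} fun x => F (τ, x)) p μ :=
  measurable_eLpNorm_prodMk_left (f := indicator {q | ‖q.2‖ < (1 + q.1) / 2} F)
    (hF.indicator (measurableSet_lt (by fun_prop) (by fun_prop))) hp

theorem lintegral_enorm_mul_eq_indicator_add_indicator {α : Type*} [MeasurableSpace α]
    {μ : Measure α} {f : α → ℝ} {g : α → ℝ≥0∞} {S : Set α} (hS : MeasurableSet S) :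
    ∫⁻ x, ‖f x‖ₑ * g x ∂μ =
      ∫⁻ x, ‖S.indicator f x‖ₑ * g x ∂μ + ∫⁻ x, ‖Sᶜ.indicator f x‖ₑ * g x ∂μ := by
  have hind (T : Set α) : (fun x => ‖T.indicator f x‖ₑ * g x) =
      T.indicator fun x => ‖f x‖ₑ * g x := by
    ext x
    by_cases hx : x ∈ T <;> simp [hx]
  rw [hind, hind, lintegral_indicator hS, lintegral_indicator hS.compl, lintegral_add_compl _ hS]

section LiZhou

variable {n : ℕ}

theorem exists_lintegral_mul_fourierInv_le (hn : 2 ≤ n) {s p₁ p₂ : ℝ} (hs : 1 / 2 < s)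
    (hs' : s < n / 2) (hp₁ : 1 / p₁ = 1 / 2 + s / n)
    (hp₂ : 1 / p₂ = 1 / 2 + (s - 1 / 2) / (n - 1)) :
    ∃ C : ℝ, 0 < C ∧ ∀ f : Spc n → ℝ, Measurable f → ∀ G : Spc n → ℂ, Integrable G →
      ∀ τ : ℝ, 0 ≤ τ → ∫⁻ x, ‖f x‖ₑ * ‖𝓕⁻ G x‖ₑ ≤ .ofReal C * sobolevNorm s G *
        (eLpNorm (indicator {x | ‖x‖ < (1 + τ) / 2} f) (.ofReal p₁) volume +
          .ofReal (√(1 + τ ^ 2) ^ (-(n / 2 - s))) *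
            mixN n 1 p₂ (indicator {x | (1 + τ) / 2 ≤ ‖x‖} f)) := by
  have : Nontrivial (Spc n) := nontrivial_of_finrank_pos (R := ℝ) (by simpa using by omega)
  obtain ⟨C₁, hC₁, hinterior⟩ := exists_lintegral_enorm_mul_fourierInv_le (E := Spc n) (κ := 0)
    (s := s) (p := p₁) one_pos le_rfl (by linarith) (by simpa using hs') (by simpa using hp₁)
  obtain ⟨C₂, -, hexterior⟩ := exists_lintegral_exterior_mul_fourierInv_le hn hs hs' hp₂
  refine ⟨max C₁ C₂, lt_max_of_lt_left hC₁, fun f hf G hG τ hτ => ?_⟩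
  have hball : MeasurableSet {x : Spc n | ‖x‖ < (1 + τ) / 2} :=
    measurableSet_lt measurable_norm measurable_const
  have hcompl : {x : Spc n | ‖x‖ < (1 + τ) / 2}ᶜ = {x | (1 + τ) / 2 ≤ ‖x‖} := by
    ext
    simp
  rw [lintegral_enorm_mul_eq_indicator_add_indicator hball, hcompl, mul_add]
  gcongr
  · refine (hinterior volume gaussianFrostman_volume _
      (hf.indicator hball).aestronglyMeasurable G hG).trans ?_
    gcongr
    exact le_max_left _ _
  · refine (hexterior f hf G hG τ hτ).trans ?_
    gcongr
    exact le_max_right _ _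

theorem enorm_integral_smul_fourierInv_cos_smul_le [Nontrivial (Spc n)] (s r : ℝ) {f : Spc n → ℝ}
    (hf : Integrable f) (P : SchwartzMap (Spc n) ℂ) :
    ‖∫ x, f x • 𝓕⁻ (fun ξ => cos (2 * π * r * ‖ξ‖) • P ξ) x‖ₑ ≤
      sobolevNorm (-s) P * DsN s f := by
  simp only [Complex.real_smul (x := f _)]
  exact (enorm_integral_mul_fourierInv_le s hf.ofReal (integrable_cos_smul P r)).trans
    (mul_le_mul_left (sobolevNorm_cos_smul_le _ _ _) _)

theorem enorm_integral_smul_fourierInv_wavePropagator_smul_le (hn : 2 ≤ n) (s r : ℝ)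
    {f : Spc n → ℝ} (hf : Integrable f) (P : SchwartzMap (Spc n) ℂ) :
    ‖∫ x, f x • 𝓕⁻ (fun ξ => wavePropagator r ξ • P ξ) x‖ₑ ≤
      sobolevNorm (-s) P * DsN (s - 1) f := by
  have : Nontrivial (Spc n) := nontrivial_of_finrank_pos (R := ℝ) (by simpa using by omega)
  simp only [Complex.real_smul (x := f _)]
  refine (enorm_integral_mul_fourierInv_le (s - 1) hf.ofReal
    (integrable_wavePropagator_smul (by simpa) P r)).trans (mul_le_mul_left ?_ _)
  rw [neg_sub, sub_eq_neg_add]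
  exact sobolevNorm_wavePropagator_smul_le _ _ _

theorem exists_lintegral_mul_fourierInv_wavePropagator_smul_le (hn : 2 ≤ n) {σ : ℝ}
    (hσ : 1 / 2 < 1 - σ) (hσ' : 1 - σ < n / 2) {p₁ p₂ : ℝ} (hp₁ : 1 / p₁ = 1 / 2 + (1 - σ) / n)
    (hp₂ : 1 / p₂ = 1 / 2 + (1 / 2 - σ) / (n - 1)) :
    ∃ C : ℝ, 0 < C ∧ ∀ f : Spc n → ℝ, Measurable f → ∀ (P : SchwartzMap (Spc n) ℂ) (r τ : ℝ),
      0 ≤ τ → ∫⁻ x, ‖f x‖ₑ * ‖𝓕⁻ (fun ξ => wavePropagator r ξ • P ξ) x‖ₑ ≤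
        sobolevNorm (-σ) P * (.ofReal C *
          (eLpNorm (indicator {x | ‖x‖ < (1 + τ) / 2} f) (.ofReal p₁) volume +
            .ofReal (√(1 + τ ^ 2) ^ (-(n : ℝ) / 2 + 1 - σ)) *
              mixN n 1 p₂ (indicator {x | (1 + τ) / 2 ≤ ‖x‖} f))) := by
  obtain ⟨C, hC, hdual⟩ := exists_lintegral_mul_fourierInv_le hn hσ hσ' hp₁
    (by rw [hp₂]; ring : 1 / p₂ = 1 / 2 + (1 - σ - 1 / 2) / (n - 1))
  refine ⟨C, hC, fun f hf P r τ hτ => ?_⟩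
  have hpropagator := sobolevNorm_wavePropagator_smul_le (-σ) r P
  rw [neg_add_eq_sub] at hpropagator
  grw [hdual f hf _ (integrable_wavePropagator_smul (by simpa) P r) τ hτ, hpropagator]
  rw [show -((n : ℝ) / 2 - (1 - σ)) = -(n : ℝ) / 2 + 1 - σ by ring, mul_assoc, mul_left_comm]

theorem exists_lintegral_boxD_mul_fourierInv_wavePropagator_le (hn : 2 ≤ n) {σ : ℝ}
    (hσ : 1 / 2 < 1 - σ) (hσ' : 1 - σ < n / 2) {p₁ p₂ : ℝ} (hp₁ : 1 / p₁ = 1 / 2 + (1 - σ) / n)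
    (hp₂ : 1 / p₂ = 1 / 2 + (1 / 2 - σ) / (n - 1)) :
    ∃ C : ℝ, 0 < C ∧ ∀ (u : STn n → ℝ), ContDiff ℝ 3 u → ∀ (P : SchwartzMap (Spc n) ℂ) (t : ℝ),
      ∫⁻ τ in Ioc 0 t, ∫⁻ x, ‖boxD u (τ, x)‖ₑ *
        ‖𝓕⁻ (fun ξ => wavePropagator (τ - t) ξ • P ξ) x‖ₑ ≤
      sobolevNorm (-σ) P * (
        .ofReal C * (∫⁻ τ in Ioc 0 t, eLpNorm
          (indicator {x | ‖x‖ < (1 + τ) / 2} fun x => boxD u (τ, x)) (.ofReal p₁) volume) +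
        .ofReal C * (∫⁻ τ in Ioc 0 t, .ofReal (√(1 + τ ^ 2) ^ (-(n : ℝ) / 2 + 1 - σ)) *
          mixN n 1 p₂ (indicator {x | (1 + τ) / 2 ≤ ‖x‖} fun x => boxD u (τ, x)))) := by
  have : Nontrivial (Spc n) := nontrivial_of_finrank_pos (R := ℝ) (by simpa using by omega)
  obtain ⟨C, hC, hdual⟩ :=
    exists_lintegral_mul_fourierInv_wavePropagator_smul_le hn hσ hσ' hp₁ hp₂
  refine ⟨C, hC, fun u hu P t => ?_⟩
  have hmeas : Measurable (boxD u) := (contDiff_boxD hu).continuous.measurable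
  have hP : sobolevNorm (-σ) P ≠ ⊤ :=
    sobolevNorm_schwartz_ne_top P (by rw [finrank_euclideanSpace_fin]; linarith)
  rw [← mul_add,
    ← lintegral_add_left (measurable_eLpNorm_indicator_norm_lt hmeas ofReal_ne_top),
    ← lintegral_const_mul' _ _ ofReal_ne_top, ← lintegral_const_mul' _ _ hP]
  exact setLIntegral_mono' measurableSet_Ioc fun τ hτ =>
    hdual (fun x => boxD u (τ, x)) (hmeas.comp measurable_prodMk_left) P (τ - t) τ hτ.1.le

theorem li_zhou_inequality_general (hn : 2 ≤ n) {σ : ℝ} (hσ : 1 / 2 < 1 - σ) (hσ' : 1 - σ < n / 2)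
    {p₁ p₂ : ℝ} (hp₁ : 1 / p₁ = 1 / 2 + (1 - σ) / n)
    (hp₂ : 1 / p₂ = 1 / 2 + (1 / 2 - σ) / (n - 1)) :
    ∃ C > (0 : ℝ), ∀ (f g : Spc n → ℝ) (F u : STn n → ℝ), Integrable f → Integrable g →
      ContDiff ℝ 3 u → (∀ z : STn n, 0 ≤ z.1 → boxD u z = F z) →
      (∀ x, u (0, x) = f x) → (∀ x, dtD u (0, x) = g x) →
      ∀ t : ℝ, 0 ≤ t → Integrable (fun x => u (t, x)) →
        DsN σ (fun x => u (t, x)) ≤ DsN σ f + DsN (σ - 1) g +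
          .ofReal C * (∫⁻ τ in Ioc 0 t,
            eLpNorm (indicator {x | ‖x‖ < (1 + τ) / 2} fun x => F (τ, x)) (.ofReal p₁) volume) +
          .ofReal C * (∫⁻ τ in Ioc 0 t, .ofReal (√(1 + τ ^ 2) ^ (-(n : ℝ) / 2 + 1 - σ)) *
            mixN n 1 p₂ (indicator {x | (1 + τ) / 2 ≤ ‖x‖} fun x => F (τ, x))) := by
  have : Nontrivial (Spc n) := nontrivial_of_finrank_pos (R := ℝ) (by simpa using by omega)
  obtain ⟨C, hC, hsource⟩ :=
    exists_lintegral_boxD_mul_fourierInv_wavePropagator_le hn hσ hσ' hp₁ hp₂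
  refine ⟨C, hC, fun f g F u hf hg hu hbox hf₀ hg₀ t ht hut => ?_⟩
  obtain rfl : (fun x => u (0, x)) = f := funext hf₀
  obtain rfl : (fun x => dtD u (0, x)) = g := funext hg₀
  have hslice (τ : ℝ) (hτ : τ ∈ Ioc 0 t) : (fun x => F (τ, x)) = fun x => boxD u (τ, x) :=
    funext fun x => (hbox (τ, x) hτ.1.le).symm
  have hinterior : ∫⁻ τ in Ioc 0 t, eLpNorm
        (indicator {x | ‖x‖ < (1 + τ) / 2} fun x => F (τ, x)) (.ofReal p₁) volume =
      ∫⁻ τ in Ioc 0 t, eLpNorm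
        (indicator {x | ‖x‖ < (1 + τ) / 2} fun x => boxD u (τ, x)) (.ofReal p₁) volume :=
    setLIntegral_congr_fun measurableSet_Ioc fun τ hτ => by simp only [hslice τ hτ]
  have hexterior : ∫⁻ τ in Ioc 0 t, .ofReal (√(1 + τ ^ 2) ^ (-(n : ℝ) / 2 + 1 - σ)) *
        mixN n 1 p₂ (indicator {x | (1 + τ) / 2 ≤ ‖x‖} fun x => F (τ, x)) =
      ∫⁻ τ in Ioc 0 t, .ofReal (√(1 + τ ^ 2) ^ (-(n : ℝ) / 2 + 1 - σ)) *
        mixN n 1 p₂ (indicator {x | (1 + τ) / 2 ≤ ‖x‖} fun x => boxD u (τ, x)) :=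
    setLIntegral_congr_fun measurableSet_Ioc fun τ hτ => by simp only [hslice τ hτ]
  rw [hinterior, hexterior, add_assoc _ (_ * _)]
  refine sobolevNorm_fourier_le_of_forall_fourierTestFunctions
    (by rw [finrank_euclideanSpace_fin]; linarith) hut.ofReal fun P hP => ?_
  refine (enorm_integral_smul_fourierInv_le hn P hP hu ht hut hf hg).trans ?_
  rw [mul_add, mul_add]
  exact add_le_add (add_le_add (enorm_integral_smul_fourierInv_cos_smul_le _ _ hf _)
    (enorm_integral_smul_fourierInv_wavePropagator_smul_le hn _ _ hg _)) (hsource u hu P t)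

end LiZhou

/-- The Li–Zhou inequality (Lemma 3.5). -/
theorem li_zhou_inequality (n : ℕ) (hn : 2 ≤ n) (σ : ℝ)
    (hσ1 : 1/2 < 1 - σ) (hσ2 : 1 - σ < (n : ℝ)/2)
    (p₁ p₂ : ℝ) (hp₁ : 1/p₁ = 1/2 + (1 - σ)/(n : ℝ))
    (hp₂ : 1/p₂ = 1/2 + (1/2 - σ)/((n : ℝ) - 1)) :
    ∃ C > (0 : ℝ), ∀ (f g : SchwartzMap (Spc n) ℝ) (F u : STn n → ℝ),
      ContDiff ℝ ∞ F → SchwartzInX F → ContDiff ℝ ∞ u → SchwartzInX u →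
      (∀ z : STn n, 0 ≤ z.1 → boxD u z = F z) →
      (∀ x, u (0, x) = f x) → (∀ x, dtD u (0, x) = g x) →
      ∀ t : ℝ, 0 ≤ t →
        DsN σ (fun x => u (t, x)) ≤
          DsN σ f + DsN (σ - 1) g +
          ENNReal.ofReal C *
            (∫⁻ τ in Set.Ioc (0 : ℝ) t,
              eLpNorm (Set.indicator {x : Spc n | ‖x‖ < (1 + τ)/2} (fun x => F (τ, x)))
                (ENNReal.ofReal p₁) volume) +
          ENNReal.ofReal C *
            (∫⁻ τ in Set.Ioc (0 : ℝ) t,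
              ENNReal.ofReal ((Real.sqrt (1 + τ ^ 2)) ^ (-(n : ℝ)/2 + 1 - σ)) *
                mixN n 1 p₂
                  (Set.indicator {x : Spc n | (1 + τ)/2 ≤ ‖x‖} (fun x => F (τ, x)))) := by
  obtain ⟨C, hC, hbound⟩ := li_zhou_inequality_general hn hσ1 hσ2 hp₁ hp₂
  refine ⟨C, hC, fun f g F u _ _ hu hus hbox hf hg t ht => ?_⟩
  obtain ⟨φ, hφ⟩ := hus t
  exact hbound f g F u f.integrable g.integrable (contDiff_infty.1 hu 3) hbox hf hg t ht
    (φ.integrable.congr (.of_forall fun x => (hφ x).symm))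
end

section
/- Suppose the real coefficients {A^{αβ} : α, β = 0,1,2,3} satisfy the null condition. Then for each Klainerman vector field Γ_l (l = 0, …, 10) on ℝ × ℝ³ there exists a set of real coefficients {Ã_l^{αβ} : α, β = 0,1,2,3} also satisfying the null condition such that for all C^∞ functions v, w on ℝ × ℝ³: Γ_l( A^{αβ}(∂_α v)(∂_β w) ) = A^{αβ}(∂_α Γ_l v)(∂_β w) + A^{αβ}(∂_α v)(∂_β Γ_l w) + Ã_l^{αβ}(∂_α v)(∂_β w), with summation over repeated indices α, β ∈ {0,1,2,3}. -/
/-!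
A Klainerman field `ξ` is affine, so its Jacobian matrix `N` is constant and commuting `∂_α` past
`ξ` costs only `∑_γ N_{γα} ∂_γ`. By the Leibniz rule the defect in commuting `ξ` with the form `A`
is again a constant-coefficient form in the gradients, with matrix `-(N A + A Nᵀ)`. The null
condition makes the quadratic form of `A` a multiple of the Minkowski form `η`, since both
`x + |x| e₀` and `x - |x| e₀` are null for every spatial `x`. By polarization the new form then
inherits the null condition as soon as `N η` vanishes on the light cone: `N η` is `0` for
translations, antisymmetric for boosts and rotations, and `η` itself for scaling.
-/

open MeasureTheory Real ENNReal FourierTransform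
open scoped ContDiff

open Matrix Module VectorField

section GradientForm

variable {𝕜 E ι : Type*} [RCLike 𝕜] [NormedAddCommGroup E] [NormedSpace 𝕜 E]

/-- The derivative of the function `f` along the vector field `ξ`, i.e. `ξ` acting as a first-order
differential operator. -/
noncomputable def derivAlong (ξ : E → E) (f : E → 𝕜) : E → 𝕜 := fun p ↦ fderiv 𝕜 f p (ξ p)

/-- The vector of partial derivatives of `f` in the directions `b i`. -/
noncomputable def partials (b : ι → E) (f : E → 𝕜) (p : E) : ι → 𝕜 := fun i ↦ fderiv 𝕜 f p (b i)

/-- The bilinear form in the gradients of `v` and `w` with constant coefficients `A`, relative to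
the frame `b`. -/
noncomputable def gradientForm [Fintype ι] (b : ι → E) (A : Matrix ι ι 𝕜) (v w : E → 𝕜) (p : E) :
    𝕜 :=
  partials b v p ⬝ᵥ A *ᵥ partials b w p

lemma differentiableAt_partials [Finite ι] (b : ι → E) {f : E → 𝕜} {p : E}
    (hf : ContDiffAt 𝕜 2 f p) : DifferentiableAt 𝕜 (partials b f) p :=
  have := Fintype.ofFinite ι
  have hdf : DifferentiableAt 𝕜 (fderiv 𝕜 f) p :=
    (hf.fderiv_right (m := 1) (by norm_num)).differentiableAt one_ne_zero
  differentiableAt_pi.2 fun i ↦ hdf.clm_apply (differentiableAt_const (b i))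

lemma fderiv_apply_eq_vecMul_toMatrix [Fintype ι] [DecidableEq ι] (b : Basis ι 𝕜 E)
    (L : E →ₗ[𝕜] E) (f : E → 𝕜) (p : E) (i : ι) :
    fderiv 𝕜 f p (L (b i)) = (partials b f p ᵥ* L.toMatrix b b) i := by
  calc fderiv 𝕜 f p (L (b i))
      = fderiv 𝕜 f p (∑ j, b.repr (L (b i)) j • b j) := by rw [b.sum_repr]
    _ = (partials b f p ᵥ* L.toMatrix b b) i := by
      simp [partials, vecMul, dotProduct, LinearMap.toMatrix_apply, mul_comm, -Basis.sum_repr]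

lemma partials_derivAlong [Fintype ι] [DecidableEq ι] (b : Basis ι 𝕜 E) {ξ : E → E}
    {ξ' : E →L[𝕜] E} {f : E → 𝕜} {p : E} (hξ : HasFDerivAt ξ ξ' p) (hf : ContDiffAt 𝕜 2 f p) :
    partials b (derivAlong ξ f) p =
      fderiv 𝕜 (partials b f) p (ξ p) + partials b f p ᵥ* (ξ' : E →ₗ[𝕜] E).toMatrix b b := by
  ext i
  have hbracket : lieBracket 𝕜 (fun _ ↦ b i) ξ p = ξ' (b i) := by simp [lieBracket, hξ.fderiv]
  have hcomm := fderiv_apply_lieBracket hf (by simp) hξ.differentiableAt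
    (differentiableAt_const (b i))
  have hcomponent : fderiv 𝕜 (partials b f) p (ξ p) i =
      fderiv 𝕜 (fun y ↦ fderiv 𝕜 f y (b i)) p (ξ p) :=
    (DFunLike.congr_fun
      (fderiv_apply (F' := fun _ : ι ↦ 𝕜) (differentiableAt_partials b hf) i) (ξ p)).symm
  rw [Pi.add_apply, hcomponent, ← fderiv_apply_eq_vecMul_toMatrix, ContinuousLinearMap.coe_coe,
    ← hbracket]
  exact eq_add_of_sub_eq' hcomm.symm

lemma derivAlong_gradientForm [Fintype ι] (b : ι → E) (A : Matrix ι ι 𝕜) (ξ : E → E) {v w : E → 𝕜}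
    {p : E} (hv : ContDiffAt 𝕜 2 v p) (hw : ContDiffAt 𝕜 2 w p) :
    derivAlong ξ (gradientForm b A v w) p =
      fderiv 𝕜 (partials b v) p (ξ p) ⬝ᵥ A *ᵥ partials b w p +
        partials b v p ⬝ᵥ A *ᵥ fderiv 𝕜 (partials b w) p (ξ p) := by
  classical
  let B : (ι → 𝕜) →L[𝕜] (ι → 𝕜) →L[𝕜] 𝕜 :=
    LinearMap.toContinuousBilinearMap (toLinearMap₂' 𝕜 A : (ι → 𝕜) →ₗ[𝕜] (ι → 𝕜) →ₗ[𝕜] 𝕜)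
  have hB (x y : ι → 𝕜) : B x y = x ⬝ᵥ A *ᵥ y := by simp [B, toLinearMap₂'_apply']
  have hderiv := B.fderiv_of_bilinear (differentiableAt_partials b hv)
    (differentiableAt_partials b hw)
  simp only [hB] at hderiv
  change fderiv 𝕜 (fun y ↦ partials b v y ⬝ᵥ A *ᵥ partials b w y) p (ξ p) = _
  simp [hderiv, hB, add_comm]

lemma derivAlong_gradientForm_eq_add [Fintype ι] [DecidableEq ι] (b : Basis ι 𝕜 E)
    (A : Matrix ι ι 𝕜) {ξ : E → E} {ξ' : E →L[𝕜] E} {v w : E → 𝕜} {p : E}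
    (hξ : HasFDerivAt ξ ξ' p) (hv : ContDiffAt 𝕜 2 v p) (hw : ContDiffAt 𝕜 2 w p) :
    let N := (ξ' : E →ₗ[𝕜] E).toMatrix b b
    derivAlong ξ (gradientForm b A v w) p =
      gradientForm b A (derivAlong ξ v) w p + gradientForm b A v (derivAlong ξ w) p +
        gradientForm b (-(N * A + A * Nᵀ)) v w p := by
  intro N
  rw [derivAlong_gradientForm b A ξ hv hw]
  simp only [gradientForm, partials_derivAlong b hξ hv, partials_derivAlong b hξ hw,
    add_dotProduct, mulVec_add, dotProduct_add, neg_mulVec, dotProduct_neg, add_mulVec,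
    mulVec_vecMul, ← mulVec_mulVec, ← dotProduct_mulVec, N]
  ring

end GradientForm

lemma add_smul_dotProduct_mulVec_add_smul {R ι : Type*} [CommRing R] [Fintype ι]
    (A : Matrix ι ι R) (x y : ι → R) (s : R) :
    (x + s • y) ⬝ᵥ A *ᵥ (x + s • y) =
      x ⬝ᵥ A *ᵥ x + s * (x ⬝ᵥ A *ᵥ y + y ⬝ᵥ A *ᵥ x) + s ^ 2 * (y ⬝ᵥ A *ᵥ y) := by
  simp only [mulVec_add, mulVec_smul, add_dotProduct, dotProduct_add, smul_dotProduct,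
    dotProduct_smul, smul_eq_mul]
  ring

lemma toLin_single {R M ι : Type*} [CommRing R] [AddCommGroup M] [Module R M] [Fintype ι]
    [DecidableEq ι] (b : Basis ι R M) (i j : ι) (c : R) (x : M) :
    (single i j c).toLin b b x = (c * b.repr x j) • b i := by
  simp [Matrix.toLin_apply, single_mulVec_eq, Pi.single_apply]

lemma single_mul_diagonal {R ι : Type*} [NonUnitalNonAssocSemiring R] [Fintype ι] [DecidableEq ι]
    (i j : ι) (c : R) (d : ι → R) : single i j c * diagonal d = single i j (c * d j) := by
  ext a b
  by_cases hb : j = b <;> simp [single_apply, hb]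

section Minkowski

variable {n : ℕ} {A : Matrix (Fin (n + 1)) (Fin (n + 1)) ℝ}

/-- The matrix `diag (1, -1, …, -1)` of the Minkowski form, with time as coordinate `0`. -/
def minkowski (n : ℕ) : Matrix (Fin (n + 1)) (Fin (n + 1)) ℝ :=
  diagonal (Fin.cons 1 fun _ ↦ -1)

/-- The null condition in `n` space dimensions: the quadratic form of `A` vanishes on the light
cone. -/
def IsNullForm (A : Matrix (Fin (n + 1)) (Fin (n + 1)) ℝ) : Prop :=
  ∀ X, X ⬝ᵥ minkowski n *ᵥ X = 0 → X ⬝ᵥ A *ᵥ X = 0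

lemma dotProduct_minkowski_mulVec (X Y : Fin (n + 1) → ℝ) :
    X ⬝ᵥ minkowski n *ᵥ Y = 2 * X 0 * Y 0 - X ⬝ᵥ Y := by
  simp only [dotProduct, minkowski, mulVec_diagonal, Fin.sum_univ_succ, Fin.cons_zero,
    Fin.cons_succ, one_mul, neg_mul, mul_neg, Finset.sum_neg_distrib]
  ring

lemma isNullForm_minkowski : IsNullForm (minkowski n) := fun _ ↦ id

lemma isNullForm_zero : IsNullForm (0 : Matrix (Fin (n + 1)) (Fin (n + 1)) ℝ) := fun _ _ ↦ by simp

lemma isNullForm_of_transpose_eq_neg (hA : Aᵀ = -A) : IsNullForm A := fun X _ ↦ by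
  have h := dotProduct_transpose_mulVec A X X
  rw [hA, neg_mulVec, dotProduct_neg] at h
  linarith

lemma IsNullForm.mixed_eq_zero_and_spatial_eq (hA : IsNullForm A)
    {x : Fin (n + 1) → ℝ} (hx : x 0 = 0) :
    x ⬝ᵥ A *ᵥ Pi.single 0 1 + Pi.single 0 1 ⬝ᵥ A *ᵥ x = 0 ∧
      x ⬝ᵥ A *ᵥ x = -(A 0 0 * x ⬝ᵥ x) := by
  set e : Fin (n + 1) → ℝ := Pi.single 0 1
  set r := √(x ⬝ᵥ x)
  have hr : r ^ 2 = x ⬝ᵥ x := Real.sq_sqrt (by simpa using dotProduct_star_self_nonneg x)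
  have hee : e ⬝ᵥ A *ᵥ e = A 0 0 := by simp [e]
  have hnull (s : ℝ) (hs : s ^ 2 = r ^ 2) :
      x ⬝ᵥ A *ᵥ x + s * (x ⬝ᵥ A *ᵥ e + e ⬝ᵥ A *ᵥ x) + s ^ 2 * A 0 0 = 0 := by
    rw [← hee, ← add_smul_dotProduct_mulVec_add_smul]
    apply hA
    rw [add_smul_dotProduct_mulVec_add_smul]
    simp only [dotProduct_minkowski_mulVec]
    simp only [dotProduct_single, single_dotProduct, Pi.single_eq_same, hx, hs, hr, e]
    ring
  have hplus := hnull r rfl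
  have hminus := hnull (-r) (neg_sq r)
  refine ⟨?_, by rw [← hr]; linarith⟩
  rcases eq_or_ne r 0 with hr0 | hr0
  · have hx0 : x = 0 := dotProduct_self_eq_zero.1 (by rw [← hr, hr0, sq, mul_zero])
    simp [hx0]
  · exact (mul_eq_zero.1 (by linarith)).resolve_left hr0

lemma IsNullForm.dotProduct_mulVec_self (hA : IsNullForm A)
    (X : Fin (n + 1) → ℝ) :
    X ⬝ᵥ A *ᵥ X = A 0 0 * X ⬝ᵥ minkowski n *ᵥ X := by
  obtain ⟨x, hx, hX⟩ : ∃ x : Fin (n + 1) → ℝ, x 0 = 0 ∧ X = x + X 0 • Pi.single 0 1 :=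
    ⟨X - X 0 • Pi.single 0 1, by simp, by simp⟩
  obtain ⟨hcross, hself⟩ := hA.mixed_eq_zero_and_spatial_eq hx
  generalize X 0 = t at hX
  have htime : Pi.single 0 1 ⬝ᵥ A *ᵥ Pi.single 0 1 = A 0 0 := by simp
  rw [hX, add_smul_dotProduct_mulVec_add_smul, hcross, hself, htime, dotProduct_minkowski_mulVec]
  simp only [dotProduct_add, add_dotProduct, dotProduct_smul, smul_dotProduct, dotProduct_single,
    single_dotProduct, Pi.add_apply, Pi.smul_apply, Pi.single_eq_same, smul_eq_mul, hx]
  ring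

lemma IsNullForm.dotProduct_mulVec_add_swap (hA : IsNullForm A)
    (X Y : Fin (n + 1) → ℝ) :
    X ⬝ᵥ A *ᵥ Y + Y ⬝ᵥ A *ᵥ X = 2 * A 0 0 * X ⬝ᵥ minkowski n *ᵥ Y := by
  have hX := hA.dotProduct_mulVec_self X
  have hY := hA.dotProduct_mulVec_self Y
  have hXY := hA.dotProduct_mulVec_self (X + Y)
  have hsymm : Y ⬝ᵥ minkowski n *ᵥ X = X ⬝ᵥ minkowski n *ᵥ Y := by
    simp only [dotProduct_minkowski_mulVec, dotProduct_comm Y X]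
    ring
  simp only [mulVec_add, add_dotProduct, dotProduct_add] at hXY
  linear_combination hXY - hX - hY + A 0 0 * hsymm

lemma IsNullForm.neg_mul_add_mul_transpose {N : Matrix (Fin (n + 1)) (Fin (n + 1)) ℝ}
    (hA : IsNullForm A) (hN : IsNullForm (N * minkowski n)) :
    IsNullForm (-(N * A + A * Nᵀ)) := fun X hX ↦ by
  have hA' := hA.dotProduct_mulVec_add_swap (X ᵥ* N) X
  have hN' := hN X hX
  rw [← mulVec_mulVec, dotProduct_mulVec] at hN'
  rw [neg_mulVec, dotProduct_neg, add_mulVec, dotProduct_add, ← mulVec_vecMul, ← mulVec_mulVec,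
    dotProduct_mulVec X N, hA', hN']
  simp

end Minkowski

section Klainerman

variable {n : ℕ}

/-- The coordinate basis of `ℝ × ℝⁿ`, with the time direction at index `0`. -/
noncomputable def spacetimeBasis (n : ℕ) : Basis (Fin (n + 1)) ℝ (STn n) :=
  .ofEquivFun <| ((LinearEquiv.refl ℝ ℝ).prodCongr (WithLp.linearEquiv 2 ℝ (Fin n → ℝ))).trans
    (Fin.consLinearEquiv ℝ fun _ ↦ ℝ)

@[simp]
lemma spacetimeBasis_repr_zero (p : STn n) : (spacetimeBasis n).repr p 0 = p.1 := rfl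

@[simp]
lemma spacetimeBasis_repr_succ (p : STn n) (j : Fin n) :
    (spacetimeBasis n).repr p j.succ = p.2 j := rfl

lemma spacetimeBasis_zero : spacetimeBasis n 0 = (1, 0) := by
  apply (spacetimeBasis n).repr.injective
  ext i
  cases i using Fin.cases <;> simp

lemma spacetimeBasis_succ (j : Fin n) :
    spacetimeBasis n j.succ = (0, EuclideanSpace.single j 1) := by
  apply (spacetimeBasis n).repr.injective
  ext i
  cases i using Fin.cases <;> simp [Finsupp.single_apply, eq_comm]

lemma fderiv_spacetimeBasis_zero (f : STn n → ℝ) (p : STn n) :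
    fderiv ℝ f p (spacetimeBasis n 0) = dtD f p := by
  rw [spacetimeBasis_zero, dtD, dirD]

lemma fderiv_spacetimeBasis_succ (f : STn n → ℝ) (p : STn n) (j : Fin n) :
    fderiv ℝ f p (spacetimeBasis n j.succ) = dxD j f p := by
  rw [spacetimeBasis_succ, dxD, dirD]

lemma fderiv_apply_self_eq_SD (f : STn n → ℝ) (p : STn n) : fderiv ℝ f p p = SD f p := by
  calc fderiv ℝ f p p
      = fderiv ℝ f p (∑ i, (spacetimeBasis n).repr p i • spacetimeBasis n i) := by
        rw [(spacetimeBasis n).sum_repr]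
    _ = SD f p := by
      simp [Fin.sum_univ_succ, fderiv_spacetimeBasis_zero, fderiv_spacetimeBasis_succ, SD,
        -Basis.sum_repr]

/-- The value at the origin of the Klainerman field with a given index; it is nonzero only for the
translations. -/
noncomputable def klainermanShift : GIdx n → STn n
  | Sum.inl none => spacetimeBasis n 0
  | Sum.inl (some j) => spacetimeBasis n j.succ
  | Sum.inr _ => 0

/-- The Jacobian matrix of the Klainerman field with a given index: the coefficient of `∂_α` is
`∑_β N_{αβ} x_β`, up to a constant. -/
def klainermanJacobian : GIdx n → Matrix (Fin (n + 1)) (Fin (n + 1)) ℝ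
  | Sum.inl _ => 0
  | Sum.inr (Sum.inl j) => single j.succ 0 1 + single 0 j.succ 1
  | Sum.inr (Sum.inr (Sum.inl (j, k))) => single k.succ j.succ 1 - single j.succ k.succ 1
  | Sum.inr (Sum.inr (Sum.inr _)) => 1

/-- The Klainerman vector field with a given index, as an affine map. -/
noncomputable def klainermanField (l : GIdx n) (p : STn n) : STn n :=
  klainermanShift l + (klainermanJacobian l).toLin (spacetimeBasis n) (spacetimeBasis n) p

lemma Gop_eq_derivAlong (l : GIdx n) : Gop l = derivAlong (𝕜 := ℝ) (klainermanField l) := by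
  ext f p
  rcases l with (_ | j) | j | ⟨j, k⟩ | _ <;>
    simp [Gop, LD, RotD, derivAlong, klainermanField, klainermanShift, klainermanJacobian,
      toLin_single, fderiv_spacetimeBasis_zero, fderiv_spacetimeBasis_succ,
      fderiv_apply_self_eq_SD]

lemma hasFDerivAt_klainermanField (l : GIdx n) (p : STn n) :
    HasFDerivAt (klainermanField l) (LinearMap.toContinuousLinearMap
      ((klainermanJacobian l).toLin (spacetimeBasis n) (spacetimeBasis n))) p :=
  (LinearMap.toContinuousLinearMap
    ((klainermanJacobian l).toLin (spacetimeBasis n) (spacetimeBasis n))).hasFDerivAt.const_add _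

lemma isNullForm_klainermanJacobian_mul_minkowski (l : GIdx n) :
    IsNullForm (klainermanJacobian l * minkowski n) := by
  rcases l with _ | j | ⟨j, k⟩ | _
  · simpa [klainermanJacobian] using isNullForm_zero
  · apply isNullForm_of_transpose_eq_neg
    simp [klainermanJacobian, minkowski, add_mul, single_mul_diagonal, single_neg]
  · apply isNullForm_of_transpose_eq_neg
    simp [klainermanJacobian, minkowski, sub_mul, single_mul_diagonal]
  · simpa [klainermanJacobian] using isNullForm_minkowski

lemma nullCond_iff_isNullForm {A : Fin 4 → Fin 4 → ℝ} : NullCond A ↔ IsNullForm (of A) := by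
  refine forall_congr' fun X ↦ imp_congr ?_ ?_
  · rw [dotProduct_minkowski_mulVec, dotProduct, Fin.sum_univ_four]
    constructor <;> intro h <;> linear_combination h
  · simp only [dotProduct, mulVec, of_apply, Finset.mul_sum, mul_left_comm, mul_comm]

lemma QF_eq_gradientForm (A : Fin 4 → Fin 4 → ℝ) (v w : STn 3 → ℝ) :
    QF A v w = gradientForm (spacetimeBasis 3) (of A) v w := by
  have hpd (f : STn 3 → ℝ) (p : STn 3) (α : Fin 4) :
      pd4 α f p = fderiv ℝ f p (spacetimeBasis 3 α) := by
    cases α using Fin.cases <;>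
      simp [pd4, fderiv_spacetimeBasis_zero, fderiv_spacetimeBasis_succ]
  ext p
  simp only [QF, gradientForm, partials, hpd, dotProduct, mulVec, of_apply, Finset.mul_sum,
    mul_left_comm, mul_comm]

theorem null_condition_commutes_general {A : Matrix (Fin (n + 1)) (Fin (n + 1)) ℝ}
    (hA : IsNullForm A) (l : GIdx n) :
    ∃ At : Matrix (Fin (n + 1)) (Fin (n + 1)) ℝ, IsNullForm At ∧
      ∀ (v w : STn n → ℝ) (z : STn n), ContDiffAt ℝ 2 v z → ContDiffAt ℝ 2 w z →
        Gop l (gradientForm (spacetimeBasis n) A v w) z =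
          gradientForm (spacetimeBasis n) A (Gop l v) w z +
            gradientForm (spacetimeBasis n) A v (Gop l w) z +
            gradientForm (spacetimeBasis n) At v w z := by
  refine ⟨_, hA.neg_mul_add_mul_transpose (isNullForm_klainermanJacobian_mul_minkowski l),
    fun v w z hv hw ↦ ?_⟩
  simpa [Gop_eq_derivAlong] using derivAlong_gradientForm_eq_add (spacetimeBasis n) A
    (hasFDerivAt_klainermanField l z) hv hw

end Klainerman

/-- The null condition is preserved under differentiation by the Klainerman
vector fields (Lemma 5.3). -/
theorem null_condition_commutes (A : Fin 4 → Fin 4 → ℝ) (hA : NullCond A) (l : GIdx 3) :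
    ∃ At : Fin 4 → Fin 4 → ℝ, NullCond At ∧
      ∀ v w : STn 3 → ℝ, ContDiff ℝ ∞ v → ContDiff ℝ ∞ w → ∀ z : STn 3,
        Gop l (fun y => QF A v w y) z =
          QF A (Gop l v) w z + QF A v (Gop l w) z + QF At v w z := by
  obtain ⟨At, hAt, h⟩ := null_condition_commutes_general (nullCond_iff_isNullForm.1 hA) l
  refine ⟨of.symm At, nullCond_iff_isNullForm.2 hAt, fun v w hv hw z ↦ ?_⟩
  simp only [QF_eq_gradientForm, Equiv.apply_symm_apply]
  exact h v w z (contDiff_infty.1 hv 2).contDiffAt (contDiff_infty.1 hw 2).contDiffAt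
end
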